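/- arXiv:1308.5074 — 3 statements merged into one kernel-verified Lean document; each statement's English description precedes it below -/
import Mathlib

section
/- Let k > n be positive integers, let p > k, and let Ω ⊆ ℝ^k be open. Let f : Ω → ℝ^{2n+1} be continuous, locally integrable, and admit a weak derivative Df : Ω → L(ℝ^k, ℝ^{2n+1}) with |Df| locally p-integrable (i.e. for every smooth compactly supported φ : Ω → ℝ and every i ∈ {1,…,k}, ∫_Ω f(x) ∂φ/∂x_i(x) dx = −∫_Ω Df(x)(e_i) φ(x) dx, and ∫_C |Df|^p < ∞ for every compact C ⊆ Ω). Assume that for Lebesgue-almost every x ∈ Ω the image of Df(x) is contained in ker α(f(x)). Then f(Ω) has k-dimensional Hausdorff measure zero with respect to d_K. -/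
open MeasureTheory Metric Set
open scoped ENNReal NNReal

noncomputable section

abbrev Heis (n : ℕ) := EuclideanSpace ℝ (Fin (2*n+1))
abbrev Horiz (n : ℕ) := EuclideanSpace ℝ (Fin (2*n))

def xIdx (n : ℕ) (j : Fin n) : Fin (2*n+1) := ⟨2*j.1, by have := j.2; omega⟩
def yIdx (n : ℕ) (j : Fin n) : Fin (2*n+1) := ⟨2*j.1+1, by have := j.2; omega⟩
def tIdx (n : ℕ) : Fin (2*n+1) := ⟨2*n, by omega⟩
def xIdx2 (n : ℕ) (j : Fin n) : Fin (2*n) := ⟨2*j.1, by have := j.2; omega⟩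
def yIdx2 (n : ℕ) (j : Fin n) : Fin (2*n) := ⟨2*j.1+1, by have := j.2; omega⟩

/-- The Korányi distance on the Heisenberg group `ℍ^n = ℝ^{2n+1}`. -/
def dK (n : ℕ) (p q : Heis n) : ℝ :=
  ((∑ j : Fin n, ((p (xIdx n j) - q (xIdx n j))^2 + (p (yIdx n j) - q (yIdx n j))^2))^2
    + (p (tIdx n) - q (tIdx n)
        + 2 * ∑ j : Fin n, (q (xIdx n j) * p (yIdx n j) - p (xIdx n j) * q (yIdx n j)))^2)
    ^ ((1:ℝ)/4)

/-- The kernel of the standard contact form `α = dt + 2∑ (x_j dy_j − y_j dx_j)` at `p`. -/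
def kerAlpha (n : ℕ) (p : Heis n) : Set (Heis n) :=
  {v | v (tIdx n)
    + 2 * ∑ j : Fin n, (p (xIdx n j) * v (yIdx n j) - p (yIdx n j) * v (xIdx n j)) = 0}

/-- The standard symplectic form on `ℝ^{2n}`. -/
def omegaF (n : ℕ) (v w : Horiz n) : ℝ :=
  ∑ j : Fin n, (v (xIdx2 n j) * w (yIdx2 n j) - v (yIdx2 n j) * w (xIdx2 n j))

/-- The projection `π : ℝ^{2n+1} → ℝ^{2n}` forgetting the `t`-coordinate. -/
def piH (n : ℕ) (p : Heis n) : Horiz n :=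
  (EuclideanSpace.equiv (Fin (2*n)) ℝ).symm (fun i => p ⟨i.1, by have := i.2; omega⟩)

/-- Diameter of a set with respect to the Korányi distance, as an extended real. -/
def kDiam (n : ℕ) (U : Set (Heis n)) : ℝ≥0∞ :=
  ⨆ p ∈ U, ⨆ q ∈ U, ENNReal.ofReal (dK n p q)

/-- `S` is null for the `k`-dimensional Hausdorff measure built from the Korányi
distance: its `k`-dimensional Hausdorff content is arbitrarily small. -/
def IsHausdorffNullK (n k : ℕ) (S : Set (Heis n)) : Prop :=
  ∀ ε : ℝ≥0∞, 0 < ε → ∃ U : ℕ → Set (Heis n),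
    (S ⊆ ⋃ i, U i) ∧ ∑' i, (kDiam n (U i)) ^ k < ε

/-- `f` is Lipschitz on `E` as a map into `(ℝ^{2n+1}, d_K)`. -/
def LipschitzOnK (n : ℕ) {k : ℕ} (f : EuclideanSpace ℝ (Fin k) → Heis n)
    (E : Set (EuclideanSpace ℝ (Fin k))) : Prop :=
  ∃ L : ℝ, 0 ≤ L ∧ ∀ x ∈ E, ∀ y ∈ E, dK n (f x) (f y) ≤ L * dist x y

end
/-- `Df` is the weak (distributional) derivative of `f` on `Ω`: integration by parts
against smooth compactly supported test functions holds in every coordinate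
direction. -/
def IsWeakFDerivOn {k m : ℕ} (Ω : Set (EuclideanSpace ℝ (Fin k)))
    (f : EuclideanSpace ℝ (Fin k) → EuclideanSpace ℝ (Fin m))
    (Df : EuclideanSpace ℝ (Fin k) → (EuclideanSpace ℝ (Fin k) →L[ℝ] EuclideanSpace ℝ (Fin m))) :
    Prop :=
  ∀ φ : EuclideanSpace ℝ (Fin k) → ℝ, ContDiff ℝ (⊤ : ℕ∞) φ → HasCompactSupport φ →
    tsupport φ ⊆ Ω → ∀ i : Fin k,
      ∫ x in Ω, fderiv ℝ φ x (EuclideanSpace.single i (1:ℝ)) • f x =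
        - ∫ x in Ω, φ x • Df x (EuclideanSpace.single i (1:ℝ))

section Auxiliary

open Filter Topology

/-- The standard symplectic form on the horizontal coordinates of `ℝ^{2n+1}`. -/
def symp (n : ℕ) (v w : Heis n) : ℝ :=
  ∑ j : Fin n, (v (xIdx n j) * w (yIdx n j) - v (yIdx n j) * w (xIdx n j))

lemma symp_add_left (n : ℕ) (u v w : Heis n) : symp n (u + v) w = symp n u w + symp n v w := by
  simp only [symp, ← Finset.sum_add_distrib, PiLp.add_apply]
  exact Finset.sum_congr rfl fun j _ => by ring

lemma symp_add_right (n : ℕ) (u v w : Heis n) : symp n u (v + w) = symp n u v + symp n u w := by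
  simp only [symp, ← Finset.sum_add_distrib, PiLp.add_apply]
  exact Finset.sum_congr rfl fun j _ => by ring

lemma symp_smul_left (n : ℕ) (c : ℝ) (v w : Heis n) : symp n (c • v) w = c * symp n v w := by
  simp only [symp, Finset.mul_sum, PiLp.smul_apply, smul_eq_mul]
  exact Finset.sum_congr rfl fun j _ => by ring

lemma symp_smul_right (n : ℕ) (c : ℝ) (v w : Heis n) : symp n v (c • w) = c * symp n v w := by
  simp only [symp, Finset.mul_sum, PiLp.smul_apply, smul_eq_mul]
  exact Finset.sum_congr rfl fun j _ => by ring

lemma symp_swap (n : ℕ) (v w : Heis n) : symp n v w = - symp n w v := by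
  simp only [symp, ← Finset.sum_neg_distrib]
  exact Finset.sum_congr rfl fun j _ => by ring

lemma symp_self (n : ℕ) (v : Heis n) : symp n v v = 0 := by
  have := symp_swap n v v
  linarith

lemma symp_sub_left (n : ℕ) (u v w : Heis n) : symp n (u - v) w = symp n u w - symp n v w := by
  have := symp_add_left n (u - v) v w
  rw [sub_add_cancel] at this
  linarith

lemma symp_sub_right (n : ℕ) (u v w : Heis n) : symp n u (v - w) = symp n u v - symp n u w := by
  have := symp_add_right n u (v - w) w
  rw [sub_add_cancel] at this
  linarith

lemma abs_symp_le (n : ℕ) {v w : Heis n} {a b : ℝ} (hv : ∀ i, |v i| ≤ a) (hw : ∀ i, |w i| ≤ b) :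
    |symp n v w| ≤ 2 * n * a * b := by
  have key : ∀ i i', |v i * w i'| ≤ a * b := fun i i' => by
    rw [abs_mul]
    exact mul_le_mul (hv i) (hw i') (abs_nonneg _) ((abs_nonneg _).trans (hv i))
  calc |symp n v w| ≤ ∑ j : Fin n, |v (xIdx n j) * w (yIdx n j) - v (yIdx n j) * w (xIdx n j)| :=
        Finset.abs_sum_le_sum_abs _ _
    _ ≤ ∑ _j : Fin n, (a * b + a * b) := Finset.sum_le_sum fun j _ =>
        (abs_sub _ _).trans (add_le_add (key _ _) (key _ _))
    _ = 2 * n * a * b := by simp; ring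

lemma abs_coord_le_norm {m : ℕ} (v : EuclideanSpace ℝ (Fin m)) (i : Fin m) : |v i| ≤ ‖v‖ := by
  simpa using PiLp.norm_apply_le v i

/-- The contact form `α` at `q`, as a continuous linear functional. -/
noncomputable def alphaL (n : ℕ) (q : Heis n) : Heis n →L[ℝ] ℝ :=
  LinearMap.toContinuousLinearMap
    { toFun := fun v => v (tIdx n) + 2 * symp n q v
      map_add' := fun v w => by simp only [symp_add_right, PiLp.add_apply]; ring
      map_smul' := fun c v => by
        simp only [symp_smul_right, PiLp.smul_apply, smul_eq_mul, RingHom.id_apply]; ring }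

lemma alphaL_apply (n : ℕ) (q v : Heis n) : alphaL n q v = v (tIdx n) + 2 * symp n q v := rfl

lemma alphaL_eq_zero_of_mem (n : ℕ) {q v : Heis n} (h : v ∈ kerAlpha n q) : alphaL n q v = 0 := h

lemma dK_eq (n : ℕ) (p q : Heis n) :
    dK n p q = ((∑ j : Fin n, ((p (xIdx n j) - q (xIdx n j)) ^ 2 +
      (p (yIdx n j) - q (yIdx n j)) ^ 2)) ^ 2 + (alphaL n q (p - q)) ^ 2) ^ ((1 : ℝ) / 4) := by
  have : symp n q (p - q) =
      ∑ j : Fin n, (q (xIdx n j) * p (yIdx n j) - p (xIdx n j) * q (yIdx n j)) := by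
    rw [symp]
    exact Finset.sum_congr rfl fun j _ => by simp only [PiLp.sub_apply]; ring
  rw [dK, alphaL_apply, this, PiLp.sub_apply]

lemma dK_le (n : ℕ) {p q : Heis n} {a : ℝ} (ha : 0 ≤ a) (h : ∀ i, i ≠ tIdx n → |(p - q) i| ≤ a)
    (hα : |alphaL n q (p - q)| ≤ a ^ 2) : dK n p q ≤ (2 * n + 1) * a := by
  have hx : ∀ j, xIdx n j ≠ tIdx n := fun j hj => by
    have := j.2; simp [xIdx, tIdx, Fin.ext_iff] at hj; omega
  have hy : ∀ j, yIdx n j ≠ tIdx n := fun j hj => by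
    have := j.2; simp [yIdx, tIdx, Fin.ext_iff] at hj; omega
  have hsq : ∀ i, i ≠ tIdx n → (p i - q i) ^ 2 ≤ a ^ 2 := fun i hi =>
    sq_le_sq' (by have := (abs_le.1 (h i hi)).1; simpa using this)
      (by have := (abs_le.1 (h i hi)).2; simpa using this)
  have h1 : ∑ j : Fin n, ((p (xIdx n j) - q (xIdx n j)) ^ 2 +
      (p (yIdx n j) - q (yIdx n j)) ^ 2) ≤ 2 * n * a ^ 2 := by
    calc _ ≤ ∑ _j : Fin n, (a ^ 2 + a ^ 2) := Finset.sum_le_sum fun j _ =>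
          add_le_add (hsq _ (hx j)) (hsq _ (hy j))
      _ = _ := by simp; ring
  have h0 : 0 ≤ ∑ j : Fin n, ((p (xIdx n j) - q (xIdx n j)) ^ 2 +
      (p (yIdx n j) - q (yIdx n j)) ^ 2) := Finset.sum_nonneg fun j _ => by positivity
  have h2 : (alphaL n q (p - q)) ^ 2 ≤ (a ^ 2) ^ 2 := by
    rw [← sq_abs]; exact pow_le_pow_left₀ (abs_nonneg _) hα 2
  have hn : (0 : ℝ) ≤ n := n.cast_nonneg
  have h3 : (∑ j : Fin n, ((p (xIdx n j) - q (xIdx n j)) ^ 2 +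
      (p (yIdx n j) - q (yIdx n j)) ^ 2)) ^ 2 + (alphaL n q (p - q)) ^ 2
      ≤ ((2 * n + 1) * a) ^ 4 := by
    have h4 := pow_le_pow_left₀ h0 h1 2
    have h5 : (2 * (n : ℝ)) ^ 2 + 1 ≤ (2 * n + 1) ^ 4 := by
      have : (1 : ℝ) ≤ (2 * n + 1) ^ 2 := by nlinarith
      nlinarith
    have h6 := mul_le_mul_of_nonneg_right h5 (by positivity : 0 ≤ a ^ 4)
    nlinarith
  rw [dK_eq]
  calc _ ≤ (((2 * n + 1) * a) ^ 4) ^ ((1 : ℝ) / 4) :=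
        Real.rpow_le_rpow (by positivity) h3 (by norm_num)
    _ = (2 * n + 1) * a := by
        rw [← Real.rpow_natCast, ← Real.rpow_mul (by positivity)]; norm_num

lemma kDiam_le (n : ℕ) {U : Set (Heis n)} {a : ℝ} (h : ∀ p ∈ U, ∀ q ∈ U, dK n p q ≤ a) :
    kDiam n U ≤ ENNReal.ofReal a :=
  iSup₂_le fun p hp => iSup₂_le fun q hq => ENNReal.ofReal_le_ofReal (h p hp q hq)

lemma kDiam_empty_pow (n : ℕ) {k : ℕ} (hk : k ≠ 0) : kDiam n ∅ ^ k = 0 := by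
  simp [kDiam, hk]

/-- The `k`-dimensional Hausdorff content of the Korányi distance. -/
noncomputable def kContent (n : ℕ) {k : ℕ} (hk : k ≠ 0) : OuterMeasure (Heis n) :=
  OuterMeasure.ofFunction (fun U => kDiam n U ^ k) (kDiam_empty_pow n hk)

lemma kContent_le (n : ℕ) {k : ℕ} (hk : k ≠ 0) (U : Set (Heis n)) :
    kContent n hk U ≤ kDiam n U ^ k :=
  OuterMeasure.ofFunction_le _

lemma isHausdorffNullK_of_kContent_eq_zero (n : ℕ) {k : ℕ} (hk : k ≠ 0) {S : Set (Heis n)}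
    (h : kContent n hk S = 0) : IsHausdorffNullK n k S := by
  intro ε hε
  rw [← h, kContent, OuterMeasure.ofFunction_apply] at hε
  obtain ⟨U, hU⟩ := iInf_lt_iff.1 hε
  obtain ⟨hS, hU⟩ := iInf_lt_iff.1 hU
  exact ⟨U, hS, hU⟩

/-- `G` is a weak gradient of the real function `u` on `Ω`. -/
def HasWeakGrad {k : ℕ} (Ω : Set (EuclideanSpace ℝ (Fin k))) (u : EuclideanSpace ℝ (Fin k) → ℝ)
    (G : EuclideanSpace ℝ (Fin k) → (EuclideanSpace ℝ (Fin k) →L[ℝ] ℝ)) : Prop :=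
  ∀ φ : EuclideanSpace ℝ (Fin k) → ℝ, ContDiff ℝ (⊤ : ℕ∞) φ → HasCompactSupport φ →
    tsupport φ ⊆ Ω → ∀ i : Fin k,
      ∫ x, fderiv ℝ φ x (EuclideanSpace.single i (1 : ℝ)) * u x =
        - ∫ x, φ x * G x (EuclideanSpace.single i (1 : ℝ))

section Kernel

variable {k : ℕ}

/-- The kernel `ψ`, contracted towards `x` by the factor `t` and renormalized. -/
def contractKernel (ψ : EuclideanSpace ℝ (Fin k) → ℝ) (x : EuclideanSpace ℝ (Fin k)) (t : ℝ)
    (y : EuclideanSpace ℝ (Fin k)) : ℝ :=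
  t ^ k * ψ (x + t • (y - x))

variable {ψ : EuclideanSpace ℝ (Fin k) → ℝ} {x c : EuclideanSpace ℝ (Fin k)} {r t : ℝ}

lemma contractKernel_one : contractKernel ψ x 1 = ψ := by
  ext y; simp [contractKernel]

lemma mem_of_contractKernel_ne_zero (hsupp : Function.support ψ ⊆ closedBall c r)
    (hx : x ∈ closedBall c r) (ht : 1 ≤ t) {y : EuclideanSpace ℝ (Fin k)}
    (hy : contractKernel ψ x t y ≠ 0) : y ∈ closedBall c r ∧ ‖y - x‖ ≤ 2 * r / t := by
  have ht0 : 0 < t := by linarith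
  have hw : x + t • (y - x) ∈ closedBall c r := hsupp (right_ne_zero_of_mul hy)
  constructor
  · have := (convex_closedBall c r) hx hw (a := 1 - t⁻¹) (b := t⁻¹)
      (by have := inv_le_one_of_one_le₀ ht; linarith) (by positivity) (by ring)
    convert this using 1
    rw [smul_add, smul_smul, inv_mul_cancel₀ ht0.ne', one_smul, sub_smul, one_smul]
    abel
  · have h1 : ‖t • (y - x)‖ ≤ 2 * r := by
      have : t • (y - x) = (x + t • (y - x) - c) - (x - c) := by abel
      rw [this]
      refine (norm_sub_le _ _).trans ?_
      rw [mem_closedBall, dist_eq_norm] at hw hx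
      linarith
    rw [norm_smul, Real.norm_of_nonneg ht0.le] at h1
    rw [le_div_iff₀ ht0]; linarith

lemma contDiff_contractKernel (hψ : ContDiff ℝ (⊤ : ℕ∞) ψ) :
    ContDiff ℝ (⊤ : ℕ∞) (contractKernel ψ x t) := by
  unfold contractKernel
  exact contDiff_const.mul (hψ.comp (by fun_prop))

lemma hasFDerivAt_contractKernel (hψ : ContDiff ℝ (⊤ : ℕ∞) ψ) (y : EuclideanSpace ℝ (Fin k)) :
    HasFDerivAt (contractKernel ψ x t) (t ^ (k + 1) • fderiv ℝ ψ (x + t • (y - x))) y := by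
  have h1 : HasFDerivAt (fun y : EuclideanSpace ℝ (Fin k) => x + t • (y - x))
      (t • ContinuousLinearMap.id ℝ _) y :=
    (((hasFDerivAt_id y).sub_const x).const_smul t).const_add x
  have h2 := ((hψ.differentiable (by simp)) (x + t • (y - x))).hasFDerivAt.comp y h1
  have h3 : t ^ (k + 1) • fderiv ℝ ψ (x + t • (y - x)) =
      t ^ k • (fderiv ℝ ψ (x + t • (y - x))).comp (t • ContinuousLinearMap.id ℝ _) := by
    ext v
    simp [pow_succ, mul_assoc]
  rw [h3]
  exact h2.const_mul (t ^ k)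

lemma hasDerivAt_contractKernel (hψ : ContDiff ℝ (⊤ : ℕ∞) ψ) (y : EuclideanSpace ℝ (Fin k)) :
    HasDerivAt (fun t => contractKernel ψ x t y)
      (k * t ^ (k - 1) * ψ (x + t • (y - x)) + t ^ k * fderiv ℝ ψ (x + t • (y - x)) (y - x)) t := by
  have h1 : HasDerivAt (fun t : ℝ => x + t • (y - x)) (y - x) t := by
    simpa using ((hasDerivAt_id t).smul_const (y - x)).const_add x
  have h2 := ((hψ.differentiable (by simp)) (x + t • (y - x))).hasFDerivAt.comp_hasDerivAt t h1
  exact (hasDerivAt_pow k t).mul h2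

lemma integral_contractKernel (ht : 0 < t) : ∫ y, contractKernel ψ x t y = ∫ y, ψ y := by
  unfold contractKernel
  rw [integral_const_mul, integral_sub_right_eq_self (fun y => ψ (x + t • y)) x,
    Measure.integral_comp_smul volume (fun y => ψ (x + y)) t, integral_add_left_eq_self ψ x]
  simp only [finrank_euclideanSpace, Fintype.card_fin, smul_eq_mul]
  rw [abs_of_pos (by positivity)]
  field_simp

end Kernel

lemma hasDerivAt_setIntegral_mul {E : Type*} [NormedAddCommGroup E] [MeasurableSpace E]
    [BorelSpace E] {μ : Measure E} [IsFiniteMeasureOnCompacts μ] {Q : Set E} (hQ : IsCompact Q)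
    {F F' : ℝ → E → ℝ} {u : E → ℝ} (hu : ContinuousOn u Q)
    (hFc : ∀ t, Continuous (F t)) (hF'c : Continuous (Function.uncurry F'))
    (hF : ∀ t y, HasDerivAt (fun t => F t y) (F' t y) t) (t₀ : ℝ) :
    HasDerivAt (fun t => ∫ y in Q, F t y * u y ∂μ) (∫ y in Q, F' t₀ y * u y ∂μ) t₀ := by
  obtain ⟨B, hB⟩ := ((isCompact_Icc (a := t₀ - 1) (b := t₀ + 1)).prod hQ).exists_bound_of_continuousOn
    (f := Function.uncurry F') hF'c.continuousOn
  obtain ⟨D, hD⟩ := hQ.exists_bound_of_continuousOn hu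
  have hFcont : ∀ t, Continuous (F' t) := fun t =>
    hF'c.comp (Continuous.prodMk_right t)
  refine (hasDerivAt_integral_of_dominated_loc_of_deriv_le (F := fun t y => F t y * u y)
    (F' := fun t y => F' t y * u y) (bound := fun _ => B * D)
    (s := Icc (t₀ - 1) (t₀ + 1)) (Icc_mem_nhds (by linarith) (by linarith)) ?_ ?_ ?_ ?_ ?_ ?_).2
  · exact Eventually.of_forall fun t =>
      (((hFc t).continuousOn.mul hu).integrableOn_compact hQ).aestronglyMeasurable
  · exact ((hFc t₀).continuousOn.mul hu).integrableOn_compact hQ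
  · exact (((hFcont t₀).continuousOn.mul hu).integrableOn_compact hQ).aestronglyMeasurable
  · refine (ae_restrict_iff' hQ.measurableSet).2 (Eventually.of_forall fun y hy t ht => ?_)
    rw [norm_mul]
    exact mul_le_mul (hB (t, y) ⟨ht, hy⟩) (hD y hy) (norm_nonneg _)
      ((norm_nonneg _).trans (hB (t, y) ⟨ht, hy⟩))
  · exact (integrableOn_const_iff).2 (Or.inr hQ.measure_lt_top)
  · exact Eventually.of_forall fun y t _ => (hF t y).mul_const (u y)

lemma integrable_mul_of_continuousOn {E : Type*} [NormedAddCommGroup E] [MeasurableSpace E]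
    [BorelSpace E] {μ : Measure E} [IsFiniteMeasureOnCompacts μ] {Q : Set E} (hQ : IsCompact Q)
    {g u : E → ℝ} (hg : Continuous g) (hu : ContinuousOn u Q) (hs : Function.support g ⊆ Q) :
    Integrable (fun y => g y * u y) μ :=
  (integrableOn_iff_integrable_of_support_subset
    (fun _ hy => hs (left_ne_zero_of_mul hy))).1
    ((hg.continuousOn.mul hu).integrableOn_compact hQ)

lemma le_add_rpow_mul_rpow {a τ p : ℝ} (ha : 0 ≤ a) (hτ : 0 < τ) (hp : 1 ≤ p) :
    a ≤ τ + τ ^ (1 - p) * a ^ p := by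
  rcases le_or_gt a τ with h | h
  · have : 0 ≤ τ ^ (1 - p) * a ^ p := by positivity
    linarith
  · have h1 : a ^ (1 - p) ≤ τ ^ (1 - p) := Real.rpow_le_rpow_of_nonpos hτ h.le (by linarith)
    have h2 : a = a ^ (1 - p) * a ^ p := by
      rw [← Real.rpow_add (hτ.trans h)]; simp
    have h3 := mul_le_mul_of_nonneg_right h1 (Real.rpow_nonneg ha p)
    linarith

section Morrey

variable {k : ℕ} {Ω : Set (EuclideanSpace ℝ (Fin k))} {u ψ : EuclideanSpace ℝ (Fin k) → ℝ}
  {G : EuclideanSpace ℝ (Fin k) → (EuclideanSpace ℝ (Fin k) →L[ℝ] ℝ)}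
  {x c : EuclideanSpace ℝ (Fin k)} {r p M T t : ℝ}

/-- The `i`-th component of the vector field `(y - x) K_t(y)`, with `K_t` the contracted kernel. -/
def radialTest (ψ : EuclideanSpace ℝ (Fin k) → ℝ) (x : EuclideanSpace ℝ (Fin k)) (t : ℝ)
    (i : Fin k) (y : EuclideanSpace ℝ (Fin k)) : ℝ :=
  (y i - x i) * contractKernel ψ x t y

lemma contDiff_radialTest (hψ : ContDiff ℝ (⊤ : ℕ∞) ψ) (i : Fin k) :
    ContDiff ℝ (⊤ : ℕ∞) (radialTest ψ x t i) := by
  unfold radialTest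
  exact ContDiff.mul (by fun_prop) (contDiff_contractKernel hψ)

lemma tsupport_radialTest_subset (hsupp : Function.support ψ ⊆ closedBall c r)
    (hx : x ∈ closedBall c r) (ht : 1 ≤ t) (i : Fin k) :
    tsupport (radialTest ψ x t i) ⊆ closedBall c r :=
  closure_minimal (fun _ hy => (mem_of_contractKernel_ne_zero hsupp hx ht
    (right_ne_zero_of_mul hy)).1) isClosed_closedBall

lemma sum_fderiv_radialTest (hψ : ContDiff ℝ (⊤ : ℕ∞) ψ) (ht : 0 < t)
    (y : EuclideanSpace ℝ (Fin k)) :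
    k * t ^ (k - 1) * ψ (x + t • (y - x)) + t ^ k * fderiv ℝ ψ (x + t • (y - x)) (y - x) =
      t⁻¹ * ∑ i, fderiv ℝ (radialTest ψ x t i) y (EuclideanSpace.single i (1 : ℝ)) := by
  have h1 : ∀ i, fderiv ℝ (radialTest ψ x t i) y (EuclideanSpace.single i (1 : ℝ)) =
      contractKernel ψ x t y + t ^ (k + 1) *
        ((y - x) i * fderiv ℝ ψ (x + t • (y - x)) (EuclideanSpace.single i 1)) := by
    intro i
    have h2 : HasFDerivAt (fun y : EuclideanSpace ℝ (Fin k) => y i - x i)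
        (EuclideanSpace.proj i : EuclideanSpace ℝ (Fin k) →L[ℝ] ℝ) y :=
      ((EuclideanSpace.proj i : EuclideanSpace ℝ (Fin k) →L[ℝ] ℝ).hasFDerivAt).sub_const _
    have h3 : HasFDerivAt (radialTest ψ x t i) _ y := h2.mul (hasFDerivAt_contractKernel hψ y)
    rw [h3.fderiv]
    simp
    ring
  have h4 : ∑ i, (y - x) i * fderiv ℝ ψ (x + t • (y - x)) (EuclideanSpace.single i 1) =
      fderiv ℝ ψ (x + t • (y - x)) (y - x) := by
    generalize fderiv ℝ ψ (x + t • (y - x)) = D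
    conv_rhs => rw [← (EuclideanSpace.basisFun (Fin k) ℝ).sum_repr (y - x)]
    simp [map_sum]
  rw [Finset.sum_congr rfl fun i _ => h1 i, Finset.sum_add_distrib, ← Finset.mul_sum, h4]
  simp only [Finset.sum_const, Finset.card_univ, Fintype.card_fin, nsmul_eq_mul, contractKernel]
  rcases Nat.eq_zero_or_pos k with hk | hk
  · subst hk
    simp; field_simp
  · obtain ⟨m, rfl⟩ : ∃ m, k = m + 1 := ⟨k - 1, by omega⟩
    rw [Nat.add_sub_cancel]
    field_simp
    ring

lemma abs_integral_radialTest_mul_le (hr : 0 < r) (hψ : ContDiff ℝ (⊤ : ℕ∞) ψ)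
    (hψ0 : ∀ y, 0 ≤ ψ y)
    (hsupp : Function.support ψ ⊆ closedBall c r) (hψ1 : ∫ y, ψ y = 1) (hψM : ∀ y, ψ y ≤ M)
    (hp1 : 1 ≤ p) (hGi : IntegrableOn (fun y => ‖G y‖ ^ p) (closedBall c r))
    (hT : 0 < T) (hGT : M * ∫ y in closedBall c r, ‖G y‖ ^ p ≤ T ^ p)
    (hx : x ∈ closedBall c r) (ht : 1 ≤ t) (i : Fin k) :
    |∫ y, radialTest ψ x t i y * G y (EuclideanSpace.single i (1 : ℝ))| ≤
      2 * r / t * (2 * (T * t ^ ((k : ℝ) / p))) := by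
  have ht0 : 0 < t := by linarith
  have hp0 : 0 < p := by linarith
  set τ : ℝ := T * t ^ ((k : ℝ) / p) with hτ
  have hτ0 : 0 < τ := by positivity
  set Q := closedBall c r with hQ
  have hK0 : ∀ y, 0 ≤ contractKernel ψ x t y := fun y => mul_nonneg (by positivity) (hψ0 _)
  have hKM : ∀ y, contractKernel ψ x t y ≤ t ^ k * M := fun y =>
    mul_le_mul_of_nonneg_left (hψM _) (by positivity)
  have hKi : Integrable (contractKernel ψ x t) := by
    refine (contDiff_contractKernel hψ).continuous.integrable_of_hasCompactSupport ?_
    exact HasCompactSupport.of_support_subset_isCompact (isCompact_closedBall c r)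
      fun y hy => (mem_of_contractKernel_ne_zero hsupp hx ht hy).1
  have hGi' : Integrable (Q.indicator fun y => ‖G y‖ ^ p) :=
    (integrable_indicator_iff measurableSet_closedBall).2 hGi
  let b : EuclideanSpace ℝ (Fin k) → ℝ := fun y => 2 * r / t * (τ * contractKernel ψ x t y +
    τ ^ (1 - p) * (t ^ k * M) * Q.indicator (fun y => ‖G y‖ ^ p) y)
  have hb : Integrable b := ((hKi.const_mul τ).add (hGi'.const_mul _)).const_mul _
  have hle : ∀ y, ‖radialTest ψ x t i y * G y (EuclideanSpace.single i (1 : ℝ))‖ ≤ b y := by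
    intro y
    by_cases hy : contractKernel ψ x t y = 0
    · simp only [radialTest, hy, mul_zero, zero_mul, norm_zero, b, zero_add]
      have : 0 ≤ M := (hψ0 0).trans (hψM 0)
      have : 0 ≤ Q.indicator (fun y => ‖G y‖ ^ p) y := indicator_nonneg (fun _ _ => by positivity) _
      positivity
    · obtain ⟨hyQ, hyr⟩ := mem_of_contractKernel_ne_zero hsupp hx ht hy
      have h1 : |y i - x i| ≤ 2 * r / t := (abs_coord_le_norm (y - x) i).trans hyr
      have h2 : |G y (EuclideanSpace.single i (1 : ℝ))| ≤ ‖G y‖ := by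
        simpa using (G y).le_opNorm (EuclideanSpace.single i (1 : ℝ))
      have h3 := le_add_rpow_mul_rpow (norm_nonneg (G y)) hτ0 hp1
      rw [Real.norm_eq_abs, abs_mul, radialTest, abs_mul, abs_of_nonneg (hK0 y)]
      have hind : Q.indicator (fun y => ‖G y‖ ^ p) y = ‖G y‖ ^ p := indicator_of_mem hyQ _
      simp only [b]
      rw [hind]
      calc |y i - x i| * contractKernel ψ x t y * |G y (EuclideanSpace.single i (1 : ℝ))|
          ≤ 2 * r / t * contractKernel ψ x t y * (τ + τ ^ (1 - p) * ‖G y‖ ^ p) := by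
            gcongr
            · exact mul_nonneg (by positivity) (hK0 y)
            · exact hK0 y
            · exact h2.trans h3
        _ = 2 * r / t * (τ * contractKernel ψ x t y +
              τ ^ (1 - p) * contractKernel ψ x t y * ‖G y‖ ^ p) := by ring
        _ ≤ _ := by
            gcongr
            exact hKM y
  have hint : ∫ y, b y = 2 * r / t * (τ + τ ^ (1 - p) * (t ^ k * (M * ∫ y in Q, ‖G y‖ ^ p))) := by
    simp only [b]
    rw [integral_const_mul, integral_add (hKi.const_mul τ) (hGi'.const_mul _),
      integral_const_mul, integral_const_mul, integral_contractKernel ht0, hψ1,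
      integral_indicator measurableSet_closedBall]
    ring
  have hτp : τ ^ (1 - p) * (t ^ k * T ^ p) = τ := by
    have h1 : τ ^ p = t ^ k * T ^ p := by
      rw [hτ, Real.mul_rpow hT.le (by positivity), ← Real.rpow_mul ht0.le,
        div_mul_cancel₀ _ hp0.ne', Real.rpow_natCast]
      ring
    rw [← h1, ← Real.rpow_add hτ0]
    simp
  refine (norm_integral_le_of_norm_le hb (Eventually.of_forall hle)).trans ?_
  rw [hint]
  refine mul_le_mul_of_nonneg_left ?_ (by positivity)
  have : τ ^ (1 - p) * (t ^ k * (M * ∫ y in Q, ‖G y‖ ^ p)) ≤ τ ^ (1 - p) * (t ^ k * T ^ p) := by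
    gcongr
  linarith

lemma integral_deriv_contractKernel_mul (hψ : ContDiff ℝ (⊤ : ℕ∞) ψ)
    (hsupp : Function.support ψ ⊆ closedBall c r)
    (hQ : closedBall c r ⊆ Ω) (hu : ContinuousOn u (closedBall c r)) (hG : HasWeakGrad Ω u G)
    (hx : x ∈ closedBall c r) (ht : 1 ≤ t) :
    ∫ y in closedBall c r, (k * t ^ (k - 1) * ψ (x + t • (y - x)) +
      t ^ k * fderiv ℝ ψ (x + t • (y - x)) (y - x)) * u y =
      - (t⁻¹ * ∑ i, ∫ y, radialTest ψ x t i y * G y (EuclideanSpace.single i (1 : ℝ))) := by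
  have ht0 : 0 < t := by linarith
  have hts := fun i => tsupport_radialTest_subset (ψ := ψ) hsupp hx ht i
  have hsub : ∀ i, Function.support (fun y => fderiv ℝ (radialTest ψ x t i) y
      (EuclideanSpace.single i (1 : ℝ))) ⊆ closedBall c r := fun i y hy => by
    refine hts i (support_fderiv_subset ℝ (f := radialTest ψ x t i) fun h => hy ?_)
    simp [h]
  have hint : ∀ i, Integrable (fun y => fderiv ℝ (radialTest ψ x t i) y
      (EuclideanSpace.single i (1 : ℝ)) * u y) := fun i =>
    integrable_mul_of_continuousOn (isCompact_closedBall c r)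
      (((contDiff_radialTest hψ i).continuous_fderiv (by simp)).clm_apply continuous_const) hu
      (hsub i)
  simp_rw [sum_fderiv_radialTest hψ ht0]
  rw [setIntegral_eq_integral_of_forall_compl_eq_zero]
  · simp_rw [mul_assoc, Finset.sum_mul]
    rw [integral_const_mul, integral_finsetSum _ fun i _ => hint i, ← mul_neg,
      ← Finset.sum_neg_distrib]
    congr 1
    refine Finset.sum_congr rfl fun i _ => ?_
    exact hG _ (contDiff_radialTest hψ i)
      ((isCompact_closedBall c r).of_isClosed_subset (isClosed_tsupport _) (hts i))
      ((hts i).trans hQ) i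
  · intro y hy
    rw [Finset.sum_eq_zero fun i _ => by_contra fun h => hy (hsub i h)]
    simp

lemma abs_setIntegral_contractKernel_sub_le (hr : 0 < r) (hψ : ContDiff ℝ (⊤ : ℕ∞) ψ)
    (hψ0 : ∀ y, 0 ≤ ψ y) (hsupp : Function.support ψ ⊆ closedBall c r) (hψ1 : ∫ y, ψ y = 1)
    (hψM : ∀ y, ψ y ≤ M) (hQ : closedBall c r ⊆ Ω) (hu : ContinuousOn u (closedBall c r))
    (hG : HasWeakGrad Ω u G) (hp1 : 1 ≤ p) (hpk : (k : ℝ) < p)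
    (hGi : IntegrableOn (fun y => ‖G y‖ ^ p) (closedBall c r))
    (hT : 0 < T) (hGT : M * ∫ y in closedBall c r, ‖G y‖ ^ p ≤ T ^ p)
    (hx : x ∈ closedBall c r) (ht : 1 ≤ t) :
    |(∫ y in closedBall c r, contractKernel ψ x t y * u y) - ∫ y in closedBall c r, ψ y * u y| ≤
      4 * k * r * T / (1 - k / p) := by
  have hp0 : 0 < p := by linarith
  set β : ℝ := 1 - k / p with hβ
  have hβ0 : 0 < β := by
    have : (k : ℝ) / p < 1 := (div_lt_one hp0).2 hpk
    linarith
  let A : ℝ → ℝ := fun t => (∫ y in closedBall c r, contractKernel ψ x t y * u y) -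
    ∫ y in closedBall c r, ψ y * u y
  let A' : ℝ → ℝ := fun t => ∫ y in closedBall c r, (k * t ^ (k - 1) * ψ (x + t • (y - x)) +
      t ^ k * fderiv ℝ ψ (x + t • (y - x)) (y - x)) * u y
  have hA : ∀ s, HasDerivAt A (A' s) s := fun s => by
    refine (hasDerivAt_setIntegral_mul (isCompact_closedBall c r) hu
      (fun t => (contDiff_contractKernel hψ).continuous) ?_
      (fun t y => hasDerivAt_contractKernel hψ y) s).sub_const _
    have := hψ.continuous
    have h2 := hψ.continuous_fderiv (by simp)
    unfold Function.uncurry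
    have h3 : Continuous fun a : ℝ × EuclideanSpace ℝ (Fin k) => x + a.1 • (a.2 - x) := by fun_prop
    exact ((continuous_const.mul (continuous_fst.pow _)).mul (this.comp h3)).add
      ((continuous_fst.pow _).mul ((h2.comp h3).clm_apply (by fun_prop)))
  let B : ℝ → ℝ := fun t => 4 * k * r * T / β * (1 - t ^ (-β))
  let B' : ℝ → ℝ := fun t => 4 * k * r * T * t ^ (-β - 1)
  have hB : ∀ s, 1 ≤ s → HasDerivAt B (B' s) s := fun s hs => by
    have h1 := ((Real.hasDerivAt_rpow_const (x := s) (p := -β) (Or.inl (by linarith))).const_sub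
      1).const_mul (4 * k * r * T / β)
    refine h1.congr_deriv ?_
    simp only [B']
    field_simp
  have hA' : ∀ s, 1 ≤ s → ‖A' s‖ ≤ B' s := fun s hs => by
    have hs0 : 0 < s := by linarith
    simp only [A', B']
    rw [integral_deriv_contractKernel_mul hψ hsupp hQ hu hG hx hs, norm_neg, norm_mul, norm_inv,
      Real.norm_of_nonneg hs0.le]
    have h1 : ‖∑ i, ∫ y, radialTest ψ x s i y * G y (EuclideanSpace.single i (1 : ℝ))‖ ≤
        ∑ _i : Fin k, 2 * r / s * (2 * (T * s ^ ((k : ℝ) / p))) :=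
      (norm_sum_le _ _).trans (Finset.sum_le_sum fun i _ =>
        abs_integral_radialTest_mul_le hr hψ hψ0 hsupp hψ1 hψM hp1 hGi hT hGT hx hs i)
    rw [Finset.sum_const, Finset.card_univ, Fintype.card_fin, nsmul_eq_mul] at h1
    refine (mul_le_mul_of_nonneg_left h1 (by positivity)).trans_eq ?_
    have h2 : s ^ (-β - 1) = s ^ ((k : ℝ) / p) / s ^ 2 := by
      rw [← Real.rpow_natCast s 2, ← Real.rpow_sub hs0]
      congr 1
      rw [hβ]; push_cast; ring
    rw [h2]
    field_simp
    ring
  have hmain : ‖A t‖ ≤ B t := by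
    refine image_norm_le_of_norm_deriv_right_le_deriv_boundary' (a := 1) (b := t) (f' := A')
      (B' := B') (fun s _ => (hA s).continuousAt.continuousWithinAt)
      (fun s _ => (hA s).hasDerivWithinAt) ?_
      (fun s hs => (hB s hs.1).continuousAt.continuousWithinAt)
      (fun s hs => (hB s hs.1).hasDerivWithinAt) (fun s hs => hA' s hs.1) ⟨ht, le_rfl⟩
    simp [A, B, contractKernel_one]
  refine hmain.trans ?_
  have : 0 ≤ t ^ (-β) := by positivity
  have h4 : 0 ≤ 4 * k * r * T / β := by positivity
  simp only [B]
  nlinarith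

lemma tendsto_setIntegral_contractKernel (hψ : ContDiff ℝ (⊤ : ℕ∞) ψ)
    (hψ0 : ∀ y, 0 ≤ ψ y) (hsupp : Function.support ψ ⊆ closedBall c r) (hψ1 : ∫ y, ψ y = 1)
    (hu : ContinuousOn u (closedBall c r)) (hx : x ∈ closedBall c r) :
    Tendsto (fun t => ∫ y in closedBall c r, contractKernel ψ x t y * u y) atTop (𝓝 (u x)) := by
  rw [Metric.tendsto_atTop']
  intro ε hε
  obtain ⟨δ, hδ, hδu⟩ := Metric.continuousWithinAt_iff.1 (hu x hx) (ε / 2) (by positivity)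
  refine ⟨max 1 (2 * r / δ), fun t ht => ?_⟩
  have ht1 : 1 ≤ t := (le_max_left _ _).trans ht.le
  have ht0 : 0 < t := by linarith
  have htδ : 2 * r / t < δ := by
    have := (le_max_right _ _).trans_lt ht
    rw [div_lt_iff₀ hδ] at this
    rw [div_lt_iff₀ ht0]; linarith
  have hKs : Function.support (contractKernel ψ x t) ⊆ closedBall c r :=
    fun y hy => (mem_of_contractKernel_ne_zero hsupp hx ht1 hy).1
  have hKc := (contDiff_contractKernel (x := x) (t := t) hψ).continuous
  have hKi : Integrable (contractKernel ψ x t) := hKc.integrable_of_hasCompactSupport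
    (HasCompactSupport.of_support_subset_isCompact (isCompact_closedBall c r) hKs)
  have hK1 : ∫ y, contractKernel ψ x t y = 1 := by rw [integral_contractKernel ht0, hψ1]
  rw [setIntegral_eq_integral_of_forall_compl_eq_zero fun y hy => by
    rw [show contractKernel ψ x t y = 0 from by_contra fun h => hy (hKs h), zero_mul]]
  have h1 : (∫ y, contractKernel ψ x t y * u y) - u x =
      ∫ y, contractKernel ψ x t y * (u y - u x) := by
    simp_rw [mul_sub]
    rw [integral_sub (integrable_mul_of_continuousOn (isCompact_closedBall c r) hKc hu hKs)
      (hKi.mul_const _), integral_mul_const, hK1, one_mul]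
  rw [dist_eq_norm, h1]
  have h2 : ‖∫ y, contractKernel ψ x t y * (u y - u x)‖ ≤ ∫ y, contractKernel ψ x t y * (ε / 2) := by
    refine norm_integral_le_of_norm_le (hKi.mul_const _) (Eventually.of_forall fun y => ?_)
    have hK0 : 0 ≤ contractKernel ψ x t y := mul_nonneg (by positivity) (hψ0 _)
    rw [norm_mul, Real.norm_of_nonneg hK0]
    by_cases hy : contractKernel ψ x t y = 0
    · simp [hy]
    · obtain ⟨hyQ, hyr⟩ := mem_of_contractKernel_ne_zero hsupp hx ht1 hy
      refine mul_le_mul_of_nonneg_left ?_ hK0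
      have := hδu hyQ (by rw [dist_eq_norm]; exact hyr.trans_lt htδ)
      rw [dist_eq_norm] at this
      exact this.le
  rw [integral_mul_const, hK1, one_mul] at h2
  linarith

/-- **Morrey's inequality** on balls, for continuous functions with a weak gradient. -/
lemma morrey (k : ℕ) (p : ℝ) (hp1 : 1 ≤ p) (hpk : (k : ℝ) < p) :
    ∃ C : ℝ, 0 < C ∧ ∀ (Ω : Set (EuclideanSpace ℝ (Fin k))) (u : EuclideanSpace ℝ (Fin k) → ℝ)
      (G : EuclideanSpace ℝ (Fin k) → (EuclideanSpace ℝ (Fin k) →L[ℝ] ℝ))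
      (c : EuclideanSpace ℝ (Fin k)) (r T : ℝ), 0 < r → 0 < T → closedBall c r ⊆ Ω →
      ContinuousOn u (closedBall c r) → HasWeakGrad Ω u G →
      IntegrableOn (fun y => ‖G y‖ ^ p) (closedBall c r) →
      ∫ y in closedBall c r, ‖G y‖ ^ p ≤ T ^ p * volume.real (closedBall c r) →
      ∀ x ∈ closedBall c r, ∀ y ∈ closedBall c r, |u x - u y| ≤ C * r * T := by
  have hp0 : 0 < p := by linarith
  have hβ : 0 < 1 - k / p := by
    have : (k : ℝ) / p < 1 := (div_lt_one hp0).2 hpk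
    linarith
  refine ⟨8 * k * (2 ^ k) ^ (1 / p) / (1 - k / p) + 1, by positivity, ?_⟩
  intro Ω u G c r T hr hT hQ hu hG hGi hGT x hx y hy
  let b : ContDiffBump c := ⟨r / 2, r, by positivity, by linarith⟩
  have hvol : 0 < volume.real (closedBall c r) :=
    ENNReal.toReal_pos (measure_closedBall_pos _ _ hr).ne' measure_closedBall_lt_top.ne
  have hbM : ∀ y, b.normed volume y ≤ 2 ^ k / volume.real (closedBall c r) := fun y => by
    have := b.normed_le_div_measure_closedBall_rOut volume 2 (by simp [b]; linarith) y
    simpa [b] using this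
  have hT' : 0 < (2 ^ k) ^ (1 / p) * T := by positivity
  have hGT' : 2 ^ k / volume.real (closedBall c r) * ∫ y in closedBall c r, ‖G y‖ ^ p ≤
      ((2 ^ k) ^ (1 / p) * T) ^ p := by
    rw [Real.mul_rpow (by positivity) hT.le, ← Real.rpow_mul (by positivity),
      one_div_mul_cancel hp0.ne', Real.rpow_one, div_mul_eq_mul_div, div_le_iff₀ hvol, mul_assoc]
    gcongr
  have hsupp : Function.support (b.normed volume) ⊆ closedBall c r := by
    rw [b.support_normed_eq]; exact ball_subset_closedBall
  have key : ∀ x ∈ closedBall c r, |u x - ∫ y in closedBall c r, b.normed volume y * u y| ≤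
      4 * k * r * ((2 ^ k) ^ (1 / p) * T) / (1 - k / p) := fun x hx => by
    refine le_of_tendsto (((tendsto_setIntegral_contractKernel b.contDiff_normed
      b.nonneg_normed hsupp b.integral_normed hu hx).sub_const _).abs) ?_
    filter_upwards [eventually_ge_atTop 1] with t ht
    exact abs_setIntegral_contractKernel_sub_le hr b.contDiff_normed b.nonneg_normed hsupp
      b.integral_normed hbM hQ hu hG hp1 hpk hGi hT' hGT' hx ht
  have h1 := key x hx
  have h2 := key y hy
  rw [abs_sub_comm] at h2
  refine (abs_sub_le _ (∫ y in closedBall c r, b.normed volume y * u y) _).trans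
    ((add_le_add h1 h2).trans ?_)
  have h3 : 0 < r * T := by positivity
  have h4 : (8 * k * (2 ^ k) ^ (1 / p) / (1 - k / p) + 1) * r * T =
    4 * k * r * ((2 ^ k) ^ (1 / p) * T) / (1 - k / p) +
      4 * k * r * ((2 ^ k) ^ (1 / p) * T) / (1 - k / p) + r * T := by ring
  linarith

end Morrey

/-- Continuous maps of class `W^{1,p}_loc` into `ℝ^{2n+1}` that solve the weak contact equation,
with a measurable weak derivative that is tested through linear functionals. -/
structure IsContactSobolev (n k : ℕ) (p : ℝ) (Ω : Set (EuclideanSpace ℝ (Fin k)))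
    (f : EuclideanSpace ℝ (Fin k) → Heis n)
    (Df : EuclideanSpace ℝ (Fin k) → (EuclideanSpace ℝ (Fin k) →L[ℝ] Heis n)) : Prop where
  isOpen : IsOpen Ω
  continuousOn : ContinuousOn f Ω
  aestronglyMeasurable : AEStronglyMeasurable Df (volume.restrict Ω)
  hasWeakGrad : ∀ ℓ : Heis n →L[ℝ] ℝ, HasWeakGrad Ω (fun x => ℓ (f x)) (fun x => ℓ.comp (Df x))
  integrableOn_rpow : ∀ C : Set (EuclideanSpace ℝ (Fin k)), IsCompact C → C ⊆ Ω →
    IntegrableOn (fun x => ‖Df x‖ ^ p) C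
  contact : ∀ᵐ x, x ∈ Ω → ∀ v, Df x v ∈ kerAlpha n (f x)

lemma memLp_ofReal_iff {α F : Type*} [MeasurableSpace α] [NormedAddCommGroup F] {μ : Measure α}
    {g : α → F} {p : ℝ} (hp : 0 < p) (hg : AEStronglyMeasurable g μ) :
    Integrable (fun x => ‖g x‖ ^ p) μ ↔ MemLp g (ENNReal.ofReal p) μ := by
  rw [← integrable_norm_rpow_iff hg (by simpa using hp) ENNReal.ofReal_ne_top,
    ENNReal.toReal_ofReal hp.le]

lemma add_rpow_le_two_rpow_mul {a b p : ℝ} (ha : 0 ≤ a) (hb : 0 ≤ b) (hp : 1 ≤ p) :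
    (a + b) ^ p ≤ 2 ^ (p - 1) * (a ^ p + b ^ p) := by
  lift a to ℝ≥0 using ha
  lift b to ℝ≥0 using hb
  exact_mod_cast NNReal.rpow_add_le_mul_rpow_add_rpow a b hp

namespace IsContactSobolev

variable {n k : ℕ} {p : ℝ} {Ω : Set (EuclideanSpace ℝ (Fin k))}
  {f : EuclideanSpace ℝ (Fin k) → Heis n}
  {Df : EuclideanSpace ℝ (Fin k) → (EuclideanSpace ℝ (Fin k) →L[ℝ] Heis n)}

lemma memLp (h : IsContactSobolev n k p Ω f Df) (hp : 0 < p)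
    {C : Set (EuclideanSpace ℝ (Fin k))} (hC : IsCompact C) (hCΩ : C ⊆ Ω) :
    MemLp Df (ENNReal.ofReal p) (volume.restrict C) :=
  (memLp_ofReal_iff hp (h.aestronglyMeasurable.mono_set hCΩ)).1 (h.integrableOn_rpow C hC hCΩ)

lemma integrableOn (h : IsContactSobolev n k p Ω f Df) (hp : 1 ≤ p)
    {C : Set (EuclideanSpace ℝ (Fin k))} (hC : IsCompact C) (hCΩ : C ⊆ Ω) :
    IntegrableOn Df C := by
  have : IsFiniteMeasure (volume.restrict C) := ⟨by simpa using hC.measure_lt_top⟩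
  exact (h.memLp (by linarith) hC hCΩ).integrable (by simpa using hp)

lemma integrableOn_sub_rpow (h : IsContactSobolev n k p Ω f Df) (hp : 1 ≤ p)
    {C : Set (EuclideanSpace ℝ (Fin k))} (hC : IsCompact C) (hCΩ : C ⊆ Ω)
    (L : EuclideanSpace ℝ (Fin k) →L[ℝ] Heis n) : IntegrableOn (fun y => ‖Df y - L‖ ^ p) C := by
  have : IsFiniteMeasure (volume.restrict C) := ⟨by simpa using hC.measure_lt_top⟩
  refine (memLp_ofReal_iff (g := fun y => Df y - L) (by linarith)
    ((h.aestronglyMeasurable.mono_set hCΩ).sub aestronglyMeasurable_const)).2 ?_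
  exact (h.memLp (by linarith) hC hCΩ).sub (memLp_const L)

lemma ae_lebesgue_point (h : IsContactSobolev n k p Ω f Df) (hp : 1 ≤ p) :
    ∀ᵐ x, x ∈ Ω → ∀ η > 0, ∀ᶠ r in 𝓝[>] (0 : ℝ), closedBall x r ⊆ Ω ∧
      ∫ y in closedBall x r, ‖Df y - Df x‖ ^ p ≤ η ^ p * volume.real (closedBall x r) := by
  have hp0 : 0 < p := by linarith
  have loc : ∀ x ∈ Ω, ∃ U ∈ 𝓝 x, ∀ᵐ x, x ∈ U → ∀ η > 0, ∀ᶠ r in 𝓝[>] (0 : ℝ), closedBall x r ⊆ Ω ∧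
      ∫ y in closedBall x r, ‖Df y - Df x‖ ^ p ≤ η ^ p * volume.real (closedBall x r) := by
    intro x hx
    obtain ⟨R, hR, hRΩ⟩ := nhds_basis_closedBall.mem_iff.1 (h.isOpen.mem_nhds hx)
    set C := closedBall x R
    refine ⟨ball x R, ball_mem_nhds x hR, ?_⟩
    have hC : IsCompact C := isCompact_closedBall x R
    obtain ⟨D, hDc, hD⟩ := TopologicalSpace.exists_countable_dense
      (EuclideanSpace ℝ (Fin k) →L[ℝ] Heis n)
    have hall : ∀ᵐ z, ∀ L ∈ D, Tendsto (fun a => ⨍ y in a, C.indicator (fun y => ‖Df y - L‖ ^ p) y)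
        ((Besicovitch.vitaliFamily volume).filterAt z)
        (𝓝 (C.indicator (fun y => ‖Df y - L‖ ^ p) z)) := by
      refine (ae_ball_iff hDc).2 fun L _ => ?_
      refine (Besicovitch.vitaliFamily volume).ae_tendsto_average ?_
      exact ((integrable_indicator_iff measurableSet_closedBall).2
        (h.integrableOn_sub_rpow hp hC hRΩ L)).locallyIntegrable
    filter_upwards [hall] with z hz hzx η hη
    have hzC : z ∈ C := ball_subset_closedBall hzx
    obtain ⟨L, hLD, hL⟩ := Metric.dense_iff.1 hD (Df z) (η / 4) (by positivity)
    have hL' : ‖Df z - L‖ < η / 4 := by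
      rw [← dist_eq_norm, dist_comm]; exact hLD
    have h1 := (hz L hL).comp (Besicovitch.tendsto_filterAt volume z)
    rw [indicator_of_mem hzC] at h1
    have h2 : ‖Df z - L‖ ^ p < (η / 4) ^ p := Real.rpow_lt_rpow (norm_nonneg _) hL' hp0
    have h3 : ∀ᶠ r in 𝓝[>] (0 : ℝ), closedBall z r ⊆ C := by
      obtain ⟨δ, hδ, hδC⟩ := nhds_basis_closedBall.mem_iff.1
        (mem_of_superset (isOpen_ball.mem_nhds hzx) ball_subset_closedBall)
      filter_upwards [Ioo_mem_nhdsGT hδ] with r hr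
      exact (closedBall_subset_closedBall hr.2.le).trans hδC
    filter_upwards [h1.eventually (gt_mem_nhds h2), h3, self_mem_nhdsWithin] with r hr hrC hr0
    refine ⟨hrC.trans hRΩ, ?_⟩
    have hvol : 0 < volume.real (closedBall z r) :=
      ENNReal.toReal_pos (measure_closedBall_pos _ _ hr0).ne' measure_closedBall_lt_top.ne
    have hci : IntegrableOn (fun y => ‖Df y - L‖ ^ p) (closedBall z r) :=
      h.integrableOn_sub_rpow hp (isCompact_closedBall z r) (hrC.trans hRΩ) L
    have h4 : ∫ y in closedBall z r, ‖Df y - L‖ ^ p ≤ (η / 4) ^ p * volume.real (closedBall z r) := by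
      simp only [Function.comp_apply, setAverage_eq, smul_eq_mul] at hr
      rw [inv_mul_lt_iff₀ hvol, setIntegral_congr_fun measurableSet_closedBall
        (fun y hy => indicator_of_mem (hrC hy) _)] at hr
      linarith
    calc ∫ y in closedBall z r, ‖Df y - Df z‖ ^ p
        ≤ ∫ y in closedBall z r, 2 ^ (p - 1) * (‖Df y - L‖ ^ p + (η / 4) ^ p) := by
          refine integral_mono (h.integrableOn_sub_rpow hp (isCompact_closedBall z r)
            (hrC.trans hRΩ) _) ((hci.add (integrableOn_const measure_closedBall_lt_top.ne)).const_mul _) fun y => ?_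
          refine le_trans ?_ (add_rpow_le_two_rpow_mul (norm_nonneg _) (by positivity) hp)
          refine Real.rpow_le_rpow (norm_nonneg _) ?_ hp0.le
          have : Df y - Df z = (Df y - L) - (Df z - L) := by abel
          rw [this]
          exact (norm_sub_le _ _).trans (by linarith)
      _ = 2 ^ (p - 1) * ((∫ y in closedBall z r, ‖Df y - L‖ ^ p) +
            (η / 4) ^ p * volume.real (closedBall z r)) := by
          rw [integral_const_mul, integral_add hci (integrableOn_const measure_closedBall_lt_top.ne)]
          simp [mul_comm]
      _ ≤ 2 ^ (p - 1) * ((η / 4) ^ p * volume.real (closedBall z r) +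
            (η / 4) ^ p * volume.real (closedBall z r)) := by gcongr
      _ = (η / 2) ^ p * volume.real (closedBall z r) := by
          rw [Real.rpow_sub_one (by norm_num), show η / 2 = 2 * (η / 4) by ring,
            Real.mul_rpow (by norm_num) (by positivity)]
          ring
      _ ≤ η ^ p * volume.real (closedBall z r) := by gcongr; linarith
  have : ∀ P : EuclideanSpace ℝ (Fin k) → Prop, (∀ x ∈ Ω, ∃ U ∈ 𝓝 x, ∀ᵐ x, x ∈ U → P x) →
      ∀ᵐ x, x ∈ Ω → P x := by
    intro P hP
    refine measure_mono_null (t := {x | x ∈ Ω ∧ ¬ P x}) (fun x hx => by simpa using hx) ?_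
    refine measure_null_of_locally_null _ fun x hx => ?_
    obtain ⟨U, hU, hUP⟩ := hP x hx.1
    refine ⟨_, inter_mem_nhdsWithin _ hU, measure_mono_null ?_ hUP⟩
    rintro y ⟨hy, hyU⟩ h
    exact hy.2 (h hyU)
  exact this _ loc

end IsContactSobolev

lemma integrable_smul_of_integrableOn {E F : Type*} [NormedAddCommGroup E] [MeasurableSpace E]
    [BorelSpace E] [NormedAddCommGroup F] [NormedSpace ℝ F] {μ : Measure E}
    {Q : Set E} (hQ : IsCompact Q) {g : E → ℝ} {u : E → F}
    (hg : Continuous g) (hu : IntegrableOn u Q μ) (hs : Function.support g ⊆ Q) :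
    Integrable (fun y => g y • u y) μ :=
  (integrableOn_iff_integrable_of_support_subset (s := Q)
    (fun _ hy => hs (left_ne_zero_of_smul hy))).1 (hu.continuousOn_smul hg.continuousOn hQ)

lemma support_fderiv_apply_subset {E : Type*} [NormedAddCommGroup E] [NormedSpace ℝ E]
    (φ : E → ℝ) (v : E) : Function.support (fun x => fderiv ℝ φ x v) ⊆ tsupport φ := by
  intro x hx
  refine support_fderiv_subset ℝ fun h => hx ?_
  simp [h]

lemma hasWeakGrad_clm {k : ℕ} (Ω : Set (EuclideanSpace ℝ (Fin k)))
    (m : EuclideanSpace ℝ (Fin k) →L[ℝ] ℝ) (c : EuclideanSpace ℝ (Fin k)) :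
    HasWeakGrad Ω (fun x => m (x - c)) (fun _ => m) := by
  intro φ hφ hc _ i
  have hd := hφ.continuous_fderiv_apply (by simp) |>.comp
    (continuous_id.prodMk (continuous_const (y := EuclideanSpace.single i (1 : ℝ))))
  have hm : Continuous fun x => m (x - c) := by fun_prop
  have hm' : ∀ x, HasFDerivAt (fun x => m (x - c)) m x := fun x =>
    m.hasFDerivAt.comp x ((hasFDerivAt_id x).sub_const c)
  have h1 : Integrable fun x => φ x * m (x - c) :=
    integrable_mul_of_continuousOn hc hφ.continuous hm.continuousOn (subset_tsupport φ)
  have h2 : Integrable fun x => fderiv ℝ φ x (EuclideanSpace.single i (1 : ℝ)) * m (x - c) :=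
    integrable_mul_of_continuousOn hc hd hm.continuousOn (support_fderiv_apply_subset φ _)
  have h3 : Integrable fun x => φ x * m (EuclideanSpace.single i (1 : ℝ)) :=
    integrable_mul_of_continuousOn hc hφ.continuous continuousOn_const (subset_tsupport φ)
  have := integral_mul_fderiv_eq_neg_fderiv_mul_of_integrable (μ := volume) (f := φ)
    (g := fun x => m (x - c)) (v := EuclideanSpace.single i (1 : ℝ)) h2
    (by simpa only [(hm' _).fderiv] using h3) h1
    (fun x _ => (hφ.differentiable (by simp)) x) (fun x _ => (hm' x).differentiableAt)
  simp only [(hm' _).fderiv] at this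
  rw [this, neg_neg]

namespace IsContactSobolev

variable {n k : ℕ} {p : ℝ} {Ω : Set (EuclideanSpace ℝ (Fin k))}
  {f : EuclideanSpace ℝ (Fin k) → Heis n}
  {Df : EuclideanSpace ℝ (Fin k) → (EuclideanSpace ℝ (Fin k) →L[ℝ] Heis n)}

lemma hasWeakGrad_sub (h : IsContactSobolev n k p Ω f Df) (hp : 1 ≤ p) (ℓ : Heis n →L[ℝ] ℝ)
    (M : EuclideanSpace ℝ (Fin k) →L[ℝ] Heis n) :
    HasWeakGrad Ω (fun x => ℓ (f x - M x)) (fun x => ℓ.comp (Df x - M)) := by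
  intro φ hφ hc hΩ i
  have h1 := h.hasWeakGrad ℓ φ hφ hc hΩ i
  have h2 := hasWeakGrad_clm Ω (ℓ.comp M) 0 φ hφ hc hΩ i
  have hd := hφ.continuous_fderiv_apply (by simp) |>.comp
    (continuous_id.prodMk (continuous_const (y := EuclideanSpace.single i (1 : ℝ))))
  have hi : IntegrableOn (fun x => ℓ (Df x (EuclideanSpace.single i (1 : ℝ)))) (tsupport φ) :=
    (ℓ.comp (ContinuousLinearMap.apply ℝ (Heis n)
      (EuclideanSpace.single i (1 : ℝ)))).integrable_comp (h.integrableOn hp hc hΩ)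
  simp only [sub_zero, map_sub, mul_sub, ContinuousLinearMap.comp_apply,
    _root_.sub_apply] at h1 h2 ⊢
  rw [integral_sub, integral_sub, h1, h2]
  · ring
  · exact integrable_smul_of_integrableOn hc hφ.continuous hi (subset_tsupport φ)
  · exact integrable_mul_of_continuousOn hc hφ.continuous continuousOn_const (subset_tsupport φ)
  · exact integrable_mul_of_continuousOn hc hd
      (ℓ.continuous.comp_continuousOn (h.continuousOn.mono hΩ)) (support_fderiv_apply_subset φ _)
  · exact integrable_mul_of_continuousOn hc hd (ℓ.comp M).continuous.continuousOn
      (support_fderiv_apply_subset φ _)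

lemma oscillation (k : ℕ) (p : ℝ) (hp1 : 1 ≤ p) (hpk : (k : ℝ) < p) :
    ∃ C : ℝ, 0 < C ∧ ∀ (n : ℕ) (Ω : Set (EuclideanSpace ℝ (Fin k)))
      (f : EuclideanSpace ℝ (Fin k) → Heis n)
      (Df : EuclideanSpace ℝ (Fin k) → (EuclideanSpace ℝ (Fin k) →L[ℝ] Heis n)),
      IsContactSobolev n k p Ω f Df → ∀ (c : EuclideanSpace ℝ (Fin k)) (r : ℝ), 0 < r →
      closedBall c r ⊆ Ω → ∀ (L M : EuclideanSpace ℝ (Fin k) →L[ℝ] Heis n) (ℓ : Heis n →L[ℝ] ℝ)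
      (a b τ : ℝ), 0 ≤ a → 0 < b → 0 < τ →
      (∀ᵐ y, y ∈ closedBall c r → ‖ℓ.comp (Df y - M)‖ ≤ a + b * ‖Df y - L‖) →
      ∫ y in closedBall c r, ‖Df y - L‖ ^ p ≤ τ ^ p * volume.real (closedBall c r) →
      ∀ x ∈ closedBall c r, ∀ y ∈ closedBall c r,
        |ℓ (f x - f y - M (x - y))| ≤ C * r * (a + b * τ) := by
  obtain ⟨C, hC, H⟩ := morrey k p hp1 hpk
  have hp0 : 0 < p := by linarith
  refine ⟨C * 2, by positivity, ?_⟩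
  intro n Ω f Df h c r hr hΩ L M ℓ a b τ ha hb hτ hbd hint x hx y hy
  have hcomp := isCompact_closedBall c r
  have hLi := h.integrableOn_sub_rpow hp1 hcomp hΩ L
  have hconst : ∀ a : ℝ, IntegrableOn (fun _ : EuclideanSpace ℝ (Fin k) => a) (closedBall c r) :=
    fun a => integrableOn_const measure_closedBall_lt_top.ne
  have hgi : IntegrableOn (fun y => 2 ^ (p - 1) * (a ^ p + b ^ p * ‖Df y - L‖ ^ p))
      (closedBall c r) := ((hconst _).add (hLi.const_mul _)).const_mul _
  have hbd' : ∀ᵐ y ∂(volume.restrict (closedBall c r)),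
      ‖ℓ.comp (Df y - M)‖ ^ p ≤ 2 ^ (p - 1) * (a ^ p + b ^ p * ‖Df y - L‖ ^ p) := by
    refine (ae_restrict_iff' measurableSet_closedBall).2 ?_
    filter_upwards [hbd] with y hy hyc
    calc ‖ℓ.comp (Df y - M)‖ ^ p ≤ (a + b * ‖Df y - L‖) ^ p :=
          Real.rpow_le_rpow (norm_nonneg _) (hy hyc) hp0.le
      _ ≤ 2 ^ (p - 1) * (a ^ p + (b * ‖Df y - L‖) ^ p) :=
          add_rpow_le_two_rpow_mul ha (by positivity) hp1
      _ = _ := by rw [Real.mul_rpow hb.le (norm_nonneg _)]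
  have hGm : AEStronglyMeasurable (fun y => ‖ℓ.comp (Df y - M)‖ ^ p)
      (volume.restrict (closedBall c r)) := by
    have h1 : Continuous fun A : EuclideanSpace ℝ (Fin k) →L[ℝ] Heis n => ‖ℓ.comp (A - M)‖ ^ p :=
      (((ContinuousLinearMap.compL ℝ _ _ ℝ ℓ).continuous.comp
        (continuous_id.sub continuous_const)).norm).rpow_const fun _ => Or.inr hp0.le
    exact h1.comp_aestronglyMeasurable (h.aestronglyMeasurable.mono_set hΩ)
  have hGi : IntegrableOn (fun y => ‖ℓ.comp (Df y - M)‖ ^ p) (closedBall c r) := by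
    refine Integrable.mono' hgi hGm ?_
    filter_upwards [hbd'] with y hy
    rwa [Real.norm_of_nonneg (by positivity)]
  have key := H Ω (fun x => ℓ (f x - M x)) (fun x => ℓ.comp (Df x - M)) c r (2 * (a + b * τ)) hr
    (by positivity) hΩ
    (ℓ.continuous.comp_continuousOn
      ((h.continuousOn.mono hΩ).sub M.continuous.continuousOn))
    (h.hasWeakGrad_sub hp1 ℓ M) hGi ?_ x hx y hy
  · rw [← map_sub] at key
    rw [map_sub M, show f x - f y - (M x - M y) = f x - M x - (f y - M y) by abel]
    linarith
  · set V := volume.real (closedBall c r)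
    have hV : 0 ≤ V := measureReal_nonneg
    calc ∫ y in closedBall c r, ‖ℓ.comp (Df y - M)‖ ^ p
        ≤ ∫ y in closedBall c r, 2 ^ (p - 1) * (a ^ p + b ^ p * ‖Df y - L‖ ^ p) :=
          integral_mono_ae hGi hgi hbd'
      _ = 2 ^ (p - 1) * (a ^ p * V + b ^ p * ∫ y in closedBall c r, ‖Df y - L‖ ^ p) := by
          rw [integral_const_mul, integral_add (hconst _) (hLi.const_mul _), integral_const_mul]
          simp [mul_comm, V]
      _ ≤ 2 ^ (p - 1) * (a ^ p * V + b ^ p * (τ ^ p * V)) := by gcongr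
      _ = 2 ^ (p - 1) * (a ^ p + (b * τ) ^ p) * V := by rw [Real.mul_rpow hb.le hτ.le]; ring
      _ ≤ 2 ^ (p - 1) * (2 * (a + b * τ) ^ p) * V := by
          have h1 : a ^ p ≤ (a + b * τ) ^ p :=
            Real.rpow_le_rpow ha (by have : 0 < b * τ := by positivity
                                     linarith) hp0.le
          have h2 : (b * τ) ^ p ≤ (a + b * τ) ^ p :=
            Real.rpow_le_rpow (by positivity) (by linarith) hp0.le
          gcongr
          linarith
      _ = (2 * (a + b * τ)) ^ p * V := by
          rw [Real.mul_rpow (by norm_num) (by positivity), Real.rpow_sub_one (by norm_num)]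
          ring

end IsContactSobolev

lemma alphaL_eq_of_mem {n : ℕ} {q q' v : Heis n} (h : v ∈ kerAlpha n q') :
    alphaL n q v = 2 * symp n (q - q') v := by
  have := alphaL_eq_zero_of_mem n h
  rw [alphaL_apply] at this ⊢
  rw [symp_sub_left]
  linarith

lemma norm_proj_comp_le {E : Type*} [NormedAddCommGroup E] [NormedSpace ℝ E] {m : ℕ}
    (A : E →L[ℝ] EuclideanSpace ℝ (Fin m)) (i : Fin m) :
    ‖(EuclideanSpace.proj i : EuclideanSpace ℝ (Fin m) →L[ℝ] ℝ).comp A‖ ≤ ‖A‖ :=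
  ContinuousLinearMap.opNorm_le_bound _ (norm_nonneg _) fun v =>
    (abs_coord_le_norm (A v) i).trans (A.le_opNorm v)

/-- `L` is the `L^p` Lebesgue value of `Df` at `x`. -/
def IsLebesgueValue {n k : ℕ} (p : ℝ) (Ω : Set (EuclideanSpace ℝ (Fin k)))
    (Df : EuclideanSpace ℝ (Fin k) → (EuclideanSpace ℝ (Fin k) →L[ℝ] Heis n))
    (x : EuclideanSpace ℝ (Fin k)) (L : EuclideanSpace ℝ (Fin k) →L[ℝ] Heis n) : Prop :=
  ∀ η > 0, ∀ᶠ r in 𝓝[>] (0 : ℝ), closedBall x r ⊆ Ω ∧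
    ∫ y in closedBall x r, ‖Df y - L‖ ^ p ≤ η ^ p * volume.real (closedBall x r)

lemma abs_alphaL_add_symp_le {n k : ℕ} {x₀ w : EuclideanSpace ℝ (Fin k)} {q q₀ : Heis n}
    {L A : EuclideanSpace ℝ (Fin k) →L[ℝ] Heis n} {δ r : ℝ} (hA : ∀ v, A v ∈ kerAlpha n q)
    (hq : ∀ i, |(q - q₀ - L (w - x₀)) i| ≤ δ * r) (hr : 0 ≤ r) (hδ : 0 ≤ δ)
    (hw : w ∈ closedBall x₀ r) (v : EuclideanSpace ℝ (Fin k)) :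
    |alphaL n q₀ (A v) + 2 * symp n (L (w - x₀)) (L v)| ≤
      (4 * n * (δ * r) * ‖L‖ + (4 * n * (δ * r) + 4 * n * (‖L‖ * r)) * ‖A - L‖) * ‖v‖ := by
  have hwL : ‖L (w - x₀)‖ ≤ ‖L‖ * r := (L.le_opNorm _).trans (by
    gcongr; simpa [dist_eq_norm] using hw)
  have hD : ‖A‖ ≤ ‖L‖ + ‖A - L‖ := by
    have := norm_add_le L (A - L)
    rwa [add_sub_cancel] at this
  have e1 : alphaL n q₀ (A v) + 2 * symp n (L (w - x₀)) (L v) =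
      - (2 * symp n (q - q₀ - L (w - x₀)) (A v) + 2 * symp n (L (w - x₀)) ((A - L) v)) := by
    rw [alphaL_eq_of_mem (hA v), _root_.sub_apply, symp_sub_right,
      symp_sub_left _ _ (L (w - x₀)), symp_sub_left, symp_sub_left]
    ring
  have b1 := abs_symp_le n hq
    (fun i => (abs_coord_le_norm (A v) i).trans (A.le_opNorm v))
  have b2 := abs_symp_le n (fun i => (abs_coord_le_norm (L (w - x₀)) i).trans hwL)
    (fun i => (abs_coord_le_norm ((A - L) v) i).trans ((A - L).le_opNorm v))
  have b3 := abs_add_le (2 * symp n (q - q₀ - L (w - x₀)) (A v))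
    (2 * symp n (L (w - x₀)) ((A - L) v))
  rw [e1, abs_neg]
  rw [abs_mul, abs_mul, abs_two] at b3
  have b4 : 2 * (n : ℝ) * (δ * r) * (‖A‖ * ‖v‖) ≤
      2 * n * (δ * r) * ((‖L‖ + ‖A - L‖) * ‖v‖) := by gcongr
  linarith

namespace IsContactSobolev

lemma dK_le_of_setIntegral_le (n k : ℕ) (p : ℝ) (hp1 : 1 ≤ p) (hpk : (k : ℝ) < p) :
    ∃ C : ℝ, 0 < C ∧ ∀ (Ω : Set (EuclideanSpace ℝ (Fin k)))
      (f : EuclideanSpace ℝ (Fin k) → Heis n)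
      (Df : EuclideanSpace ℝ (Fin k) → (EuclideanSpace ℝ (Fin k) →L[ℝ] Heis n)),
      IsContactSobolev n k p Ω f Df → ∀ (c : EuclideanSpace ℝ (Fin k)) (r τ : ℝ), 0 < r → 0 < τ →
      closedBall c r ⊆ Ω →
      ∫ y in closedBall c r, ‖Df y‖ ^ p ≤ τ ^ p * volume.real (closedBall c r) →
      ∀ x ∈ closedBall c r, ∀ y ∈ closedBall c r, dK n (f x) (f y) ≤ C * r * τ := by
  obtain ⟨C, hC, H⟩ := oscillation k p hp1 hpk
  refine ⟨(2 * n + 1) * ((4 * n + 1) * C), by positivity, ?_⟩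
  intro Ω f Df h c r τ hr hτ hΩ hint x hx y hy
  set A := C * r * τ with hA
  have hA0 : 0 < A := by positivity
  have hn : (0 : ℝ) ≤ n := n.cast_nonneg
  have hint' : ∫ y in closedBall c r, ‖Df y - 0‖ ^ p ≤ τ ^ p * volume.real (closedBall c r) := by
    simpa using hint
  have hcoord : ∀ x ∈ closedBall c r, ∀ y ∈ closedBall c r, ∀ i, |(f x - f y) i| ≤ A := by
    intro x hx y hy i
    have := H n Ω f Df h c r hr hΩ 0 0 (EuclideanSpace.proj i) 0 1 τ le_rfl one_pos hτ
      (ae_of_all _ fun y _ => by simpa using norm_proj_comp_le (Df y) i) hint' x hx y hy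
    simpa using this
  have hα := H n Ω f Df h c r hr hΩ 0 0 (alphaL n (f y)) 0 ((4 * n + 1) * A) τ le_rfl
    (by positivity) hτ ?_ hint' x hx y hy
  · have := dK_le n (p := f x) (q := f y) (a := (4 * n + 1) * A) (by positivity)
      (fun i _ => (hcoord x hx y hy i).trans (by nlinarith)) ?_
    · calc dK n (f x) (f y) ≤ _ := this
        _ = _ := by rw [hA]; ring
    · simp only [_root_.zero_apply, sub_zero] at hα
      refine hα.trans ?_
      have : C * r * (0 + (4 * n + 1) * A * τ) = (4 * n + 1) * A ^ 2 := by rw [hA]; ring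
      have h1 : (4 * n + 1 : ℝ) ≤ (4 * n + 1) ^ 2 := by nlinarith
      have h2 := mul_le_mul_of_nonneg_right h1 (sq_nonneg A)
      linarith
  · filter_upwards [h.contact] with w hw hwc
    rw [sub_zero, zero_add]
    refine ContinuousLinearMap.opNorm_le_bound _ (by positivity) fun v => ?_
    rw [ContinuousLinearMap.comp_apply, alphaL_eq_of_mem (hw (hΩ hwc) v), norm_mul,
      Real.norm_eq_abs, Real.norm_eq_abs, abs_two]
    have h1 := abs_symp_le n (hcoord y hy w hwc)
      (fun i => (abs_coord_le_norm (Df w v) i).trans ((Df w).le_opNorm v))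
    have h2 : 0 ≤ A * (‖Df w‖ * ‖v‖) := by positivity
    linarith

variable {n k : ℕ} {p : ℝ} {Ω : Set (EuclideanSpace ℝ (Fin k))}
  {f : EuclideanSpace ℝ (Fin k) → Heis n}
  {Df : EuclideanSpace ℝ (Fin k) → (EuclideanSpace ℝ (Fin k) →L[ℝ] Heis n)}
  {x₀ : EuclideanSpace ℝ (Fin k)} {L : EuclideanSpace ℝ (Fin k) →L[ℝ] Heis n}

lemma first_order (h : IsContactSobolev n k p Ω f Df) (hp1 : 1 ≤ p) (hpk : (k : ℝ) < p)
    (hL : IsLebesgueValue p Ω Df x₀ L) {ε : ℝ} (hε : 0 < ε) :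
    ∀ᶠ r in 𝓝[>] (0 : ℝ), ∀ y ∈ closedBall x₀ r, ∀ i,
      |(f y - f x₀ - L (y - x₀)) i| ≤ ε * r := by
  obtain ⟨C, hC, H⟩ := oscillation k p hp1 hpk
  filter_upwards [hL (ε / C) (by positivity), self_mem_nhdsWithin] with r hr hr0 y hy i
  have hr0 : 0 < r := hr0
  have := H n Ω f Df h x₀ r hr0 hr.1 L L (EuclideanSpace.proj i) 0 1 (ε / C) le_rfl one_pos
    (by positivity) (ae_of_all _ fun y _ => by simpa using norm_proj_comp_le (Df y - L) i) hr.2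
    y hy x₀ (mem_closedBall_self hr0.le)
  have h2 : C * r * (0 + 1 * (ε / C)) = ε * r := by field_simp; ring
  rw [h2] at this
  simpa using this

lemma second_order (h : IsContactSobolev n k p Ω f Df) (hp1 : 1 ≤ p) (hpk : (k : ℝ) < p)
    (hL : IsLebesgueValue p Ω Df x₀ L) (hiso : ∀ v w, symp n (L v) (L w) = 0) {ε : ℝ}
    (hε : 0 < ε) :
    ∀ᶠ r in 𝓝[>] (0 : ℝ), ∀ y ∈ closedBall x₀ r, |alphaL n (f x₀) (f y - f x₀)| ≤ ε * r ^ 2 := by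
  obtain ⟨C, hC, H⟩ := oscillation k p hp1 hpk
  set B : ℝ := C * (4 * n * (‖L‖ + 1) + 4 * n * ‖L‖ + 1) with hB
  have hB0 : 0 < B := by positivity
  set δ := min 1 (ε / B) with hδ
  have hδ0 : 0 < δ := by positivity
  have hδ1 : δ ≤ 1 := min_le_left _ _
  have hδB : B * δ ≤ ε := by
    have : δ ≤ ε / B := min_le_right _ _
    rwa [le_div_iff₀' hB0] at this
  filter_upwards [hL δ hδ0, h.first_order hp1 hpk hL hδ0, self_mem_nhdsWithin]
    with r hr hfst hr0 y hy
  have hr0 : 0 < r := hr0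
  have := H n Ω f Df h x₀ r hr0 hr.1 L 0 (alphaL n (f x₀)) (4 * n * (δ * r) * ‖L‖)
    (4 * n * (δ * r) + 4 * n * (‖L‖ * r) + r) δ (by positivity) (by positivity) hδ0 ?_ hr.2
    y hy x₀ (mem_closedBall_self hr0.le)
  · simp only [_root_.zero_apply, sub_zero] at this
    refine this.trans ?_
    calc C * r * (4 * n * (δ * r) * ‖L‖ + (4 * n * (δ * r) + 4 * n * (‖L‖ * r) + r) * δ)
        = C * (4 * n * (‖L‖ + δ) + 4 * n * ‖L‖ + 1) * δ * r ^ 2 := by ring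
      _ ≤ B * δ * r ^ 2 := by rw [hB]; gcongr
      _ ≤ ε * r ^ 2 := by gcongr
  · filter_upwards [h.contact] with w hw hwc
    rw [sub_zero]
    refine ContinuousLinearMap.opNorm_le_bound _ (by positivity) fun v => ?_
    have := abs_alphaL_add_symp_le (hw (hr.1 hwc)) (hfst w hwc) hr0.le hδ0.le hwc v
    rw [hiso, mul_zero, add_zero] at this
    refine this.trans (mul_le_mul_of_nonneg_right ?_ (norm_nonneg _))
    have : 0 ≤ r * ‖Df w - L‖ := by positivity
    linarith

end IsContactSobolev

lemma HasWeakGrad.integral_fderiv_mul_comm {k : ℕ} {Ω : Set (EuclideanSpace ℝ (Fin k))}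
    {u : EuclideanSpace ℝ (Fin k) → ℝ}
    {G : EuclideanSpace ℝ (Fin k) → (EuclideanSpace ℝ (Fin k) →L[ℝ] ℝ)} (h : HasWeakGrad Ω u G)
    {φ : EuclideanSpace ℝ (Fin k) → ℝ} (hφ : ContDiff ℝ (⊤ : ℕ∞) φ) (hc : HasCompactSupport φ)
    (hΩ : tsupport φ ⊆ Ω) (i j : Fin k) :
    ∫ x, fderiv ℝ φ x (EuclideanSpace.single j (1 : ℝ)) * G x (EuclideanSpace.single i (1 : ℝ)) =
      ∫ x, fderiv ℝ φ x (EuclideanSpace.single i (1 : ℝ)) *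
        G x (EuclideanSpace.single j (1 : ℝ)) := by
  have hd : ∀ v, ContDiff ℝ (⊤ : ℕ∞) fun x => fderiv ℝ φ x v := fun v =>
    (hφ.fderiv_right (m := (⊤ : ℕ∞)) (by simp)).clm_apply contDiff_const
  have hts : ∀ v, tsupport (fun x => fderiv ℝ φ x v) ⊆ tsupport φ := fun v =>
    closure_minimal (support_fderiv_apply_subset φ v) (isClosed_tsupport φ)
  have hcs : ∀ v, HasCompactSupport (fun x => fderiv ℝ φ x v) := fun v =>
    hc.of_isClosed_subset (isClosed_tsupport _) (hts v)
  have hfd : ∀ x v w, fderiv ℝ (fun x => fderiv ℝ φ x v) x w = fderiv ℝ (fderiv ℝ φ) x w v := by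
    intro x v w
    have h1 : DifferentiableAt ℝ (fderiv ℝ φ) x :=
      (hφ.fderiv_right (m := (⊤ : ℕ∞)) (by simp)).differentiable (by simp) x
    rw [fderiv_clm_apply h1 (differentiableAt_const v)]
    simp
  have key := fun i j => h (fun x => fderiv ℝ φ x (EuclideanSpace.single j (1 : ℝ))) (hd _)
    (hcs _) ((hts _).trans hΩ) i
  have h1 := key i j
  have h2 := key j i
  simp only [hfd] at h1 h2
  have hsymm : ∀ x v w, fderiv ℝ (fderiv ℝ φ) x v w = fderiv ℝ (fderiv ℝ φ) x w v := fun x v w =>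
    (hφ.contDiffAt.isSymmSndFDerivAt (by simp only [minSmoothness_of_isRCLikeNormedField]; exact WithTop.coe_le_coe.2 le_top)) v w
  simp only [hsymm _ (EuclideanSpace.single i 1) (EuclideanSpace.single j 1)] at h1
  linarith

namespace IsContactSobolev

variable {n k : ℕ} {p : ℝ} {Ω : Set (EuclideanSpace ℝ (Fin k))}
  {f : EuclideanSpace ℝ (Fin k) → Heis n}
  {Df : EuclideanSpace ℝ (Fin k) → (EuclideanSpace ℝ (Fin k) →L[ℝ] Heis n)}
  {x₀ : EuclideanSpace ℝ (Fin k)} {L : EuclideanSpace ℝ (Fin k) →L[ℝ] Heis n}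

lemma setIntegral_norm_sub_le (h : IsContactSobolev n k p Ω f Df) (hp1 : 1 ≤ p) {r δ : ℝ}
    (hδ : 0 < δ) (hΩ : closedBall x₀ r ⊆ Ω)
    (hint : ∫ y in closedBall x₀ r, ‖Df y - L‖ ^ p ≤ δ ^ p * volume.real (closedBall x₀ r)) :
    ∫ y in closedBall x₀ r, ‖Df y - L‖ ≤ 2 * δ * volume.real (closedBall x₀ r) := by
  have hc := isCompact_closedBall x₀ r
  have hconst : ∀ a : ℝ, IntegrableOn (fun _ : EuclideanSpace ℝ (Fin k) => a) (closedBall x₀ r) :=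
    fun a => integrableOn_const measure_closedBall_lt_top.ne
  have hLi := h.integrableOn_sub_rpow hp1 hc hΩ L
  calc ∫ y in closedBall x₀ r, ‖Df y - L‖
      ≤ ∫ y in closedBall x₀ r, (δ + δ ^ (1 - p) * ‖Df y - L‖ ^ p) :=
        integral_mono ((h.integrableOn hp1 hc hΩ).sub
          (integrableOn_const measure_closedBall_lt_top.ne)).norm
          ((hconst δ).add (hLi.const_mul _))
          fun y => le_add_rpow_mul_rpow (norm_nonneg _) hδ hp1
    _ = δ * volume.real (closedBall x₀ r) +
          δ ^ (1 - p) * ∫ y in closedBall x₀ r, ‖Df y - L‖ ^ p := by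
        rw [integral_add (hconst δ) (hLi.const_mul _), integral_const_mul]
        simp [mul_comm]
    _ ≤ δ * volume.real (closedBall x₀ r) +
          δ ^ (1 - p) * (δ ^ p * volume.real (closedBall x₀ r)) := by gcongr
    _ = 2 * δ * volume.real (closedBall x₀ r) := by
        rw [← mul_assoc, ← Real.rpow_add hδ]
        simp only [sub_add_cancel, Real.rpow_one]
        ring

lemma abs_integral_sub_le (h : IsContactSobolev n k p Ω f Df) (hp1 : 1 ≤ p) {r δ D : ℝ}
    (hr : 0 < r) (hδ : 0 < δ) (hδ1 : δ ≤ 1) (hD0 : 0 ≤ D) (hΩ : closedBall x₀ r ⊆ Ω)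
    (hint : ∫ y in closedBall x₀ r, ‖Df y - L‖ ^ p ≤ δ ^ p * volume.real (closedBall x₀ r))
    (hfst : ∀ y ∈ closedBall x₀ r, ∀ i, |(f y - f x₀ - L (y - x₀)) i| ≤ δ * r)
    {φ : EuclideanSpace ℝ (Fin k) → ℝ} (hφ : ContDiff ℝ (⊤ : ℕ∞) φ)
    (hs : tsupport φ ⊆ closedBall x₀ r) (hD : ∀ y, ‖fderiv ℝ φ y‖ ≤ D / r) (i j : Fin k) :
    |(∫ y, fderiv ℝ φ y (EuclideanSpace.single j (1 : ℝ)) *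
        alphaL n (f x₀) (Df y (EuclideanSpace.single i (1 : ℝ)))) -
      2 * symp n (L (EuclideanSpace.single j 1)) (L (EuclideanSpace.single i 1)) * ∫ y, φ y| ≤
      D * (4 * n) * (3 * ‖L‖ + 2) * δ * volume.real (closedBall x₀ r) := by
  have hcb := isCompact_closedBall x₀ r
  have hc : HasCompactSupport φ := hcb.of_isClosed_subset (isClosed_tsupport φ) hs
  set ei : EuclideanSpace ℝ (Fin k) := EuclideanSpace.single i (1 : ℝ)
  set ej : EuclideanSpace ℝ (Fin k) := EuclideanSpace.single j (1 : ℝ)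
  let m : EuclideanSpace ℝ (Fin k) →L[ℝ] ℝ :=
    (alphaL n (L ei) - EuclideanSpace.proj (tIdx n)).comp L
  have hm : ∀ v, m v = - (2 * symp n (L v) (L ei)) := by
    intro v
    simp only [m, ContinuousLinearMap.comp_apply, _root_.sub_apply, alphaL_apply,
      PiLp.proj_apply]
    rw [symp_swap n (L v)]
    ring
  have hd := hφ.continuous_fderiv_apply (by simp) |>.comp
    (continuous_id.prodMk (continuous_const (y := ej)))
  have e1 : 2 * symp n (L ej) (L ei) * ∫ y, φ y = ∫ y, fderiv ℝ φ y ej * m (y - x₀) := by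
    rw [hasWeakGrad_clm univ m x₀ φ hφ hc (subset_univ _) j, integral_mul_const, hm]
    ring
  have i1 : Integrable fun y => fderiv ℝ φ y ej * m (y - x₀) :=
    integrable_mul_of_continuousOn hc hd (by fun_prop) (support_fderiv_apply_subset φ _)
  have i2 : Integrable fun y => fderiv ℝ φ y ej * alphaL n (f x₀) (Df y ei) :=
    integrable_smul_of_integrableOn hcb hd
      (((alphaL n (f x₀)).comp (ContinuousLinearMap.apply ℝ (Heis n) ei)).integrable_comp
        (h.integrableOn hp1 hcb hΩ)) ((support_fderiv_apply_subset φ _).trans hs)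
  have hni : IntegrableOn (fun y => ‖Df y - L‖) (closedBall x₀ r) :=
    ((h.integrableOn hp1 hcb hΩ).sub (integrableOn_const measure_closedBall_lt_top.ne)).norm
  have hconst : ∀ a : ℝ, IntegrableOn (fun _ : EuclideanSpace ℝ (Fin k) => a) (closedBall x₀ r) :=
    fun a => integrableOn_const measure_closedBall_lt_top.ne
  rw [e1, ← integral_sub i2 i1, ← setIntegral_eq_integral_of_forall_compl_eq_zero
    (s := closedBall x₀ r)]
  · set a := D * (4 * n) * δ * ‖L‖
    set b := D * (4 * n) * (δ + ‖L‖)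
    have hb : 0 ≤ b := by positivity
    calc _ ≤ ∫ y in closedBall x₀ r, (a + b * ‖Df y - L‖) := by
          rw [← Real.norm_eq_abs]
          refine norm_integral_le_of_norm_le ((hconst a).add (hni.const_mul b)) ?_
          refine (ae_restrict_iff' measurableSet_closedBall).2 ?_
          filter_upwards [h.contact] with w hw hwc
          have h1 := abs_alphaL_add_symp_le (hw (hΩ hwc)) (hfst w hwc) hr.le hδ.le hwc ei
          have h2 : |fderiv ℝ φ w ej| ≤ D / r := by
            refine ((fderiv ℝ φ w).le_opNorm ej).trans ?_
            simpa [ej] using hD w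
          rw [← mul_sub, hm, sub_neg_eq_add, norm_mul, Real.norm_eq_abs, Real.norm_eq_abs]
          refine (mul_le_mul h2 h1 (abs_nonneg _) (by positivity)).trans (le_of_eq ?_)
          simp only [ei, PiLp.norm_single, norm_one, a, b]
          field_simp
      _ = a * volume.real (closedBall x₀ r) + b * ∫ y in closedBall x₀ r, ‖Df y - L‖ := by
          rw [integral_add (hconst a) (hni.const_mul b), setIntegral_const, integral_const_mul,
            smul_eq_mul, mul_comm a]
      _ ≤ a * volume.real (closedBall x₀ r) + b * (2 * δ * volume.real (closedBall x₀ r)) := by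
          gcongr
          exact h.setIntegral_norm_sub_le hp1 hδ hΩ hint
      _ = D * (4 * n) * (‖L‖ + 2 * (δ + ‖L‖)) * δ * volume.real (closedBall x₀ r) := by
          simp only [a, b]; ring
      _ ≤ D * (4 * n) * (3 * ‖L‖ + 2) * δ * volume.real (closedBall x₀ r) := by
          have : ‖L‖ + 2 * (δ + ‖L‖) ≤ 3 * ‖L‖ + 2 := by linarith
          gcongr
  · intro y hy
    have : fderiv ℝ φ y ej = 0 := by
      by_contra h0
      exact hy (hs (support_fderiv_apply_subset φ ej h0))
    simp [this]

lemma isotropic (h : IsContactSobolev n k p Ω f Df) (hp1 : 1 ≤ p) (hpk : (k : ℝ) < p)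
    (hL : IsLebesgueValue p Ω Df x₀ L) (v w : EuclideanSpace ℝ (Fin k)) :
    symp n (L v) (L w) = 0 := by
  have basis : ∀ i j : Fin k,
      symp n (L (EuclideanSpace.single i 1)) (L (EuclideanSpace.single j 1)) = 0 := by
    intro i j
    let ψ : ContDiffBump (0 : EuclideanSpace ℝ (Fin k)) := ⟨1 / 2, 1, by norm_num, by norm_num⟩
    have hψs : tsupport ψ = closedBall 0 1 := ψ.tsupport_eq
    have hψ : ContDiff ℝ (⊤ : ℕ∞) ψ := ψ.contDiff
    obtain ⟨D, hD⟩ := (hψ.continuous_fderiv (by simp)).norm.bddAbove_range_of_hasCompactSupport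
      (ψ.hasCompactSupport.fderiv ℝ).norm
    have hD : ∀ y, ‖fderiv ℝ ψ y‖ ≤ D := fun y => hD (mem_range_self y)
    have hD0 : 0 ≤ D := (norm_nonneg _).trans (hD 0)
    have hI : 0 < ∫ y, ψ y := ψ.integral_pos
    set I := ∫ y, ψ y
    set s := symp n (L (EuclideanSpace.single i 1)) (L (EuclideanSpace.single j 1)) with hs
    set V := volume.real (closedBall (0 : EuclideanSpace ℝ (Fin k)) 1)
    set K := D * (4 * n) * (3 * ‖L‖ + 2)
    have bound : ∀ δ : ℝ, 0 < δ → δ ≤ 1 → 4 * |s| * I ≤ 2 * (K * δ * V) := by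
      intro δ hδ hδ1
      obtain ⟨r, hr, hfst, hr0⟩ :=
        ((hL δ hδ).and ((h.first_order hp1 hpk hL hδ).and self_mem_nhdsWithin)).exists
      have hr0 : 0 < r := hr0
      set φ : EuclideanSpace ℝ (Fin k) → ℝ := fun y => ψ (r⁻¹ • (y - x₀))
      have hφ : ContDiff ℝ (⊤ : ℕ∞) φ := hψ.comp (by fun_prop)
      have hφs : tsupport φ ⊆ closedBall x₀ r := by
        refine closure_minimal (fun y hy => ?_) isClosed_closedBall
        have h1 : r⁻¹ • (y - x₀) ∈ closedBall (0 : EuclideanSpace ℝ (Fin k)) 1 :=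
          hψs ▸ subset_tsupport ψ hy
        rw [mem_closedBall_zero_iff, norm_smul, norm_inv, Real.norm_of_nonneg hr0.le,
          inv_mul_le_iff₀ hr0, mul_one] at h1
        rwa [mem_closedBall, dist_eq_norm]
      have hφD : ∀ y, ‖fderiv ℝ φ y‖ ≤ D / r := by
        intro y
        have h1 : HasFDerivAt (fun y : EuclideanSpace ℝ (Fin k) => r⁻¹ • (y - x₀))
            (r⁻¹ • ContinuousLinearMap.id ℝ _) y :=
          ((hasFDerivAt_id y).sub_const x₀).const_smul r⁻¹
        have h2 := ((hψ.differentiable (by simp)) (r⁻¹ • (y - x₀))).hasFDerivAt.comp y h1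
        rw [show fderiv ℝ φ y = _ from h2.fderiv, ContinuousLinearMap.comp_smul, norm_smul,
          ContinuousLinearMap.comp_id, norm_inv, Real.norm_of_nonneg hr0.le, div_eq_inv_mul]
        gcongr
        exact hD _
      have hφI : ∫ y, φ y = r ^ k * I := by
        simp only [φ]
        rw [integral_sub_right_eq_self (fun y => ψ (r⁻¹ • y)) x₀,
          Measure.integral_comp_inv_smul volume ψ r]
        simp [abs_of_pos hr0, I]
      have hV : volume.real (closedBall x₀ r) = r ^ k * V := by
        simp only [V, Measure.real]
        rw [Measure.addHaar_closedBall' _ _ hr0.le, ENNReal.toReal_mul,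
          ENNReal.toReal_ofReal (by positivity)]
        simp
      have hw := (h.hasWeakGrad (alphaL n (f x₀))).integral_fderiv_mul_comm hφ
        ((isCompact_closedBall x₀ r).of_isClosed_subset (isClosed_tsupport φ) hφs)
        (hφs.trans hr.1) i j
      have b1 := h.abs_integral_sub_le hp1 hr0 hδ hδ1 hD0 hr.1 hr.2 hfst hφ hφs hφD i j
      have b2 := h.abs_integral_sub_le hp1 hr0 hδ hδ1 hD0 hr.1 hr.2 hfst hφ hφs hφD j i
      simp only [ContinuousLinearMap.comp_apply] at hw
      rw [hw, symp_swap n (L (EuclideanSpace.single j 1)), ← hs] at b1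
      rw [← hs] at b2
      rw [hφI, hV] at b1 b2
      have b3 := (abs_sub _ _).trans (add_le_add b1 b2)
      have e : ∀ A : ℝ, A - 2 * -s * (r ^ k * I) - (A - 2 * s * (r ^ k * I)) =
          4 * s * I * r ^ k := fun A => by ring
      rw [e, abs_mul, abs_mul, abs_mul, abs_of_pos hI, abs_of_pos (pow_pos hr0 k),
        abs_of_pos (by norm_num : (0 : ℝ) < 4)] at b3
      have : 4 * |s| * I * r ^ k ≤ 2 * (K * δ * V) * r ^ k := by
        simp only [K]; linarith
      exact le_of_mul_le_mul_right this (pow_pos hr0 k)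
    by_contra hne
    have hs0 : 0 < 4 * |s| * I := by positivity
    have hlim : Tendsto (fun δ : ℝ => 2 * (K * δ * V)) (𝓝[>] 0) (𝓝 (2 * (K * 0 * V))) :=
      (Continuous.tendsto (by fun_prop) 0).mono_left nhdsWithin_le_nhds
    have := ge_of_tendsto hlim (b := 4 * |s| * I) (by
      filter_upwards [Ioc_mem_nhdsGT one_pos] with δ hδ using bound δ hδ.1 hδ.2)
    simp at this
    linarith
  have hv : ∀ v : EuclideanSpace ℝ (Fin k), v = ∑ i, v i • EuclideanSpace.single i (1 : ℝ) := by
    intro v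
    ext j
    simp [Pi.single_apply]
  have e : ∀ v w, symp n (L v) (L w) =
      ∑ i, ∑ j, w j * (v i * symp n (L (EuclideanSpace.single i 1))
        (L (EuclideanSpace.single j 1))) := by
    have hl : ∀ (s : Finset (Fin k)) (g : Fin k → Heis n) (w : Heis n),
        symp n (∑ i ∈ s, g i) w = ∑ i ∈ s, symp n (g i) w := fun s g w =>
      map_sum (AddMonoidHom.mk' (fun v => symp n v w) fun a b => symp_add_left n a b w) g s
    have hr : ∀ (s : Finset (Fin k)) (g : Fin k → Heis n) (w : Heis n),
        symp n w (∑ i ∈ s, g i) = ∑ i ∈ s, symp n w (g i) := fun s g w =>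
      map_sum (AddMonoidHom.mk' (fun v => symp n w v) fun a b => symp_add_right n w a b) g s
    intro v w
    conv_lhs => rw [hv v, hv w]
    simp only [map_sum, map_smul, hl, hr, symp_smul_left, symp_smul_right]
  rw [e]
  simp [basis]

end IsContactSobolev

lemma exists_xIdx_or_yIdx {n : ℕ} {i : Fin (2 * n + 1)} (hi : i ≠ tIdx n) :
    ∃ j : Fin n, i = xIdx n j ∨ i = yIdx n j := by
  have h1 : i.1 ≠ 2 * n := fun h => hi (Fin.ext h)
  have h2 := i.2
  refine ⟨⟨i.1 / 2, by omega⟩, ?_⟩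
  simp only [xIdx, yIdx, Fin.ext_iff]
  omega

lemma exists_horizontal_kernel {n k : ℕ} (hnk : n < k)
    (L : EuclideanSpace ℝ (Fin k) →L[ℝ] Heis n) (hiso : ∀ v w, symp n (L v) (L w) = 0) :
    ∃ v : EuclideanSpace ℝ (Fin k), v ≠ 0 ∧ ∀ i, i ≠ tIdx n → L v i = 0 := by
  let B : LinearMap.BilinForm ℝ ((Fin n → ℝ) × (Fin n → ℝ)) :=
    LinearMap.mk₂ ℝ (fun a b => ∑ j, (a.1 j * b.2 j - a.2 j * b.1 j))
      (fun a b c => by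
        rw [← Finset.sum_add_distrib]
        exact Finset.sum_congr rfl fun j _ => by simp; ring)
      (fun c a b => by
        rw [smul_eq_mul, Finset.mul_sum]
        exact Finset.sum_congr rfl fun j _ => by simp; ring)
      (fun a b c => by
        rw [← Finset.sum_add_distrib]
        exact Finset.sum_congr rfl fun j _ => by simp; ring)
      (fun c a b => by
        rw [smul_eq_mul, Finset.mul_sum]
        exact Finset.sum_congr rfl fun j _ => by simp; ring)
  let T : EuclideanSpace ℝ (Fin k) →ₗ[ℝ] (Fin n → ℝ) × (Fin n → ℝ) :=
    { toFun := fun v => (fun j => L v (xIdx n j), fun j => L v (yIdx n j))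
      map_add' := fun v w => by ext j <;> simp
      map_smul' := fun c v => by ext j <;> simp }
  have hBT : ∀ v w, B (T v) (T w) = 0 := hiso
  have hker : LinearMap.ker B = ⊥ := by
    refine (Submodule.eq_bot_iff _).2 fun a ha => ?_
    have ha : ∀ b, B a b = 0 := fun b => by rw [LinearMap.mem_ker.1 ha]; rfl
    ext j
    · simpa [B, Pi.single_apply] using ha (0, Pi.single j 1)
    · simpa [B, Pi.single_apply] using ha (Pi.single j 1, 0)
  have hW : LinearMap.range T ≤ B.orthogonal (LinearMap.range T) := by
    rintro _ ⟨w, rfl⟩ _ ⟨v, rfl⟩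
    exact hBT v w
  have h1 := LinearMap.BilinForm.finrank_add_finrank_orthogonal' (B := B) (LinearMap.range T)
  have h2 := Submodule.finrank_mono hW
  have h3 := LinearMap.finrank_range_add_finrank_ker T
  rw [hker, inf_bot_eq, finrank_bot, add_zero] at h1
  simp only [Module.finrank_prod, Module.finrank_fin_fun, finrank_euclideanSpace,
    Fintype.card_fin] at h1 h3
  have h4 : LinearMap.ker T ≠ ⊥ := fun h => by
    rw [h, finrank_bot] at h3
    omega
  obtain ⟨v, hv, hv0⟩ := Submodule.exists_mem_ne_zero_of_ne_bot h4
  refine ⟨v, hv0, fun i hi => ?_⟩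
  have hT : T v = 0 := hv
  obtain ⟨j, rfl | rfl⟩ := exists_xIdx_or_yIdx hi
  · exact congrFun (congrArg Prod.fst hT) j
  · exact congrFun (congrArg Prod.snd hT) j

lemma alphaL_sub_eq {n : ℕ} (q₀ q q' : Heis n) :
    alphaL n q' (q - q') = alphaL n q₀ (q - q₀) - alphaL n q₀ (q' - q₀) +
      2 * symp n (q' - q₀) (q - q₀) := by
  simp only [alphaL_apply, symp_sub_left, symp_sub_right, symp_self, PiLp.sub_apply]
  rw [symp_swap n q' q₀]
  ring

lemma abs_symp_le_of_approx {n : ℕ} {u u' w w' : Heis n} {b δ : ℝ} (hw : symp n w' w = 0)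
    (hb : ∀ i, |w i| ≤ b) (hb' : ∀ i, |w' i| ≤ b) (hu : ∀ i, |(u - w) i| ≤ δ)
    (hu' : ∀ i, |(u' - w') i| ≤ δ) : |symp n u' u| ≤ 2 * n * (2 * b + δ) * δ := by
  have e : symp n u' u = symp n w' (u - w) + symp n (u' - w') w + symp n (u' - w') (u - w) := by
    simp only [symp_sub_left, symp_sub_right]
    linarith
  have h1 := abs_symp_le n hb' hu
  have h2 := abs_symp_le n hu' hb
  have h3 := abs_symp_le n hu' hu
  rw [e]
  refine (abs_add_three _ _ _).trans ?_
  linarith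

lemma norm_le_sum_abs {k : ℕ} (v : EuclideanSpace ℝ (Fin k)) : ‖v‖ ≤ ∑ i, |v i| := by
  have hv : v = ∑ i, v i • EuclideanSpace.single i (1 : ℝ) := by
    ext j
    simp [Pi.single_apply]
  conv_lhs => rw [hv]
  refine (norm_sum_le _ _).trans (le_of_eq (Finset.sum_congr rfl fun i _ => ?_))
  simp [norm_smul]

lemma kContent_image_closedBall_le {n k : ℕ} (hk : k ≠ 0)
    {f : EuclideanSpace ℝ (Fin k) → Heis n} {x₀ v : EuclideanSpace ℝ (Fin k)}
    {L : EuclideanSpace ℝ (Fin k) →L[ℝ] Heis n} {i₀ : Fin k} {r : ℝ} {M : ℕ} (hr : 0 < r)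
    (hM : 0 < M) (hv : v i₀ = 1) (hLv : ∀ i, i ≠ tIdx n → L v i = 0)
    (hiso : ∀ v w, symp n (L v) (L w) = 0)
    (hfst : ∀ y ∈ closedBall x₀ r, ∀ i, |(f y - f x₀ - L (y - x₀)) i| ≤ 1 / (M : ℝ) ^ 2 * r)
    (hsnd : ∀ y ∈ closedBall x₀ r, |alphaL n (f x₀) (f y - f x₀)| ≤ 1 / (M : ℝ) ^ 2 * r ^ 2) :
    kContent n hk (f '' closedBall x₀ r) ≤ ENNReal.ofReal ((M + 1) ^ (k - 1) *
      ((2 * n + 1) * ((2 + 4 * n * (2 * ‖L‖ + 1) + 2 * k * (1 + ‖v‖) * ‖L‖ + 2) * (r / M))) ^ k) := by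
  have hM0 : (0 : ℝ) < M := by exact_mod_cast hM
  have hM1 : (1 : ℝ) ≤ M := by exact_mod_cast hM
  set B := 1 + ‖v‖ with hB
  have hB0 : 0 < B := by positivity
  set K := 2 + 4 * n * (2 * ‖L‖ + 1) + 2 * k * B * ‖L‖ + 2 with hK
  have hK0 : 0 < K := by positivity
  let w : EuclideanSpace ℝ (Fin k) → EuclideanSpace ℝ (Fin k) :=
    fun y => (y - x₀) - (y - x₀) i₀ • v
  have hw : ∀ y ∈ closedBall x₀ r, ∀ i, |w y i| ≤ B * r := by
    intro y hy i
    have hy' : ‖y - x₀‖ ≤ r := by simpa [dist_eq_norm] using hy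
    refine (abs_coord_le_norm _ i).trans ((norm_sub_le _ _).trans ?_)
    rw [norm_smul, Real.norm_eq_abs]
    have h1 := (abs_coord_le_norm (y - x₀) i₀).trans hy'
    have := mul_le_mul_of_nonneg_right h1 (norm_nonneg v)
    rw [hB]
    linarith
  have hwi₀ : ∀ y, w y i₀ = 0 := fun y => by simp [w, hv]
  let τ : EuclideanSpace ℝ (Fin k) → Fin k → ℝ := fun y i => (w y i + B * r) * (M / (2 * B * r))
  have hτ : ∀ y ∈ closedBall x₀ r, ∀ i, 0 ≤ τ y i ∧ τ y i ≤ M := by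
    intro y hy i
    have := abs_le.1 (hw y hy i)
    constructor
    · exact mul_nonneg (by linarith) (by positivity)
    · calc τ y i ≤ (B * r + B * r) * (M / (2 * B * r)) := by
            simp only [τ]; gcongr; exact this.2
        _ = M := by field_simp; ring
  let tube : ({i // i ≠ i₀} → Fin (M + 1)) → Set (EuclideanSpace ℝ (Fin k)) := fun s =>
    {y | y ∈ closedBall x₀ r ∧ ∀ i, ⌊τ y i.1⌋₊ = (s i).1}
  have hcover : f '' closedBall x₀ r ⊆ ⋃ s, f '' tube s := by
    rintro _ ⟨y, hy, rfl⟩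
    refine mem_iUnion.2 ⟨fun i => ⟨⌊τ y i.1⌋₊, ?_⟩, y, ⟨hy, fun i => rfl⟩, rfl⟩
    have := Nat.floor_le_of_le (hτ y hy i.1).2
    omega
  have htube : ∀ s, ∀ y ∈ tube s, ∀ y' ∈ tube s,
      dK n (f y) (f y') ≤ (2 * n + 1) * (K * (r / M)) := by
    rintro s y ⟨hy, hys⟩ y' ⟨hy', hys'⟩
    have hcoord : ∀ i, |(w y - w y') i| ≤ 2 * B * (r / M) := by
      intro i
      by_cases hi : i = i₀
      · subst hi
        simp only [PiLp.sub_apply, hwi₀, sub_self, abs_zero]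
        positivity
      · have h1 : ⌊τ y i⌋₊ = ⌊τ y' i⌋₊ := (hys ⟨i, hi⟩).trans (hys' ⟨i, hi⟩).symm
        have h2 : |τ y i - τ y' i| ≤ 1 := by
          have a1 := Nat.floor_le (hτ y hy i).1
          have a2 := Nat.lt_floor_add_one (τ y i)
          have a3 := Nat.floor_le (hτ y' hy' i).1
          have a4 := Nat.lt_floor_add_one (τ y' i)
          rw [h1] at a1 a2
          rw [abs_le]
          constructor <;> linarith
        have h3 : (w y - w y') i = (τ y i - τ y' i) * (2 * B * (r / M)) := by
          simp only [τ, PiLp.sub_apply]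
          field_simp
          ring
        rw [h3, abs_mul, abs_of_pos (by positivity : 0 < 2 * B * (r / M))]
        exact mul_le_of_le_one_left (by positivity) h2
    have hnorm : ‖w y - w y'‖ ≤ 2 * k * B * (r / M) := by
      refine (norm_le_sum_abs _).trans ((Finset.sum_le_sum fun i _ => hcoord i).trans ?_)
      simp only [Finset.sum_const, Finset.card_univ, Fintype.card_fin, nsmul_eq_mul]
      exact le_of_eq (by ring)
    have hδ : 1 / (M : ℝ) ^ 2 * r ≤ r / M := by
      rw [div_mul_eq_mul_div, one_mul]
      gcongr
      nlinarith
    refine dK_le n (by positivity) (fun i hi => ?_) ?_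
    · have e : (f y - f y') i = (f y - f x₀ - L (y - x₀)) i - (f y' - f x₀ - L (y' - x₀)) i +
          L (w y - w y') i := by
        simp only [w, map_sub, map_smul, PiLp.sub_apply, PiLp.smul_apply, hLv i hi, smul_zero]
        ring
      have h1 := (abs_coord_le_norm (L (w y - w y')) i).trans (L.le_opNorm _)
      have h2 := mul_le_mul_of_nonneg_left hnorm (norm_nonneg L)
      have h3 := hfst y hy i
      have h4 := hfst y' hy' i
      rw [e]
      refine (abs_add_le _ _).trans ((add_le_add_left (abs_sub _ _) _).trans ?_)
      have h5 : 0 ≤ (2 + 4 * n * (2 * ‖L‖ + 1)) * (r / M) := by positivity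
      rw [hK]
      linarith
    · have hLb : ∀ y ∈ closedBall x₀ r, ∀ i, |L (y - x₀) i| ≤ ‖L‖ * r := fun y hy i =>
        (abs_coord_le_norm _ i).trans ((L.le_opNorm _).trans
          (by gcongr; simpa [dist_eq_norm] using hy))
      have h1 := abs_symp_le_of_approx (hiso (y' - x₀) (y - x₀)) (hLb y hy) (hLb y' hy')
        (hfst y hy) (hfst y' hy')
      have h2 := hsnd y hy
      have h3 := hsnd y' hy'
      have hMr : 1 / (M : ℝ) ^ 2 * r ^ 2 = (r / M) ^ 2 := by ring
      have h4 : 2 * n * (2 * (‖L‖ * r) + 1 / (M : ℝ) ^ 2 * r) * (1 / (M : ℝ) ^ 2 * r) ≤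
          2 * n * (2 * ‖L‖ + 1) * (r / M) ^ 2 := by
        have : 1 / (M : ℝ) ^ 2 * r ≤ 1 * r := by
          gcongr
          rw [div_le_one (by positivity)]
          nlinarith
        calc _ ≤ 2 * n * (2 * (‖L‖ * r) + 1 * r) * (1 / (M : ℝ) ^ 2 * r) := by gcongr
          _ = _ := by ring
      rw [hMr] at h2 h3
      rw [alphaL_sub_eq (f x₀)]
      have h5 : |alphaL n (f x₀) (f y - f x₀) - alphaL n (f x₀) (f y' - f x₀) +
          2 * symp n (f y' - f x₀) (f y - f x₀)| ≤
          (2 + 4 * n * (2 * ‖L‖ + 1)) * (r / M) ^ 2 := by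
        refine (abs_add_le _ _).trans ((add_le_add_left (abs_sub _ _) _).trans ?_)
        rw [abs_mul, abs_two]
        linarith
      refine h5.trans ?_
      have h6 : (2 : ℝ) + 4 * n * (2 * ‖L‖ + 1) ≤ K := by
        have : 0 ≤ 2 * k * B * ‖L‖ + 2 := by positivity
        rw [hK]; linarith
      have h7 : 1 ≤ K := by
        have : 0 ≤ 4 * n * (2 * ‖L‖ + 1) := by positivity
        linarith
      have h8 : (2 : ℝ) + 4 * n * (2 * ‖L‖ + 1) ≤ K ^ 2 := by nlinarith
      calc _ ≤ K ^ 2 * (r / M) ^ 2 := by gcongr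
        _ = _ := by ring
  have hcard : Fintype.card ({i // i ≠ i₀} → Fin (M + 1)) = (M + 1) ^ (k - 1) := by
    simp [Fintype.card_subtype_compl]
  calc kContent n hk (f '' closedBall x₀ r) ≤ kContent n hk (⋃ s, f '' tube s) :=
        measure_mono hcover
    _ ≤ ∑ s, kContent n hk (f '' tube s) := measure_iUnion_fintype_le _ _
    _ ≤ ∑ _s : {i // i ≠ i₀} → Fin (M + 1),
          ENNReal.ofReal ((2 * n + 1) * (K * (r / M))) ^ k := by
        refine Finset.sum_le_sum fun s _ => (kContent_le n hk _).trans ?_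
        gcongr
        refine kDiam_le n ?_
        rintro _ ⟨y, hy, rfl⟩ _ ⟨y', hy', rfl⟩
        exact htube s y hy y' hy'
    _ = _ := by
        rw [Finset.sum_const, Finset.card_univ, hcard, nsmul_eq_mul,
          ← ENNReal.ofReal_natCast, ← ENNReal.ofReal_pow (by positivity),
          ← ENNReal.ofReal_mul (by positivity)]
        push_cast
        rfl

namespace IsContactSobolev

variable {n k : ℕ} {p : ℝ} {Ω : Set (EuclideanSpace ℝ (Fin k))}
  {f : EuclideanSpace ℝ (Fin k) → Heis n}
  {Df : EuclideanSpace ℝ (Fin k) → (EuclideanSpace ℝ (Fin k) →L[ℝ] Heis n)}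
  {x₀ : EuclideanSpace ℝ (Fin k)} {L : EuclideanSpace ℝ (Fin k) →L[ℝ] Heis n}

lemma eventually_kContent_image_le (h : IsContactSobolev n k p Ω f Df) (hnk : n < k)
    (hk : k ≠ 0) (hp1 : 1 ≤ p) (hpk : (k : ℝ) < p) (hL : IsLebesgueValue p Ω Df x₀ L) {ε : ℝ}
    (hε : 0 < ε) :
    ∀ᶠ r in 𝓝[>] (0 : ℝ),
      kContent n hk (f '' closedBall x₀ r) ≤ ENNReal.ofReal ε * volume (closedBall x₀ r) := by
  have hiso := h.isotropic hp1 hpk hL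
  obtain ⟨v', hv'0, hv'⟩ := exists_horizontal_kernel hnk L hiso
  obtain ⟨i₀, hi₀⟩ : ∃ i, v' i ≠ 0 := by
    by_contra! hc
    exact hv'0 (by ext i; simpa using hc i)
  set v := (v' i₀)⁻¹ • v'
  have hv : v i₀ = 1 := by simp [v, hi₀]
  have hLv : ∀ i, i ≠ tIdx n → L v i = 0 := fun i hi => by simp [v, hv' i hi]
  set K : ℝ := 2 + 4 * n * (2 * ‖L‖ + 1) + 2 * k * (1 + ‖v‖) * ‖L‖ + 2
  have hK0 : 0 < K := by positivity
  set V := volume.real (closedBall (0 : EuclideanSpace ℝ (Fin k)) 1)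
  have hV0 : 0 < V :=
    ENNReal.toReal_pos (measure_closedBall_pos _ _ one_pos).ne' measure_closedBall_lt_top.ne
  set Q := 2 ^ (k - 1) * ((2 * n + 1) * K) ^ k
  have hQ0 : 0 < Q := by positivity
  obtain ⟨M, hM⟩ := exists_nat_gt (max 1 (Q / (ε * V)))
  have hM1 : (1 : ℝ) < M := (le_max_left _ _).trans_lt hM
  have hM0 : 0 < M := by exact_mod_cast one_pos.trans hM1
  have hMQ : Q / M ≤ ε * V := by
    have := ((le_max_right _ _).trans_lt hM).le
    rw [div_le_iff₀ (by positivity)] at this ⊢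
    linarith
  filter_upwards [h.first_order hp1 hpk hL (ε := 1 / (M : ℝ) ^ 2) (by positivity),
    h.second_order hp1 hpk hL hiso (ε := 1 / (M : ℝ) ^ 2) (by positivity), self_mem_nhdsWithin]
    with r hfst hsnd hr
  have hr : 0 < r := hr
  refine (kContent_image_closedBall_le hk hr hM0 hv hLv hiso hfst hsnd).trans ?_
  have hvol : volume (closedBall x₀ r) = ENNReal.ofReal (r ^ k * V) := by
    rw [Measure.addHaar_closedBall' _ _ hr.le, ENNReal.ofReal_mul (by positivity),
      ofReal_measureReal measure_closedBall_lt_top.ne]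
    simp
  rw [hvol, ← ENNReal.ofReal_mul hε.le]
  refine ENNReal.ofReal_le_ofReal ?_
  calc ((M : ℝ) + 1) ^ (k - 1) * ((2 * n + 1) * (K * (r / M))) ^ k
      ≤ (2 * M) ^ (k - 1) * ((2 * n + 1) * (K * (r / M))) ^ k := by gcongr; linarith
    _ = Q / M * r ^ k := by
        obtain ⟨l, rfl⟩ := Nat.exists_eq_succ_of_ne_zero hk
        simp only [Q, Nat.succ_eq_add_one, Nat.add_sub_cancel, mul_pow, div_pow]
        field_simp
        ring
    _ ≤ ε * V * r ^ k := by gcongr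
    _ = ε * (r ^ k * V) := by ring

end IsContactSobolev

lemma outerMeasure_le_mul_add {k : ℕ} (θ : OuterMeasure (EuclideanSpace ℝ (Fin k)))
    (ν : Measure (EuclideanSpace ℝ (Fin k))) [SFinite ν] [ν.OuterRegular] {c ε : ℝ≥0∞}
    (hε : ε ≠ 0) (s : Set (EuclideanSpace ℝ (Fin k)))
    (hs : ∀ x ∈ s, ∀ᶠ r in 𝓝[>] (0 : ℝ), θ (closedBall x r) ≤ c * ν (closedBall x r)) :
    θ s ≤ c * (ν s + ε) := by
  obtain ⟨t, r, htc, -, htr, hst, hsum⟩ := Besicovitch.exists_closedBall_covering_tsum_measure_le ν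
    hε (fun x => {r | θ (closedBall x r) ≤ c * ν (closedBall x r)}) s (fun x hx δ hδ => by
      obtain ⟨r, hr⟩ := ((hs x hx).and (Ioo_mem_nhdsGT hδ)).exists
      exact ⟨r, hr⟩)
  calc θ s ≤ θ (⋃ x ∈ t, closedBall x (r x)) := measure_mono hst
    _ ≤ ∑' x : t, θ (closedBall x (r x)) := measure_biUnion_le θ htc _
    _ ≤ ∑' x : t, c * ν (closedBall x (r x)) := ENNReal.tsum_le_tsum fun x => htr x x.2
    _ = c * ∑' x : t, ν (closedBall x (r x)) := ENNReal.tsum_mul_left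
    _ ≤ c * (ν s + ε) := by gcongr

lemma ENNReal.eq_zero_of_forall_le_mul {a b : ℝ≥0∞} (hb : b ≠ ∞)
    (h : ∀ ε : ℝ, 0 < ε → a ≤ ENNReal.ofReal ε * b) : a = 0 := by
  have h1 : Tendsto (fun ε : ℝ => ENNReal.ofReal ε * b) (𝓝[>] 0) (𝓝 0) := by
    have h2 : Tendsto (fun ε : ℝ => ENNReal.ofReal ε) (𝓝[>] 0) (𝓝 0) := by
      simpa using ENNReal.continuous_ofReal.continuousWithinAt (s := Ioi 0) (x := 0) |>.tendsto
    simpa using ENNReal.Tendsto.mul_const h2 (Or.inr hb)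
  exact le_antisymm (ge_of_tendsto h1 (by
    filter_upwards [self_mem_nhdsWithin] with ε hε using h ε hε)) bot_le

namespace IsContactSobolev

variable {n k : ℕ} {p : ℝ} {Ω : Set (EuclideanSpace ℝ (Fin k))}
  {f : EuclideanSpace ℝ (Fin k) → Heis n}
  {Df : EuclideanSpace ℝ (Fin k) → (EuclideanSpace ℝ (Fin k) →L[ℝ] Heis n)}

lemma exists_kContent_image_le (h : IsContactSobolev n k p Ω f Df) (hk : k ≠ 0) (hp1 : 1 ≤ p)
    (hpk : (k : ℝ) < p) : ∃ C : ℝ≥0, ∀ c r, 0 < r → closedBall c r ⊆ Ω →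
      kContent n hk (f '' closedBall c r) ≤ C * (volume (closedBall c r) +
        ∫⁻ y in closedBall c r, ENNReal.ofReal (‖Df y‖ ^ p)) := by
  obtain ⟨C, hC, H⟩ := dK_le_of_setIntegral_le n k p hp1 hpk
  set V₁ := volume.real (closedBall (0 : EuclideanSpace ℝ (Fin k)) 1)
  have hV₁ : 0 < V₁ :=
    ENNReal.toReal_pos (measure_closedBall_pos _ _ one_pos).ne' measure_closedBall_lt_top.ne
  refine ⟨(C ^ k / V₁).toNNReal, fun c r hr hΩ => ?_⟩
  set V := volume.real (closedBall c r)
  have hV : V = r ^ k * V₁ := by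
    simp only [V, V₁, Measure.real]
    rw [Measure.addHaar_closedBall' _ _ hr.le, ENNReal.toReal_mul,
      ENNReal.toReal_ofReal (by positivity)]
    simp
  have hV0 : 0 < V := by rw [hV]; positivity
  set I := ∫ y in closedBall c r, ‖Df y‖ ^ p with hI
  have hI0 : 0 ≤ I := integral_nonneg fun y => by positivity
  have hint := h.integrableOn_rpow _ (isCompact_closedBall c r) hΩ
  rw [← ofReal_integral_eq_lintegral_ofReal hint (ae_of_all _ fun y => by positivity),
    ← ofReal_measureReal measure_closedBall_lt_top.ne, ← ENNReal.ofReal_add hV0.le hI0,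
    ← ENNReal.ofReal, ← ENNReal.ofReal_mul (by positivity)]
  set T := ((V + I) / V) ^ (1 / p)
  have hq : 1 ≤ (V + I) / V := by rw [one_le_div hV0]; linarith
  have hT1 : 1 ≤ T := Real.one_le_rpow hq (by positivity)
  have hTp : T ^ p = (V + I) / V := by
    rw [← Real.rpow_mul (by positivity), one_div_mul_cancel (by positivity), Real.rpow_one]
  have hTk : T ^ k ≤ (V + I) / V := by
    rw [← hTp, ← Real.rpow_natCast]
    exact Real.rpow_le_rpow_of_exponent_le hT1 hpk.le
  have hd := H Ω f Df h c r T hr (by positivity) hΩ (by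
    rw [hTp, div_mul_cancel₀ _ hV0.ne']
    linarith)
  calc kContent n hk (f '' closedBall c r) ≤ kDiam n (f '' closedBall c r) ^ k := kContent_le n hk _
    _ ≤ ENNReal.ofReal (C * r * T) ^ k := by
        gcongr
        refine kDiam_le n ?_
        rintro _ ⟨x, hx, rfl⟩ _ ⟨y, hy, rfl⟩
        exact hd x hx y hy
    _ = ENNReal.ofReal ((C * r) ^ k * T ^ k) := by
        rw [← ENNReal.ofReal_pow (by positivity), mul_pow]
    _ ≤ ENNReal.ofReal ((C * r) ^ k * ((V + I) / V)) := by gcongr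
    _ = ENNReal.ofReal (C ^ k / V₁ * (V + I)) := by
        congr 1
        rw [mul_pow, mul_div_assoc', mul_div_right_comm]
        congr 1
        rw [hV]
        field_simp

lemma kContent_image_eq_zero (h : IsContactSobolev n k p Ω f Df) (hnk : n < k) (hk : k ≠ 0)
    (hp1 : 1 ≤ p) (hpk : (k : ℝ) < p) : kContent n hk (f '' Ω) = 0 := by
  set θ : OuterMeasure (EuclideanSpace ℝ (Fin k)) := OuterMeasure.comap f (kContent n hk)
  suffices θ Ω = 0 by simpa [θ] using this
  refine measure_null_of_locally_null _ fun x hx => ?_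
  obtain ⟨R, hR, hRΩ⟩ := nhds_basis_closedBall.mem_iff.1 (h.isOpen.mem_nhds hx)
  refine ⟨ball x R, mem_nhdsWithin_of_mem_nhds (ball_mem_nhds x hR), ?_⟩
  set good := {y | y ∈ ball x R ∧ IsLebesgueValue p Ω Df y (Df y)}
  set bad := {y | y ∈ ball x R ∧ ¬ IsLebesgueValue p Ω Df y (Df y)}
  have hgood : θ good = 0 := by
    have hfin : volume good + 1 ≠ ∞ := by
      refine ENNReal.add_ne_top.2 ⟨?_, ENNReal.one_ne_top⟩
      exact ((measure_mono fun y hy => hy.1).trans_lt (measure_ball_lt_top (x := x) (r := R))).ne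
    refine ENNReal.eq_zero_of_forall_le_mul hfin fun ε hε => ?_
    exact outerMeasure_le_mul_add θ volume one_ne_zero good fun y hy =>
      h.eventually_kContent_image_le hnk hk hp1 hpk hy.2 hε
  have hbad : θ bad = 0 := by
    obtain ⟨C, hC⟩ := h.exists_kContent_image_le hk hp1 hpk
    have hint := h.integrableOn_rpow _ (isCompact_closedBall x R) hRΩ
    have : IsFiniteMeasure ((volume.restrict (closedBall x R)).withDensity
      fun y => ENNReal.ofReal (‖Df y‖ ^ p)) := isFiniteMeasure_withDensity_ofReal hint.2
    have : IsFiniteMeasure (volume.restrict (closedBall x R)) :=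
      ⟨by simpa using measure_closedBall_lt_top⟩
    set ν := volume.restrict (closedBall x R) + (volume.restrict (closedBall x R)).withDensity
      fun y => ENNReal.ofReal (‖Df y‖ ^ p)
    have hvol : volume.restrict (closedBall x R) bad = 0 := by
      refine Measure.restrict_le_self.absolutelyContinuous ?_
      refine measure_mono_null (fun y hy => ?_) (h.ae_lebesgue_point hp1)
      exact fun hc => hy.2 (hc (hRΩ (ball_subset_closedBall hy.1)))
    have hν : ν bad = 0 := by
      simp only [ν, Measure.add_apply, hvol, withDensity_absolutelyContinuous _ _ hvol, add_zero]
    refine ENNReal.eq_zero_of_forall_le_mul (b := C) ENNReal.coe_ne_top fun ε hε => ?_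
    have := outerMeasure_le_mul_add θ ν (c := C) (ε := ENNReal.ofReal ε) (by simpa using hε) bad ?_
    · rwa [hν, zero_add, mul_comm] at this
    · intro y hy
      obtain ⟨δ, hδ, hδR⟩ := nhds_basis_closedBall.mem_iff.1 (isOpen_ball.mem_nhds hy.1)
      filter_upwards [Ioo_mem_nhdsGT hδ] with r hr
      have hsub : closedBall y r ⊆ closedBall x R :=
        (closedBall_subset_closedBall hr.2.le).trans (hδR.trans ball_subset_closedBall)
      refine (hC y r hr.1 (hsub.trans hRΩ)).trans_eq ?_
      simp only [ν, Measure.add_apply]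
      rw [withDensity_apply _ measurableSet_closedBall, Measure.restrict_restrict
        measurableSet_closedBall, Measure.restrict_apply measurableSet_closedBall,
        inter_eq_self_of_subset_left hsub]
  refine measure_mono_null (fun y hy => ?_) (measure_union_null hgood hbad)
  by_cases hL : IsLebesgueValue p Ω Df y (Df y)
  exacts [Or.inl ⟨hy, hL⟩, Or.inr ⟨hy, hL⟩]

end IsContactSobolev

lemma aestronglyMeasurable_restrict_of_locally {X F : Type*} [TopologicalSpace X]
    [SecondCountableTopology X] [MeasurableSpace X] [TopologicalSpace F]
    [TopologicalSpace.PseudoMetrizableSpace F] {μ : Measure X} {g : X → F} {s : Set X}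
    (h : ∀ x ∈ s, ∃ U ∈ 𝓝 x, AEStronglyMeasurable g (μ.restrict U)) :
    AEStronglyMeasurable g (μ.restrict s) := by
  choose! U hU hg using h
  obtain ⟨t, hts, htc, hst⟩ := TopologicalSpace.countable_cover_nhdsWithin
    (f := U) (s := s) (fun x hx => mem_nhdsWithin_of_mem_nhds (hU x hx))
  have := htc.to_subtype
  rw [biUnion_eq_iUnion] at hst
  exact (aestronglyMeasurable_iUnion_iff.2 fun x : t => hg x (hts x.2)).mono_measure
    (Measure.restrict_mono hst le_rfl)

/-- Integration by parts against a nonmeasurable function forces the partial derivative to vanish,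
since integrals of nonmeasurable functions are zero by convention. -/
lemma setIntegral_fderiv_smul_eq_zero {k : ℕ} {F : Type*} [NormedAddCommGroup F] [NormedSpace ℝ F]
    {Ω : Set (EuclideanSpace ℝ (Fin k))} (hΩ : IsOpen Ω)
    {f g : EuclideanSpace ℝ (Fin k) → F} (hf : ContinuousOn f Ω) (v : EuclideanSpace ℝ (Fin k))
    (hw : ∀ φ : EuclideanSpace ℝ (Fin k) → ℝ, ContDiff ℝ (⊤ : ℕ∞) φ → HasCompactSupport φ →
      tsupport φ ⊆ Ω → ∫ x in Ω, fderiv ℝ φ x v • f x = - ∫ x in Ω, φ x • g x)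
    (hg : ¬ AEStronglyMeasurable g (volume.restrict Ω))
    {φ : EuclideanSpace ℝ (Fin k) → ℝ} (hφ : ContDiff ℝ (⊤ : ℕ∞) φ) (hc : HasCompactSupport φ)
    (hs : tsupport φ ⊆ Ω) : ∫ x in Ω, fderiv ℝ φ x v • f x = 0 := by
  obtain ⟨x₀, hx₀, hx₀g⟩ : ∃ x ∈ Ω, ∀ U ∈ 𝓝 x, ¬ AEStronglyMeasurable g (volume.restrict U) := by
    by_contra! h
    exact hg (aestronglyMeasurable_restrict_of_locally h)
  have key : ∀ φ : EuclideanSpace ℝ (Fin k) → ℝ, ContDiff ℝ (⊤ : ℕ∞) φ → HasCompactSupport φ →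
      tsupport φ ⊆ Ω → φ x₀ ≠ 0 → ∫ x in Ω, fderiv ℝ φ x v • f x = 0 := by
    intro φ hφ hc hs h0
    rw [hw φ hφ hc hs, integral_undef, neg_zero]
    intro hi
    have hopen : IsOpen (Function.support φ) := hφ.continuous.isOpen_support
    refine hx₀g _ (hopen.mem_nhds h0) ?_
    have h1 : AEStronglyMeasurable (fun x => (φ x)⁻¹ • φ x • g x)
        (volume.restrict (Function.support φ)) :=
      hφ.continuous.measurable.inv.aestronglyMeasurable.smul
        (hi.aestronglyMeasurable.mono_measure
          (Measure.restrict_mono ((subset_tsupport φ).trans hs) le_rfl))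
    refine h1.congr ?_
    filter_upwards [ae_restrict_mem hopen.measurableSet] with x hx
    exact inv_smul_smul₀ hx _
  by_cases h0 : φ x₀ = 0
  swap
  · exact key φ hφ hc hs h0
  obtain ⟨R, hR, hRΩ⟩ := nhds_basis_closedBall.mem_iff.1 (hΩ.mem_nhds hx₀)
  let ψ : ContDiffBump x₀ := ⟨R / 2, R, by positivity, by linarith⟩
  have hψs : tsupport ψ ⊆ Ω := by rw [ψ.tsupport_eq]; exact hRΩ
  have hψ0 : ψ x₀ = 1 := ψ.one_of_mem_closedBall (mem_closedBall_self (by positivity))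
  have hint : ∀ φ : EuclideanSpace ℝ (Fin k) → ℝ, ContDiff ℝ (⊤ : ℕ∞) φ → HasCompactSupport φ →
      tsupport φ ⊆ Ω → IntegrableOn (fun x => fderiv ℝ φ x v • f x) Ω := fun φ hφ hc hs =>
    (integrable_smul_of_integrableOn hc
      ((hφ.continuous_fderiv (by simp)).clm_apply continuous_const)
      ((hf.mono hs).integrableOn_compact hc) (support_fderiv_apply_subset φ v)).integrableOn
  have h1 := key ψ ψ.contDiff ψ.hasCompactSupport hψs (by simp [hψ0])
  have h2 := key (φ + ψ) (hφ.add ψ.contDiff) (hc.add ψ.hasCompactSupport)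
    ((tsupport_add φ ψ).trans (union_subset hs hψs)) (by simp [hψ0, h0])
  rw [← add_zero (∫ x in Ω, fderiv ℝ φ x v • f x), ← h1,
    ← integral_add (hint φ hφ hc hs) (hint ψ ψ.contDiff ψ.hasCompactSupport hψs), h1]
  refine Eq.trans (integral_congr_ae (ae_of_all _ fun x => ?_)) h2
  beta_reduce
  rw [fderiv_add (hφ.differentiable (by simp) x) (ψ.contDiff.differentiable (n := 1) (by simp) x),
    add_apply, add_smul]

lemma exists_isContactSobolev {n k : ℕ} {p : ℝ} (hp : 1 ≤ p)
    {Ω : Set (EuclideanSpace ℝ (Fin k))} (hΩ : IsOpen Ω)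
    {f : EuclideanSpace ℝ (Fin k) → Heis n} (hfc : ContinuousOn f Ω)
    {Df : EuclideanSpace ℝ (Fin k) → (EuclideanSpace ℝ (Fin k) →L[ℝ] Heis n)}
    (hweak : IsWeakFDerivOn Ω f Df)
    (hDfp : ∀ C : Set (EuclideanSpace ℝ (Fin k)), IsCompact C → C ⊆ Ω →
      IntegrableOn (fun x => ‖Df x‖ ^ p) C)
    (hcontact : ∀ᵐ x, x ∈ Ω → ∀ v, Df x v ∈ kerAlpha n (f x)) :
    ∃ G, IsContactSobolev n k p Ω f G := by
  classical
  let e : Fin k → EuclideanSpace ℝ (Fin k) := fun i => EuclideanSpace.single i (1 : ℝ)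
  let S : Finset (Fin k) :=
    {i | AEStronglyMeasurable (fun x => Df x (e i)) (volume.restrict Ω)}
  let P : EuclideanSpace ℝ (Fin k) →L[ℝ] EuclideanSpace ℝ (Fin k) :=
    ∑ i ∈ S, (EuclideanSpace.proj (𝕜 := ℝ) i).smulRight (e i)
  have hP : ∀ i, P (e i) = if i ∈ S then e i else 0 := by
    intro i
    simp [P, e]
  have hmeas : AEStronglyMeasurable (fun x => (Df x).comp P) (volume.restrict Ω) := by
    have : (fun x => (Df x).comp P) = fun x => ∑ i ∈ S,
        ContinuousLinearMap.smulRightL ℝ _ _ (EuclideanSpace.proj (𝕜 := ℝ) i) (Df x (e i)) := by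
      ext1 x
      ext1 v
      simp [P]
    rw [this]
    refine Finset.aestronglyMeasurable_fun_sum _ fun i hi => ?_
    exact (ContinuousLinearMap.continuous _).comp_aestronglyMeasurable (Finset.mem_filter.1 hi).2
  have hint : ∀ C : Set (EuclideanSpace ℝ (Fin k)), IsCompact C → C ⊆ Ω →
      IntegrableOn (fun x => ‖(Df x).comp P‖ ^ p) C := by
    intro C hC hCΩ
    refine ((hDfp C hC hCΩ).mul_const (‖P‖ ^ p)).mono' ?_ (ae_of_all _ fun x => ?_)
    · exact ((hmeas.mono_measure (Measure.restrict_mono hCΩ le_rfl)).norm.aemeasurable.pow_const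
        p).aestronglyMeasurable
    · rw [Real.norm_of_nonneg (by positivity), ← Real.mul_rpow (by positivity) (by positivity)]
      exact Real.rpow_le_rpow (by positivity) (ContinuousLinearMap.opNorm_comp_le _ _)
        (by positivity)
  refine ⟨fun x => (Df x).comp P, hΩ, hfc, hmeas, fun ℓ φ hφ hc hs i => ?_, hint, ?_⟩
  swap
  · filter_upwards [hcontact] with x hx hxΩ v using hx hxΩ (P v)
  have hDi : IntegrableOn (fun x => (Df x).comp P) (tsupport φ) := by
    have hm := hmeas.mono_measure (Measure.restrict_mono hs le_rfl)
    have : IsFiniteMeasure (volume.restrict (tsupport φ)) :=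
      ⟨by simpa using IsCompact.measure_lt_top hc⟩
    exact ((memLp_ofReal_iff (by linarith) hm).1 (hint _ hc hs)).integrable
      (by simpa using hp)
  have hR : Integrable fun x => φ x • Df x (P (e i)) :=
    integrable_smul_of_integrableOn hc hφ.continuous (hDi.apply_continuousLinearMap (e i))
      (subset_tsupport φ)
  have hL : Integrable fun x => fderiv ℝ φ x (e i) • f x :=
    integrable_smul_of_integrableOn hc
      ((hφ.continuous_fderiv (by simp)).clm_apply continuous_const)
      ((hfc.mono hs).integrableOn_compact hc) (support_fderiv_apply_subset φ _)
  have main : ∫ x in Ω, fderiv ℝ φ x (e i) • f x = - ∫ x in Ω, φ x • Df x (P (e i)) := by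
    rw [hP]
    split_ifs with hi
    · exact hweak φ hφ hc hs i
    · simpa using setIntegral_fderiv_smul_eq_zero hΩ hfc (e i)
        (fun φ hφ hc hs => hweak φ hφ hc hs i) (by simpa [S] using hi) hφ hc hs
  rw [setIntegral_eq_integral_of_forall_compl_eq_zero fun x hx => ?_,
    setIntegral_eq_integral_of_forall_compl_eq_zero fun x hx => ?_] at main
  · have := congrArg ℓ main
    rw [map_neg, ← ℓ.integral_comp_comm hL, ← ℓ.integral_comp_comm hR] at this
    simpa using this
  · have : φ x = 0 := image_eq_zero_of_notMem_tsupport fun h => hx (hs h)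
    simp [this]
  · have : fderiv ℝ φ x (e i) = 0 := by
      by_contra h
      exact hx (hs (support_fderiv_apply_subset φ (e i) h))
    simp [this]

end Auxiliary

/-- If `k > n ≥ 1`, `p > k`, `Ω ⊆ ℝ^k` is open and
`f ∈ W^{1,p}_loc(Ω; ℝ^{2n+1})` is continuous and satisfies the weak contact equation,
then `f(Ω)` is `ℋ^k_{d_K}`-null. -/
theorem image_null_of_weak_contact_supercritical (n k : ℕ) (hn : 0 < n) (hk : n < k)
    (p : ℝ) (hp : (k : ℝ) < p)
    (Ω : Set (EuclideanSpace ℝ (Fin k))) (hΩ : IsOpen Ω)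
    (f : EuclideanSpace ℝ (Fin k) → Heis n)
    (hfc : ContinuousOn f Ω)
    (hf : LocallyIntegrableOn f Ω)
    (Df : EuclideanSpace ℝ (Fin k) → (EuclideanSpace ℝ (Fin k) →L[ℝ] Heis n))
    (hweak : IsWeakFDerivOn Ω f Df)
    (hDfp : ∀ C : Set (EuclideanSpace ℝ (Fin k)), IsCompact C → C ⊆ Ω →
      IntegrableOn (fun x => ‖Df x‖ ^ p) C)
    (hcontact : ∀ᵐ x, x ∈ Ω → ∀ v, Df x v ∈ kerAlpha n (f x)) :
    IsHausdorffNullK n k (f '' Ω) := by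
  have h1k : (1 : ℝ) ≤ k := by exact_mod_cast (Nat.zero_le n).trans_lt hk
  have hp1 : 1 ≤ p := h1k.trans hp.le
  obtain ⟨G, hG⟩ := exists_isContactSobolev hp1 hΩ hfc hweak hDfp hcontact
  exact isHausdorffNullK_of_kContent_eq_zero n (by omega)
    (hG.kContent_image_eq_zero hk (by omega) hp1 hp)
end

section
/- Let k > n be positive integers and let Ω ⊆ ℝ^k be a nonempty open set. Suppose f : Ω → ℝ^{2n+1} is locally Lipschitz with respect to the Euclidean metrics, and suppose there exists a continuous non-decreasing function β : [0,∞) → [0,∞) with β(0) = 0 such that d_K(f(x), f(y)) ≤ |x − y|^{1/2} β(|x − y|) for all x, y ∈ Ω. Then f is not injective. -/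
open MeasureTheory Metric Set
open scoped ENNReal NNReal

/-! ### Polygonal areas for a bilinear alternating form -/

section Contact

variable {E H : Type*} [NormedAddCommGroup E] [NormedSpace ℝ E]
  [NormedAddCommGroup H] [NormedSpace ℝ H]

/-- The area swept by a polygonal chain that stays close to a uniformly parametrized segment is
small. -/
theorem abs_sum_bilin_chain_sub_le (ω : H →L[ℝ] H →L[ℝ] ℝ) (hω : ∀ p, ω p p = 0)
    (z : ℕ → H) (a d : H) {N : ℕ} {η m : ℝ}
    (hz : ∀ i ≤ N, ‖z i - (a + (i : ℝ) • d)‖ ≤ η)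
    (hm : ∀ i < N, ‖z (i + 1) - z i‖ ≤ m) (hd : ‖d‖ ≤ m) :
    |∑ i ∈ Finset.range N, ω (z i) (z (i + 1)) - ω (z 0) (z N)| ≤ 4 * (N * (‖ω‖ * m * η)) := by
  set e : ℕ → H := fun i => z i - (a + (i : ℝ) • d) with he
  have hη : 0 ≤ η := (norm_nonneg _).trans (hz 0 (Nat.zero_le _))
  have hm0 : 0 ≤ m := (norm_nonneg _).trans hd
  have hc : ∀ i ≤ N, |ω d (e i)| ≤ ‖ω‖ * m * η := fun i hi =>
    (ω.le_opNorm₂ d (e i)).trans (by gcongr; exact hz i hi)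
  have key : ∀ M ≤ N, |∑ i ∈ Finset.range M, ω (z i) (z (i + 1)) - ω (z 0) (z M)
      - M * ω d (e M) + ∑ i ∈ Finset.range M, ω d (e (i + 1))| ≤ M * (2 * (‖ω‖ * m * η)) := by
    intro M
    induction M with
    | zero => intro _; simp [hω]
    | succ M ih =>
      intro hM
      have h1 := ih (by omega)
      have h2 : |ω (e M - e 0) (z (M + 1) - z M)| ≤ 2 * (‖ω‖ * m * η) := by
        refine (ω.le_opNorm₂ _ _).trans ?_
        have : ‖e M - e 0‖ ≤ η + η := (norm_sub_le _ _).trans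
          (add_le_add (hz M (by omega)) (hz 0 (by omega)))
        calc ‖ω‖ * ‖e M - e 0‖ * ‖z (M + 1) - z M‖ ≤ ‖ω‖ * (η + η) * m := by
              gcongr; exact hm M (by omega)
          _ = _ := by ring
      have h3 : ∑ i ∈ Finset.range (M + 1), ω (z i) (z (i + 1)) - ω (z 0) (z (M + 1))
          - (M + 1 : ℕ) * ω d (e (M + 1)) + ∑ i ∈ Finset.range (M + 1), ω d (e (i + 1))
          = (∑ i ∈ Finset.range M, ω (z i) (z (i + 1)) - ω (z 0) (z M)
            - M * ω d (e M) + ∑ i ∈ Finset.range M, ω d (e (i + 1)))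
            + ω (e M - e 0) (z (M + 1) - z M) := by
        rw [Finset.sum_range_succ, Finset.sum_range_succ]
        have hzz := hω (z M)
        have hdd := hω d
        simp only [he, map_sub, map_add, map_smul, _root_.sub_apply,
          _root_.add_apply, _root_.smul_apply, smul_eq_mul, hzz, hdd]
        push_cast
        simp
        ring
      rw [h3]
      refine (abs_add_le _ _).trans ?_
      push_cast
      linarith
  have hN := key N le_rfl
  have hsum : |∑ i ∈ Finset.range N, ω d (e (i + 1))| ≤ N * (‖ω‖ * m * η) := by
    refine (Finset.abs_sum_le_sum_abs _ _).trans ?_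
    refine (Finset.sum_le_sum fun i hi => hc (i + 1) (Finset.mem_range.1 hi)).trans ?_
    simp
  have hlast : |(N : ℝ) * ω d (e N)| ≤ N * (‖ω‖ * m * η) := by
    rw [abs_mul, Nat.abs_cast]
    exact mul_le_mul_of_nonneg_left (hc N le_rfl) (Nat.cast_nonneg _)
  rw [abs_le] at *
  constructor <;> linarith [hN.1, hN.2, hsum.1, hsum.2, hlast.1, hlast.2]

/-- The vertical defect of the pair `p, q` for a contact form with linear part `T` and symplectic
part `ω`; for the Heisenberg group this is the last coordinate of `q⁻¹ * p`. -/
noncomputable def verticalDefect (T : H →L[ℝ] ℝ) (ω : H →L[ℝ] H →L[ℝ] ℝ) (p q : H) : ℝ :=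
  T p - T q - 2 * ω p q

theorem sum_verticalDefect_chain (T : H →L[ℝ] ℝ) (ω : H →L[ℝ] H →L[ℝ] ℝ) (z : ℕ → H) (N : ℕ) :
    ∑ i ∈ Finset.range N, verticalDefect T ω (z i) (z (i + 1)) =
      T (z 0) - T (z N) - 2 * ∑ i ∈ Finset.range N, ω (z i) (z (i + 1)) := by
  induction N with
  | zero => simp
  | succ N ih => rw [Finset.sum_range_succ, Finset.sum_range_succ, ih, verticalDefect]; ring

theorem verticalDefect_triangle (T : H →L[ℝ] ℝ) (ω : H →L[ℝ] H →L[ℝ] ℝ) (hω : ∀ p, ω p p = 0)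
    (p q r : H) :
    verticalDefect T ω p q + verticalDefect T ω q r + verticalDefect T ω r p =
      -2 * ω (q - p) (r - p) := by
  have h₁ := hω (r - p)
  have h₂ := hω (q - p)
  simp only [map_sub, _root_.sub_apply, verticalDefect, hω] at h₁ h₂ ⊢
  linarith

/-- If the vertical defect of `f` is `o(|x - y|)` uniformly, then it is controlled on a segment by
the deviation of `f` from an affine map along that segment. -/
theorem abs_verticalDefect_le_of_affine_approx (T : H →L[ℝ] ℝ) (ω : H →L[ℝ] H →L[ℝ] ℝ)
    (hω : ∀ p, ω p p = 0) {f : E → H} {U : Set E} (hU : Convex ℝ U) {L : ℝ≥0}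
    (hf : LipschitzOnWith L f U) {b : ℝ → ℝ} (hb : Filter.Tendsto b (nhdsWithin 0 (Ici 0)) (nhds 0))
    (hτ : ∀ x ∈ U, ∀ y ∈ U, |verticalDefect T ω (f x) (f y)| ≤ dist x y * b (dist x y))
    (A : E →L[ℝ] H) (hA : ‖A‖ ≤ L) (c : H) {η : ℝ} {P Q : E} (hP : P ∈ U) (hQ : Q ∈ U)
    (hη : ∀ x ∈ segment ℝ P Q, ‖f x - (c + A x)‖ ≤ η) :
    |verticalDefect T ω (f P) (f Q)| ≤ 8 * (‖ω‖ * (L * dist P Q) * η) := by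
  set D := dist P Q with hD
  have hD0 : 0 ≤ D := dist_nonneg
  have main : ∀ N : ℕ, 0 < N → |verticalDefect T ω (f P) (f Q)| ≤
      8 * (‖ω‖ * (L * D) * η) + D * b (D / N) := by
    intro N hN
    have hN' : (0 : ℝ) < N := by exact_mod_cast hN
    set p : ℕ → E := fun i => P + ((i : ℝ) / N) • (Q - P) with hp
    have hseg : ∀ i ≤ N, p i ∈ segment ℝ P Q := by
      intro i hi
      rw [segment_eq_image']
      exact ⟨(i : ℝ) / N, ⟨by positivity, by
        rw [div_le_one hN']; exact_mod_cast hi⟩, rfl⟩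
    have hpU : ∀ i ≤ N, p i ∈ U := fun i hi => hU.segment_subset hP hQ (hseg i hi)
    have hdist : ∀ i, dist (p i) (p (i + 1)) = D / N := by
      intro i
      have : p (i + 1) - p i = ((N : ℝ)⁻¹) • (Q - P) := by
        simp only [hp]
        rw [add_sub_add_left_eq_sub, ← sub_smul]
        congr 1
        push_cast
        field_simp
        ring
      rw [dist_comm, dist_eq_norm, this, norm_smul, hD, dist_comm P Q, dist_eq_norm Q P,
        Real.norm_eq_abs, abs_of_pos (inv_pos.2 hN')]
      ring
    have hp0 : p 0 = P := by simp [hp]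
    have hpN : p N = Q := by simp [hp, hN'.ne']
    have hchain := abs_sum_bilin_chain_sub_le ω hω (fun i => f (p i)) (c + A P)
      ((N : ℝ)⁻¹ • A (Q - P)) (N := N) (η := η) (m := L * (D / N))
      (by
        intro i hi
        have := hη _ (hseg i hi)
        convert this using 2
        simp only [hp, map_add, map_smul, smul_smul, div_eq_mul_inv]
        abel)
      (by
        intro i hi
        rw [← dist_eq_norm, dist_comm]
        exact (hf.dist_le_mul _ (hpU i hi.le) _ (hpU (i + 1) hi)).trans_eq (by rw [hdist]))
      (by
        rw [norm_smul, Real.norm_eq_abs, abs_of_pos (inv_pos.2 hN')]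
        have : ‖A (Q - P)‖ ≤ L * D := (A.le_opNorm _).trans (by
          rw [hD, dist_comm, dist_eq_norm]; gcongr)
        calc (N : ℝ)⁻¹ * ‖A (Q - P)‖ ≤ (N : ℝ)⁻¹ * (L * D) := by gcongr
          _ = _ := by ring)
    have hsum := sum_verticalDefect_chain T ω (fun i => f (p i)) N
    have hle : |∑ i ∈ Finset.range N, verticalDefect T ω (f (p i)) (f (p (i + 1)))| ≤
        D * b (D / N) := by
      refine (Finset.abs_sum_le_sum_abs _ _).trans ?_
      calc _ ≤ ∑ i ∈ Finset.range N, D / N * b (D / N) := by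
            refine Finset.sum_le_sum fun i hi => ?_
            have hi := Finset.mem_range.1 hi
            have := hτ _ (hpU i hi.le) _ (hpU (i + 1) hi)
            rwa [hdist] at this
        _ = D * b (D / N) := by
            rw [Finset.sum_const, Finset.card_range, nsmul_eq_mul]; field_simp
    have hm : (N : ℝ) * (‖ω‖ * (L * (D / N)) * η) = ‖ω‖ * (L * D) * η := by
      field_simp
    simp only [hp0, hpN] at hchain hsum
    rw [hm] at hchain
    rw [hsum] at hle
    rw [verticalDefect]
    rw [abs_le] at *
    constructor <;> linarith [hchain.1, hchain.2, hle.1, hle.2]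
  have hlim : Filter.Tendsto (fun N : ℕ => 8 * (‖ω‖ * (L * D) * η) + D * b (D / N))
      Filter.atTop (nhds (8 * (‖ω‖ * (L * D) * η) + D * 0)) := by
    refine Filter.Tendsto.const_add _ (Filter.Tendsto.const_mul _ (hb.comp ?_))
    rw [tendsto_nhdsWithin_iff]
    exact ⟨tendsto_const_div_atTop_nhds_zero_nat D, .of_forall fun N => by
      simp only [mem_Ici]; positivity⟩
  have := ge_of_tendsto hlim (Filter.eventually_atTop.2 ⟨1, fun N hN => main N hN⟩)
  simpa using this

/-- At a point of differentiability, the derivative of a map with small vertical defect has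
isotropic range. -/
theorem isotropic_fderiv_of_verticalDefect (T : H →L[ℝ] ℝ) (ω : H →L[ℝ] H →L[ℝ] ℝ)
    (hω : ∀ p, ω p p = 0) {f : E → H} {x₀ : E} {ε : ℝ} (hε : 0 < ε) {L : ℝ≥0}
    (hf : LipschitzOnWith L f (ball x₀ ε)) {b : ℝ → ℝ}
    (hb : Filter.Tendsto b (nhdsWithin 0 (Ici 0)) (nhds 0))
    (hτ : ∀ x ∈ ball x₀ ε, ∀ y ∈ ball x₀ ε,
      |verticalDefect T ω (f x) (f y)| ≤ dist x y * b (dist x y))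
    {A : E →L[ℝ] H} (hA : HasFDerivAt f A x₀) (v w : E) : ω (A v) (A w) = 0 := by
  have hAL : ‖A‖ ≤ L := hA.le_of_lipschitzOn (ball_mem_nhds x₀ hε) hf
  set M := ‖v‖ + ‖w‖ + 1 with hM
  have hM0 : 0 < M := by positivity
  have hlim : Filter.Tendsto (fun s : ℝ => |ω (s⁻¹ • (f (x₀ + s • v) - f x₀))
      (s⁻¹ • (f (x₀ + s • w) - f x₀))|) (nhdsWithin 0 (Ioi 0)) (nhds |ω (A v) (A w)|) := by
    have h1 := (hA.hasLineDerivAt v).tendsto_slope_zero_right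
    have h2 := (hA.hasLineDerivAt w).tendsto_slope_zero_right
    have h3 := (ω.isBoundedBilinearMap.continuous.tendsto (A v, A w)).comp (h1.prodMk_nhds h2)
    exact h3.abs
  have bound : ∀ δ > 0, |ω (A v) (A w)| ≤ 24 * (‖ω‖ * (L * M) * M) * δ := by
    intro δ hδ
    have ho := hA.isLittleO.def hδ
    obtain ⟨ρ, hρ, hρs⟩ := Metric.eventually_nhds_iff_ball.1 ho
    refine le_of_tendsto hlim ?_
    have hmem : Ioo (0 : ℝ) (min ρ ε / M) ∈ nhdsWithin (0 : ℝ) (Ioi 0) :=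
      Ioo_mem_nhdsGT (by positivity)
    filter_upwards [hmem] with s hs
    have hs0 : 0 < s := hs.1
    have hsM : s * M < min ρ ε := (lt_div_iff₀ hM0).1 hs.2
    set K := closedBall x₀ (s * M)
    have hKconv : Convex ℝ K := convex_closedBall _ _
    have hKε : K ⊆ ball x₀ ε := closedBall_subset_ball (hsM.trans_le (min_le_right _ _))
    have hKρ : K ⊆ ball x₀ ρ := closedBall_subset_ball (hsM.trans_le (min_le_left _ _))
    have edge : ∀ P ∈ K, ∀ Q ∈ K, dist P Q ≤ s * M →
        |verticalDefect T ω (f P) (f Q)| ≤ 8 * (‖ω‖ * (L * (s * M)) * (δ * (s * M))) := by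
      intro P hP Q hQ hPQ
      refine (abs_verticalDefect_le_of_affine_approx T ω hω (convex_ball x₀ ε) hf hb hτ A hAL
        (f x₀ - A x₀) (hKε hP) (hKε hQ) (η := δ * (s * M)) ?_).trans ?_
      · intro x hx
        have hxK := hKconv.segment_subset hP hQ hx
        have h1 := hρs x (hKρ hxK)
        have h2 : ‖x - x₀‖ ≤ s * M := by simpa [K, dist_eq_norm] using hxK
        calc ‖f x - (f x₀ - A x₀ + A x)‖ = ‖f x - f x₀ - A (x - x₀)‖ := by
              rw [map_sub]; congr 1; abel
          _ ≤ δ * ‖x - x₀‖ := h1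
          _ ≤ _ := by gcongr
      · gcongr
    have h0K : x₀ ∈ K := mem_closedBall_self (by positivity)
    have hle : ∀ u : E, ‖u‖ ≤ M → ‖s • u‖ ≤ s * M := by
      intro u hu
      rw [norm_smul, Real.norm_eq_abs, abs_of_pos hs0]; gcongr
    have hvM : ‖v‖ ≤ M := by have := norm_nonneg w; linarith
    have hwM : ‖w‖ ≤ M := by have := norm_nonneg v; linarith
    have hvwM : ‖v - w‖ ≤ M := (norm_sub_le _ _).trans (by linarith)
    have hPK : x₀ + s • v ∈ K := by simpa [K, dist_eq_norm] using hle v hvM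
    have hQK : x₀ + s • w ∈ K := by simpa [K, dist_eq_norm] using hle w hwM
    have e1 := edge _ h0K _ hPK (by simpa [dist_eq_norm] using hle v hvM)
    have e2 := edge _ hPK _ hQK (by
      rw [dist_eq_norm, add_sub_add_left_eq_sub, ← smul_sub]; exact hle _ hvwM)
    have e3 := edge _ hQK _ h0K (by simpa [dist_eq_norm] using hle w hwM)
    have htri := verticalDefect_triangle T ω hω (f x₀) (f (x₀ + s • v)) (f (x₀ + s • w))
    have hs2 : |ω (f (x₀ + s • v) - f x₀) (f (x₀ + s • w) - f x₀)| ≤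
        s ^ 2 * (24 * (‖ω‖ * (L * M) * M) * δ) := by
      rw [abs_le] at *
      have : 0 ≤ ‖ω‖ * (L * M) * M * δ * s ^ 2 := by positivity
      constructor <;> nlinarith [e1.1, e1.2, e2.1, e2.2, e3.1, e3.2]
    simp only [map_smul, _root_.smul_apply, smul_eq_mul]
    rw [← mul_assoc, abs_mul, abs_of_pos (by positivity : 0 < s⁻¹ * s⁻¹)]
    calc s⁻¹ * s⁻¹ * _ ≤ s⁻¹ * s⁻¹ * (s ^ 2 * (24 * (‖ω‖ * (L * M) * M) * δ)) := by gcongr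
      _ = _ := by field_simp
  have hC : 0 ≤ 24 * (‖ω‖ * (L * M) * M) := by positivity
  have : |ω (A v) (A w)| ≤ 0 := by
    refine le_of_forall_pos_le_add fun e he => ?_
    refine (bound (e / (24 * (‖ω‖ * (L * M) * M) + 1)) (by positivity)).trans ?_
    rw [zero_add, mul_div_assoc', div_le_iff₀ (by positivity)]
    nlinarith
  exact abs_nonpos_iff.1 this

/-- At a point of differentiability, the derivative of a map with small vertical defect is
horizontal. -/
theorem horizontal_fderiv_of_verticalDefect (T : H →L[ℝ] ℝ) (ω : H →L[ℝ] H →L[ℝ] ℝ)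
    (hω : ∀ p, ω p p = 0) {f : E → H} {x₀ : E} {ε : ℝ} (hε : 0 < ε) {b : ℝ → ℝ}
    (hb : Filter.Tendsto b (nhdsWithin 0 (Ici 0)) (nhds 0))
    (hτ : ∀ x ∈ ball x₀ ε, ∀ y ∈ ball x₀ ε,
      |verticalDefect T ω (f x) (f y)| ≤ dist x y * b (dist x y))
    {A : E →L[ℝ] H} (hA : HasFDerivAt f A x₀) (v : E) : T (A v) = 2 * ω (A v) (f x₀) := by
  have hlim : Filter.Tendsto (fun s : ℝ => T (s⁻¹ • (f (x₀ + s • v) - f x₀))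
      - 2 * ω (s⁻¹ • (f (x₀ + s • v) - f x₀)) (f x₀)) (nhdsWithin 0 (Ioi 0))
      (nhds (T (A v) - 2 * ω (A v) (f x₀))) := by
    have h1 := (hA.hasLineDerivAt v).tendsto_slope_zero_right
    have hc : Continuous fun p : H => T p - 2 * ω p (f x₀) := by fun_prop
    exact (hc.tendsto (A v)).comp h1
  have hs : Filter.Tendsto (fun s : ℝ => s * ‖v‖) (nhdsWithin 0 (Ioi 0))
      (nhdsWithin 0 (Ici 0)) := by
    rw [tendsto_nhdsWithin_iff]
    refine ⟨?_, ?_⟩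
    · have : Filter.Tendsto (fun s : ℝ => s * ‖v‖) (nhds 0) (nhds (0 * ‖v‖)) :=
        (continuous_id.mul continuous_const).tendsto 0
      rw [zero_mul] at this
      exact this.mono_left nhdsWithin_le_nhds
    · filter_upwards [self_mem_nhdsWithin] with s hs
      exact mul_nonneg (le_of_lt hs) (norm_nonneg _)
  have hzero : Filter.Tendsto (fun s : ℝ => ‖v‖ * b (s * ‖v‖)) (nhdsWithin 0 (Ioi 0)) (nhds 0) := by
    simpa using (hb.comp hs).const_mul ‖v‖
  have hlim0 := squeeze_zero_norm' (f := fun s : ℝ => T (s⁻¹ • (f (x₀ + s • v) - f x₀))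
      - 2 * ω (s⁻¹ • (f (x₀ + s • v) - f x₀)) (f x₀)) ?_ hzero
  · exact sub_eq_zero.1 (tendsto_nhds_unique hlim hlim0)
  · have hmem : Ioo (0 : ℝ) (ε / (‖v‖ + 1)) ∈ nhdsWithin (0 : ℝ) (Ioi 0) :=
      Ioo_mem_nhdsGT (by positivity)
    filter_upwards [hmem] with s hs
    have hs0 : 0 < s := hs.1
    have hd : dist (x₀ + s • v) x₀ = s * ‖v‖ := by
      simp [dist_eq_norm, norm_smul, abs_of_pos hs0]
    have hin : x₀ + s • v ∈ ball x₀ ε := by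
      rw [mem_ball, hd]
      have := (lt_div_iff₀ (by positivity)).1 hs.2
      nlinarith
    have h := hτ _ hin _ (mem_ball_self hε)
    rw [hd, verticalDefect] at h
    have heq : T (s⁻¹ • (f (x₀ + s • v) - f x₀)) - 2 * ω (s⁻¹ • (f (x₀ + s • v) - f x₀)) (f x₀)
        = s⁻¹ * (T (f (x₀ + s • v)) - T (f x₀) - 2 * ω (f (x₀ + s • v)) (f x₀)) := by
      simp only [map_smul, map_sub, _root_.smul_apply, _root_.sub_apply,
        hω, smul_eq_mul]
      ring
    rw [heq, Real.norm_eq_abs, abs_mul, abs_of_pos (inv_pos.2 hs0), inv_mul_le_iff₀ hs0]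
    linarith

end Contact

/-! ### There is no Lipschitz retraction of a ball onto its boundary sphere -/

section Retraction

variable {E : Type*} [NormedAddCommGroup E]

/-- The polynomial `t ↦ det (1 + t A)` is recovered at `t = 1` from finitely many small values of
`t`, with weights independent of `A`. -/
theorem exists_det_one_add_eq_sum_small (E : Type*) [NormedAddCommGroup E] [NormedSpace ℝ E]
    [FiniteDimensional ℝ E] {δ : ℝ} (hδ : 0 < δ) :
    ∃ (s : Finset ℕ) (t w : ℕ → ℝ), (∀ i, 0 < t i ∧ t i < δ) ∧
      ∀ A : E →L[ℝ] E, (1 + A).det = ∑ i ∈ s, w i * (1 + t i • A).det := by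
  classical
  set b := Module.finBasis ℝ E
  set t : ℕ → ℝ := fun i => δ / (i + 2) with ht
  have htinj : Function.Injective t := by
    intro i j hij
    simp only [ht] at hij
    rw [div_eq_div_iff (by positivity) (by positivity)] at hij
    have := mul_left_cancel₀ hδ.ne' hij
    have : (i : ℝ) = j := by linarith
    exact_mod_cast this
  set s := Finset.range (Module.finrank ℝ E + 1) with hs
  refine ⟨s, t, fun i => (Lagrange.basis s t i).eval 1, fun i => ⟨by positivity, ?_⟩, fun A => ?_⟩
  · rw [ht, div_lt_iff₀ (by positivity)]
    have : (0 : ℝ) ≤ i := Nat.cast_nonneg i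
    nlinarith
  · set M := LinearMap.toMatrix b b (A : E →ₗ[ℝ] E) with hM
    set P : Polynomial ℝ := (
      (Polynomial.X : Polynomial ℝ) • M.map ⇑(Polynomial.C : ℝ →+* Polynomial ℝ)
      + (1 : Matrix (Fin (Module.finrank ℝ E)) (Fin (Module.finrank ℝ E)) ℝ).map
        ⇑(Polynomial.C : ℝ →+* Polynomial ℝ)).det with hP
    have heval : ∀ r : ℝ, P.eval r = (1 + r • A).det := by
      intro r
      have h1 : (1 + r • A).det = (1 + r • M).det := by
        rw [ContinuousLinearMap.det, ← LinearMap.det_toMatrix b]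
        congr 1
        have : ((1 + r • A : E →L[ℝ] E) : E →ₗ[ℝ] E) = LinearMap.id + r • (A : E →ₗ[ℝ] E) := rfl
        rw [this, map_add, map_smul, LinearMap.toMatrix_id]
      rw [h1, hP, ← Polynomial.coe_evalRingHom, RingHom.map_det]
      congr 1
      ext i j
      by_cases hij : i = j <;> simp [hij] <;> ring
    have hdeg : P.degree < s.card := by
      rw [hs, Finset.card_range]
      refine (Polynomial.degree_le_of_natDegree_le
        (Polynomial.natDegree_det_X_add_C_le M 1)).trans_lt ?_
      rw [Fintype.card_fin]
      exact_mod_cast Nat.lt_succ_self _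
    have hinterp := congrArg (Polynomial.eval 1) (Lagrange.eq_interpolate htinj.injOn hdeg)
    rw [heval, one_smul, Lagrange.interpolate_apply, Polynomial.eval_finsetSum] at hinterp
    rw [hinterp]
    refine Finset.sum_congr rfl fun i _ => ?_
    rw [Polynomial.eval_mul, Polynomial.eval_C, heval, mul_comm]

theorem bijective_add_smul_of_lipschitz [NormedSpace ℝ E] [CompleteSpace E] {g : E → E} {C : ℝ≥0}
    (hg : LipschitzWith C g) {t : ℝ} (ht : 0 ≤ t) (htC : t * C < 1) :
    Function.Bijective fun x => x + t • g x := by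
  lift t to ℝ≥0 using ht
  have hcontr : ∀ y, ContractingWith (t * C) fun x => y - (t : ℝ) • g x := by
    refine fun y => ⟨by exact_mod_cast htC, LipschitzWith.of_dist_le_mul fun a b => ?_⟩
    rw [dist_sub_left, dist_smul₀, Real.norm_eq_abs, abs_of_nonneg t.coe_nonneg, NNReal.coe_mul,
      mul_assoc]
    exact mul_le_mul_of_nonneg_left (hg.dist_le_mul a b) t.2
  constructor
  · intro a b hab
    refine (hcontr (a + (t : ℝ) • g a)).fixedPoint_unique' ?_ ?_
    · simp [Function.IsFixedPt]
    · have hab : a + (t : ℝ) • g a = b + (t : ℝ) • g b := hab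
      simp [Function.IsFixedPt, hab]
  · intro y
    have h : y - (t : ℝ) • g _ = _ := (hcontr y).fixedPoint_isFixedPt
    exact ⟨_, (sub_eq_iff_eq_add.1 h).symm⟩

theorem hausdorffMeasure_image_eq_zero_of_lipschitz [MeasurableSpace E] [BorelSpace E]
    {f : E → E} {C : ℝ≥0} {s : Set E} (hf : LipschitzOnWith C f s) {d : ℝ} (hd : 0 ≤ d)
    (hs : μH[d] s = 0) : μH[d] (f '' s) = 0 := by
  have := hf.hausdorffMeasure_image_le hd
  rwa [hs, mul_zero, nonpos_iff_eq_zero] at this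

/-- A Lipschitz map that is the identity off the unit ball cannot send the unit ball into the unit
sphere. -/
theorem not_lipschitz_retraction [InnerProductSpace ℝ E] [FiniteDimensional ℝ E] {R : E → E}
    {C : ℝ≥0} (hR : LipschitzWith C R) (hout : ∀ x, 1 ≤ ‖x‖ → R x = x)
    (hin : ∀ x, ‖x‖ ≤ 1 → ‖R x‖ = 1) : False := by
  let _ : MeasurableSpace E := borel E
  have : BorelSpace E := ⟨rfl⟩
  set μ : Measure E := μH[(Module.finrank ℝ E : ℝ)] with hμ
  have : μ.IsAddHaarMeasure := isAddHaarMeasure_hausdorffMeasure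
  set g : E → E := fun x => R x - x with hg
  have hgL : LipschitzWith (C + 1) g := hR.sub LipschitzWith.id
  have hgout : ∀ x, 1 ≤ ‖x‖ → g x = 0 := fun x hx => by simp [hg, hout x hx]
  set D : Set E := ball 0 1 ∩ {x | DifferentiableAt ℝ g x} with hD
  have hDm : MeasurableSet D := measurableSet_ball.inter (measurableSet_of_differentiableAt ℝ g)
  have hnull : μ (ball 0 1 \ D) = 0 := by
    refine measure_mono_null ?_ (ae_iff.1 (hgL.ae_differentiableAt (μ := μ)))
    intro x hx hx'
    exact hx.2 ⟨hx.1, hx'⟩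
  have hpos : 0 < μ.real (ball (0 : E) 1) :=
    ENNReal.toReal_pos (measure_ball_pos μ 0 one_pos).ne' measure_ball_lt_top.ne
  obtain ⟨r, hr, hrdet⟩ : ∃ r > 0, ∀ A : E →L[ℝ] E, ‖A‖ < r → 0 < (1 + A).det := by
    have hc : Continuous fun A : E →L[ℝ] E => (1 + A).det :=
      ContinuousLinearMap.continuous_det.comp (continuous_const.add continuous_id)
    have h0 : (0 : ℝ) < (1 + (0 : E →L[ℝ] E)).det := by
      rw [add_zero]; simp [ContinuousLinearMap.det]
    obtain ⟨r, hr, h⟩ := Metric.eventually_nhds_iff_ball.1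
      (hc.continuousAt.eventually (lt_mem_nhds h0))
    exact ⟨r, hr, fun A hA => h A (by simpa using hA)⟩
  have hfd : ∀ x, ‖fderiv ℝ g x‖ ≤ (C + 1 : ℝ≥0) := fun x => norm_fderiv_le_of_lipschitz ℝ hgL
  set δ : ℝ := min r 1 / ((C + 1 : ℝ≥0) + 1) with hδ
  have hC1 : (0 : ℝ) < ((C + 1 : ℝ≥0) : ℝ) + 1 := by positivity
  have hδ0 : 0 < δ := by positivity
  have hsmall : ∀ t : ℝ, 0 < t → t < δ →
      IntegrableOn (fun x => (1 + t • fderiv ℝ g x).det) D μ ∧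
        ∫ x in D, (1 + t • fderiv ℝ g x).det ∂μ = μ.real (ball 0 1) := by
    intro t ht htδ
    have htδ' : t * (((C + 1 : ℝ≥0) : ℝ) + 1) < min r 1 := (lt_div_iff₀ hC1).1 htδ
    set F : E → E := fun x => x + t • g x with hF
    have hbij : Function.Bijective F := bijective_add_smul_of_lipschitz hgL ht.le
      (by nlinarith [min_le_right r 1])
    have hFout : ∀ x, 1 ≤ ‖x‖ → F x = x := fun x hx => by simp [hF, hgout x hx]
    have hFball : F '' ball 0 1 = ball 0 1 := by
      ext y
      constructor
      · rintro ⟨x, hx, rfl⟩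
        by_contra hy
        have hy' : 1 ≤ ‖F x‖ := by simpa using hy
        have := hbij.1 (hFout _ hy')
        rw [this] at hy'
        exact absurd hx (by simpa using hy')
      · intro hy
        obtain ⟨x, rfl⟩ := hbij.2 y
        refine ⟨x, ?_, rfl⟩
        by_contra hx
        have hx' : 1 ≤ ‖x‖ := by simpa using hx
        rw [hFout x hx'] at hy
        exact hx hy
    have hFL : LipschitzWith (1 + ‖t‖₊ * (C + 1)) F :=
      LipschitzWith.id.add ((lipschitzWith_smul t).comp hgL)
    have hFD : μ (F '' D) = μ (ball 0 1) := by
      conv_rhs => rw [← hFball]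
      refine measure_eq_measure_of_null_sdiff (image_mono inter_subset_left) ?_
      rw [← image_sdiff hbij.1]
      exact hausdorffMeasure_image_eq_zero_of_lipschitz (hFL.lipschitzOnWith)
        (Nat.cast_nonneg _) hnull
    have hderiv : ∀ x ∈ D, HasFDerivWithinAt F (1 + t • fderiv ℝ g x) D x := fun x hx =>
      ((hasFDerivAt_id x).add (hx.2.hasFDerivAt.const_smul t)).hasFDerivWithinAt
    have hdetpos : ∀ x, 0 < (1 + t • fderiv ℝ g x).det := by
      intro x
      refine hrdet _ ?_
      rw [norm_smul, Real.norm_eq_abs, abs_of_pos ht]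
      nlinarith [hfd x, min_le_left r 1]
    have habs : (fun x => |(1 + t • fderiv ℝ g x).det| • (1 : ℝ)) =
        fun x => (1 + t • fderiv ℝ g x).det := by
      funext x; rw [abs_of_pos (hdetpos x), smul_eq_mul, mul_one]
    have hi := integrableOn_image_iff_integrableOn_abs_det_fderiv_smul μ hDm hderiv
      hbij.1.injOn (fun _ => (1 : ℝ))
    have hI := integral_image_eq_integral_abs_det_fderiv_smul μ hDm hderiv
      hbij.1.injOn (fun _ => (1 : ℝ))
    rw [habs] at hi hI
    refine ⟨hi.1 ?_, ?_⟩
    · exact integrableOn_const (by rw [hFD]; exact measure_ball_lt_top.ne)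
    · rw [← hI, setIntegral_const, smul_eq_mul, mul_one, measureReal_def, hFD, measureReal_def]
  obtain ⟨s, t, w, ht, hdet⟩ := exists_det_one_add_eq_sum_small E hδ0
  have hw : ∑ i ∈ s, w i = 1 := by
    have := hdet 0
    simpa [ContinuousLinearMap.det] using this.symm
  have hzero : ∀ x ∈ D, (1 + fderiv ℝ g x).det = 0 := by
    intro x hx
    have hRd : HasFDerivAt R (1 + fderiv ℝ g x) x := by
      have := (hasFDerivAt_id x).add hx.2.hasFDerivAt
      refine this.congr_of_eventuallyEq (.of_forall fun y => ?_)
      simp [hg]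
    have hconst : (fun y => ‖R y‖ ^ 2) =ᶠ[nhds x] fun _ => (1 : ℝ) := by
      filter_upwards [isOpen_ball.mem_nhds hx.1] with y hy
      rw [hin y (by simpa using (mem_ball.1 hy).le), one_pow]
    have h0 := hRd.norm_sq.unique ((hasFDerivAt_const (1 : ℝ) x).congr_of_eventuallyEq hconst)
    by_contra hne
    set e := (1 + fderiv ℝ g x).toContinuousLinearEquivOfDetNeZero hne
    have hv : (1 + fderiv ℝ g x) (e.symm (R x)) = R x := e.apply_symm_apply (R x)
    have h1 : (2 : ℕ) • inner ℝ (R x) ((1 + fderiv ℝ g x) (e.symm (R x))) = 0 :=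
      DFunLike.congr_fun h0 (e.symm (R x))
    have hnorm := hin x (by simpa using (mem_ball.1 hx.1).le)
    rw [hv, real_inner_self_eq_norm_sq, hnorm] at h1
    norm_num at h1
  have hfinal : ∫ x in D, (1 + fderiv ℝ g x).det ∂μ = μ.real (ball 0 1) := by
    rw [funext fun x => hdet (fderiv ℝ g x),
      integral_finsetSum _ fun i _ => ((hsmall _ (ht i).1 (ht i).2).1).const_mul (w i)]
    simp_rw [integral_const_mul, (hsmall _ (ht _).1 (ht _).2).2]
    rw [← Finset.sum_mul, hw, one_mul]
  rw [setIntegral_congr_fun hDm hzero] at hfinal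
  simp at hfinal
  linarith

end Retraction

/-! ### Lipschitz embeddings of balls have injective differential somewhere -/

section Embedding

variable {E F : Type*} [NormedAddCommGroup E] [NormedAddCommGroup F]

theorem lipschitzWith_smul_of_bounded_on_support {α : Type*} [PseudoMetricSpace α]
    [NormedSpace ℝ E] {χ : α → ℝ} {u : α → E}
    {A B M : ℝ≥0} (hχ : LipschitzWith A χ) (hu : LipschitzWith B u) (h0 : ∀ x, 0 ≤ χ x)
    (h1 : ∀ x, χ x ≤ 1) (hM : ∀ x, χ x ≠ 0 → ‖u x‖ ≤ M) :
    LipschitzWith (B + A * M) fun x => χ x • u x := by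
  have key : ∀ x y, χ x ≠ 0 → dist (χ x • u x) (χ y • u y) ≤ (B + A * M : ℝ≥0) * dist x y := by
    intro x y hx
    have heq : χ x • u x - χ y • u y = χ y • (u x - u y) + (χ x - χ y) • u x := by
      rw [smul_sub, sub_smul]; abel
    have h2 : ‖u x - u y‖ ≤ B * dist x y := by
      rw [← dist_eq_norm]; exact hu.dist_le_mul x y
    have h3 : |χ x - χ y| ≤ A * dist x y := by
      rw [← Real.dist_eq]; exact hχ.dist_le_mul x y
    rw [dist_eq_norm, heq]
    refine (norm_add_le _ _).trans ?_
    rw [norm_smul, norm_smul, Real.norm_eq_abs, Real.norm_eq_abs, abs_of_nonneg (h0 y)]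
    calc χ y * ‖u x - u y‖ + |χ x - χ y| * ‖u x‖ ≤ 1 * (B * dist x y) + A * dist x y * M := by
          gcongr
          · exact h1 y
          · exact hM x hx
      _ = _ := by push_cast; ring
  refine LipschitzWith.of_dist_le_mul fun x y => ?_
  by_cases hx : χ x = 0
  · by_cases hy : χ y = 0
    · simp only [hx, hy, zero_smul, dist_self]; positivity
    · rw [dist_comm, dist_comm x y]; exact key y x hy
  · exact key x y hx

/-- The retraction onto the complement of the open unit ball is Lipschitz away from the origin. -/
theorem exists_lipschitzOnWith_retraction_compl_ball [NormedSpace ℝ E] {c : ℝ} (hc : 0 < c) :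
    ∃ C : ℝ≥0, LipschitzOnWith C (fun y : E => max 1 ‖y‖⁻¹ • y) {y | c ≤ ‖y‖} := by
  have key : ∀ y y' : E, c ≤ ‖y‖ → ‖y‖ ≤ ‖y'‖ →
      dist (max 1 ‖y‖⁻¹ • y) (max 1 ‖y'‖⁻¹ • y') ≤ (1 + c⁻¹ + c⁻¹ * c⁻¹) * dist y y' := by
    intro y y' hy hyy'
    have hy0 : 0 < ‖y‖ := hc.trans_le hy
    have hy0' : 0 < ‖y'‖ := hy0.trans_le hyy'
    have heq : max 1 ‖y‖⁻¹ • y - max 1 ‖y'‖⁻¹ • y' =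
        max 1 ‖y'‖⁻¹ • (y - y') + (max 1 ‖y‖⁻¹ - max 1 ‖y'‖⁻¹) • y := by
      rw [smul_sub, sub_smul]; abel
    have h1 : max 1 ‖y'‖⁻¹ ≤ 1 + c⁻¹ := by
      have : ‖y'‖⁻¹ ≤ c⁻¹ := inv_anti₀ hc (hy.trans hyy')
      exact max_le (by linarith [inv_pos.2 hc]) (by linarith)
    have h2 : |max 1 ‖y‖⁻¹ - max 1 ‖y'‖⁻¹| * ‖y‖ ≤ c⁻¹ * c⁻¹ * dist y y' := by
      rcases le_or_gt 1 ‖y‖ with h | h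
      · rw [max_eq_left (inv_le_one_of_one_le₀ h),
          max_eq_left (inv_le_one_of_one_le₀ (h.trans hyy')), sub_self, abs_zero, zero_mul]
        positivity
      · have h3 : |max 1 ‖y‖⁻¹ - max 1 ‖y'‖⁻¹| ≤ |‖y‖⁻¹ - ‖y'‖⁻¹| := by
          simpa using abs_max_sub_max_le_max 1 ‖y‖⁻¹ 1 ‖y'‖⁻¹
        have h4 : |‖y‖⁻¹ - ‖y'‖⁻¹| ≤ c⁻¹ * c⁻¹ * dist y y' := by
          rw [inv_sub_inv hy0.ne' hy0'.ne', abs_div, abs_of_pos (mul_pos hy0 hy0'),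
            ← mul_inv, div_eq_inv_mul]
          have h5 : |‖y'‖ - ‖y‖| ≤ dist y y' := by
            rw [dist_comm, dist_eq_norm]; exact abs_norm_sub_norm_le _ _
          have h6 := hy.trans hyy'
          gcongr
        calc _ ≤ c⁻¹ * c⁻¹ * dist y y' * 1 := by
              gcongr
              exact h3.trans h4
          _ = _ := mul_one _
    rw [dist_eq_norm, heq]
    refine (norm_add_le _ _).trans ?_
    rw [norm_smul, norm_smul, Real.norm_eq_abs, Real.norm_eq_abs,
      abs_of_nonneg (zero_le_one.trans (le_max_left _ _)), ← dist_eq_norm]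
    have := mul_le_mul_of_nonneg_right h1 (dist_nonneg (x := y) (y := y'))
    linarith
  refine ⟨⟨1 + c⁻¹ + c⁻¹ * c⁻¹, by positivity⟩,
    LipschitzOnWith.of_dist_le_mul fun y hy z hz => ?_⟩
  rcases le_total ‖y‖ ‖z‖ with h | h
  · exact key y z hy h
  · rw [dist_comm, dist_comm y]
    exact key z y hz h

/-- A Lipschitz map close to the identity on the unit ball covers a neighbourhood of the
origin. -/
theorem ball_subset_image_of_lipschitz_near_id [InnerProductSpace ℝ E] [FiniteDimensional ℝ E]
    {h : E → E} {C : ℝ≥0} (hL : LipschitzWith C h) (hid : ∀ x, ‖x‖ ≤ 1 → ‖h x - x‖ ≤ 1 / 8) :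
    ball 0 (1 / 8) ⊆ h '' closedBall 0 (1 / 2) := by
  intro q hq
  by_contra hqn
  have hq' : ‖q‖ < 1 / 8 := by simpa using hq
  set χ : E → ℝ := fun x => max 0 (min 1 (3 - 4 * ‖x‖)) with hχ
  set u : E → E := fun x => h x - q - x with hu
  have hχL : LipschitzWith 4 χ := by
    refine ((LipschitzWith.of_dist_le_mul fun x y => ?_ :
      LipschitzWith 4 fun x : E => 3 - 4 * ‖x‖).const_min 1).const_max 0
    rw [dist_sub_left, Real.dist_eq, ← mul_sub, abs_mul, dist_eq_norm]
    norm_num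
    exact abs_norm_sub_norm_le x y
  have huL : LipschitzWith (C + 0 + 1) u := (hL.sub (LipschitzWith.const q)).sub LipschitzWith.id
  have hub : ∀ x, ‖x‖ ≤ 1 → ‖u x‖ ≤ 1 / 4 := by
    intro x hx
    have : u x = (h x - x) - q := by simp only [hu]; abel
    rw [this]
    exact (norm_sub_le _ _).trans (by linarith [hid x hx])
  have hχ0 : ∀ x, 0 ≤ χ x := fun x => le_max_left _ _
  have hχ1 : ∀ x, χ x ≤ 1 := fun x => max_le zero_le_one (min_le_left _ _)
  have hχout : ∀ x, 3 / 4 ≤ ‖x‖ → χ x = 0 := fun x hx =>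
    max_eq_left ((min_le_right _ _).trans (by linarith))
  have hχin : ∀ x, ‖x‖ ≤ 1 / 2 → χ x = 1 := fun x hx => by
    simp only [hχ]
    rw [min_eq_left (by linarith), max_eq_right zero_le_one]
  have hsupp : ∀ x, χ x ≠ 0 → ‖u x‖ ≤ (1 / 4 : ℝ≥0) := by
    intro x hx
    have : ‖x‖ < 3 / 4 := by
      by_contra hcon
      exact hx (hχout x (not_lt.1 hcon))
    have h4 : ((1 / 4 : ℝ≥0) : ℝ) = 1 / 4 := by norm_num
    rw [h4]
    exact hub x (by linarith)
  have hsmul : ∀ x, ‖χ x • u x‖ ≤ 1 / 4 := by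
    intro x
    by_cases hx : χ x = 0
    · rw [hx, zero_smul, norm_zero]; norm_num
    · have h4 := hsupp x hx
      rw [norm_smul, Real.norm_eq_abs, abs_of_nonneg (hχ0 x)]
      norm_num at h4
      nlinarith [hχ0 x, hχ1 x, norm_nonneg (u x)]
  set H : E → E := fun x => x + χ x • u x with hH
  have hHL := LipschitzWith.id.add
    (lipschitzWith_smul_of_bounded_on_support hχL huL hχ0 hχ1 hsupp)
  change LipschitzWith _ H at hHL
  have hHout : ∀ x, 3 / 4 ≤ ‖x‖ → H x = x := fun x hx => by simp [hH, hχout x hx]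
  have hHlow : ∀ x, 1 / 2 ≤ ‖x‖ → 1 / 4 ≤ ‖H x‖ := by
    intro x hx
    have h2 : ‖x‖ ≤ ‖H x‖ + ‖χ x • u x‖ := by
      have : x = H x - χ x • u x := by simp [hH]
      conv_lhs => rw [this]
      exact norm_sub_le _ _
    linarith [hsmul x]
  obtain ⟨c, hc, hcH⟩ : ∃ c > 0, ∀ x, c ≤ ‖H x‖ := by
    obtain ⟨m, hm, hmin⟩ := (isCompact_closedBall (0 : E) (1 / 2)).exists_isMinOn
      (nonempty_closedBall.2 (by norm_num)) hHL.continuous.norm.continuousOn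
    have hm0 : 0 < ‖H m‖ := by
      rw [norm_pos_iff]
      intro h0
      have hm' : ‖m‖ ≤ 1 / 2 := by simpa using hm
      apply hqn
      refine ⟨m, hm, ?_⟩
      simp only [hH, hu, hχin m hm', one_smul] at h0
      have : h m - q = 0 := by rw [← h0]; abel
      exact sub_eq_zero.1 this
    refine ⟨min ‖H m‖ (1 / 4), by positivity, fun x => ?_⟩
    rcases le_total ‖x‖ (1 / 2) with hx | hx
    · exact (min_le_left _ _).trans (hmin (by simpa using hx))
    · exact (min_le_right _ _).trans (hHlow x hx)
  obtain ⟨K, hK⟩ := exists_lipschitzOnWith_retraction_compl_ball (E := E) hc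
  refine not_lipschitz_retraction (R := fun x => max 1 ‖H x‖⁻¹ • H x) (C := K * _)
    (lipschitzOnWith_univ.1 (hK.comp hHL.lipschitzOnWith fun x _ => hcH x)) ?_ ?_
  · intro x hx
    rw [hHout x (by linarith), max_eq_left (inv_le_one_of_one_le₀ hx), one_smul]
  · intro x hx
    have hHx : ‖H x‖ ≤ 1 := by
      rcases le_total (3 / 4) ‖x‖ with h34 | h34
      · rwa [hHout x h34]
      · exact (norm_add_le _ _).trans (by linarith [hsmul x])
    have hpos : 0 < ‖H x‖ := hc.trans_le (hcH x)
    change ‖max 1 ‖H x‖⁻¹ • H x‖ = 1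
    rw [max_eq_right ((one_le_inv₀ hpos).2 hHx), norm_smul, norm_inv, norm_norm]
    exact inv_mul_cancel₀ (ne_of_gt hpos)

/-- The inverse of an injective continuous map on a compact set is uniformly approximated by
`C¹` maps of the ambient space. -/
theorem exists_contDiff_approx_left_inverse [NormedSpace ℝ E] [NormedSpace ℝ F]
    [FiniteDimensional ℝ F] {f : E → F} {K : Set E} (hK : IsCompact K) (hf : ContinuousOn f K)
    (hinj : InjOn f K) {ε : ℝ} (hε : 0 < ε) :
    ∃ G : F → E, ContDiff ℝ 1 G ∧ ∀ x ∈ K, ‖G (f x) - x‖ < ε := by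
  have hloc : ∀ y : F, ∃ c : E, ∀ᶠ y' in nhds y,
      c ∈ {z : E | ∀ x ∈ K, f x = y' → z ∈ ball x ε} := by
    intro y
    have hsep : ∀ S ⊆ K, IsCompact S → y ∉ f '' S → ∀ᶠ y' in nhds y, y' ∉ f '' S :=
      fun S hSK hS hy => (hS.image_of_continuousOn (hf.mono hSK)).isClosed.isOpen_compl.mem_nhds hy
    by_cases hy : y ∈ f '' K
    · obtain ⟨x, hx, rfl⟩ := hy
      refine ⟨x, ?_⟩
      filter_upwards [hsep (K \ ball x ε) sdiff_subset (hK.diff isOpen_ball) (by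
        rintro ⟨x', hx', hxx'⟩
        rw [hinj hx'.1 hx hxx'] at hx'
        exact hx'.2 (mem_ball_self hε))] with y' hy' x' hx' hfx'
      by_contra hcon
      exact hy' ⟨x', ⟨hx', fun hb => hcon (mem_ball_comm.1 hb)⟩, hfx'⟩
    · refine ⟨0, ?_⟩
      filter_upwards [hsep K subset_rfl hK hy] with y' hy' x' hx' hfx'
      exact absurd ⟨x', hx', hfx'⟩ hy'
  obtain ⟨G, hG⟩ := exists_contMDiffMap_forall_mem_convex_of_local_const (n := 1)
    (modelWithCornersSelf ℝ F)
    (t := fun y' : F => {z : E | ∀ x ∈ K, f x = y' → z ∈ ball x ε}) (by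
      intro y' z hz z' hz' a b ha hb hab x hx hfx
      exact convex_ball x ε (hz x hx hfx) (hz' x hx hfx) ha hb hab) hloc
  exact ⟨G, G.contMDiff.contDiff, fun x hx => by
    rw [← dist_eq_norm]; exact hG (f x) x hx rfl⟩

/-- A Lipschitz map on a ball all of whose differentials are non-injective is not injective. -/
theorem not_injOn_closedBall_of_fderiv_not_injective [InnerProductSpace ℝ E]
    [FiniteDimensional ℝ E] [NormedSpace ℝ F] [FiniteDimensional ℝ F] {f : E → F} {L : ℝ≥0}
    (hf : LipschitzOnWith L f (closedBall 0 1))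
    (hA : ∀ x ∈ ball (0 : E) 1, ∀ A : E →L[ℝ] F, HasFDerivAt f A x → ¬ Function.Injective A) :
    ¬ InjOn f (closedBall 0 1) := by
  intro hinj
  obtain ⟨G, hG, hGf⟩ := exists_contDiff_approx_left_inverse (isCompact_closedBall (0 : E) 1)
    hf.continuousOn hinj (ε := 1 / 8) (by norm_num)
  obtain ⟨K, hK⟩ : ∃ K, LipschitzOnWith K (G ∘ f) (closedBall 0 1) := by
    obtain ⟨ρ, hρ⟩ := ((isCompact_closedBall (0 : E) 1).image_of_continuousOn
      hf.continuousOn).isBounded.subset_closedBall 0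
    obtain ⟨K, hK⟩ := hG.contDiffOn.exists_lipschitzOnWith one_ne_zero
      (convex_closedBall (0 : F) ρ) (isCompact_closedBall 0 ρ)
    exact ⟨K * L, hK.comp hf (mapsTo_iff_image_subset.2 hρ)⟩
  obtain ⟨f', hf'L, hff'⟩ := hf.extend_finite_dimension
  obtain ⟨h, hhL, hh⟩ := hK.extend_finite_dimension
  let _ : MeasurableSpace E := borel E
  have : BorelSpace E := ⟨rfl⟩
  set μ : Measure E := μH[(Module.finrank ℝ E : ℝ)] with hμ
  have : μ.IsAddHaarMeasure := isAddHaarMeasure_hausdorffMeasure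
  set D : Set E := ball 0 1 ∩ {x | DifferentiableAt ℝ f x} with hD
  have hnull : μ (ball 0 1 \ D) = 0 := by
    refine measure_mono_null ?_ (ae_iff.1 (hf'L.ae_differentiableAt (μ := μ)))
    intro x hx hx'
    refine hx.2 ⟨hx.1, DifferentiableAt.congr_of_eventuallyEq hx' ?_⟩
    filter_upwards [isOpen_ball.mem_nhds hx.1] with y hy using hff' (ball_subset_closedBall hy)
  have hnullD : μ (h '' D) = 0 := by
    refine addHaar_image_eq_zero_of_det_fderivWithin_eq_zero μ
      (f' := fun x => (fderiv ℝ G (f x)).comp (fderiv ℝ f x)) (fun x hx => ?_) fun x hx => ?_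
    · have h1 : HasFDerivAt (G ∘ f) ((fderiv ℝ G (f x)).comp (fderiv ℝ f x)) x :=
        ((hG.differentiable one_ne_zero) (f x)).hasFDerivAt.comp x hx.2.hasFDerivAt
      refine (h1.congr_of_eventuallyEq ?_).hasFDerivWithinAt
      filter_upwards [isOpen_ball.mem_nhds hx.1] with y hy
        using (hh (ball_subset_closedBall hy)).symm
    · by_contra hne
      refine hA x hx.1 _ hx.2.hasFDerivAt ?_
      have hinj' := (ContinuousLinearMap.toContinuousLinearEquivOfDetNeZero _ hne).injective
      exact Function.Injective.of_comp hinj'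
  have hball : μ (h '' ball 0 1) = 0 := by
    rw [← sdiff_union_of_subset (inter_subset_left : D ⊆ ball 0 1), image_union]
    exact measure_union_null (hausdorffMeasure_image_eq_zero_of_lipschitz hhL.lipschitzOnWith
      (Nat.cast_nonneg _) hnull) hnullD
  have hsub := ball_subset_image_of_lipschitz_near_id hhL fun x hx => by
    have hx' : x ∈ closedBall (0 : E) 1 := by simpa using hx
    rw [← hh hx']
    exact (hGf x hx').le
  have hsub' : ball (0 : E) (1 / 8) ⊆ h '' ball 0 1 :=
    hsub.trans (image_mono (closedBall_subset_ball (by norm_num)))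
  exact (measure_ball_pos μ (0 : E) (by norm_num : (0 : ℝ) < 1 / 8)).ne'
    (measure_mono_null hsub' hball)

end Embedding

/-! ### The Heisenberg group -/

/-- The standard symplectic form on `ℝ^{2n}`, pulled back to `ℝ^{2n+1}`. -/
noncomputable def heisOmega (n : ℕ) : Heis n →L[ℝ] Heis n →L[ℝ] ℝ :=
  ∑ j : Fin n,
    ((EuclideanSpace.proj (𝕜 := ℝ) (xIdx n j)).smulRight (EuclideanSpace.proj (yIdx n j))
      - (EuclideanSpace.proj (𝕜 := ℝ) (yIdx n j)).smulRight (EuclideanSpace.proj (xIdx n j)))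

theorem heisOmega_apply (n : ℕ) (p q : Heis n) :
    heisOmega n p q =
      ∑ j : Fin n, (p (xIdx n j) * q (yIdx n j) - p (yIdx n j) * q (xIdx n j)) := by
  simp [heisOmega]

theorem heisOmega_self (n : ℕ) (p : Heis n) : heisOmega n p p = 0 := by
  rw [heisOmega_apply]
  exact Finset.sum_eq_zero fun j _ => by ring

theorem abs_verticalDefect_le_dK_sq (n : ℕ) (p q : Heis n) :
    |verticalDefect (EuclideanSpace.proj (tIdx n)) (heisOmega n) p q| ≤ dK n p q ^ 2 := by
  have heq : verticalDefect (EuclideanSpace.proj (tIdx n)) (heisOmega n) p q =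
      p (tIdx n) - q (tIdx n)
        + 2 * ∑ j : Fin n, (q (xIdx n j) * p (yIdx n j) - p (xIdx n j) * q (yIdx n j)) := by
    have hneg : ∑ j : Fin n, (q (xIdx n j) * p (yIdx n j) - p (xIdx n j) * q (yIdx n j)) =
        -heisOmega n p q := by
      rw [heisOmega_apply, ← Finset.sum_neg_distrib]
      exact Finset.sum_congr rfl fun j _ => by ring
    rw [hneg, verticalDefect]
    simp only [PiLp.proj_apply]
    ring
  rw [heq, dK]
  set a := ∑ j : Fin n, ((p (xIdx n j) - q (xIdx n j))^2 + (p (yIdx n j) - q (yIdx n j))^2)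
  set τ := p (tIdx n) - q (tIdx n)
        + 2 * ∑ j : Fin n, (q (xIdx n j) * p (yIdx n j) - p (xIdx n j) * q (yIdx n j))
  have h0 : 0 ≤ a ^ 2 + τ ^ 2 := by positivity
  have hsq : ((a ^ 2 + τ ^ 2) ^ ((1 : ℝ) / 4)) ^ 2 = √(a ^ 2 + τ ^ 2) := by
    rw [← Real.rpow_natCast, ← Real.rpow_mul h0, Real.sqrt_eq_rpow]
    norm_num
  rw [hsq]
  exact Real.abs_le_sqrt (by nlinarith [sq_nonneg a])

/-- An injective linear map with isotropic range, valued in the horizontal space at `p`, has domain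
of dimension at most `n`. -/
theorem finrank_le_of_injective_isotropic {V : Type*} [AddCommGroup V] [Module ℝ V]
    [FiniteDimensional ℝ V] (n : ℕ) (A : V →ₗ[ℝ] Heis n) (hA : Function.Injective A) (p : Heis n)
    (hiso : ∀ v w, heisOmega n (A v) (A w) = 0)
    (hhor : ∀ v, A v (tIdx n) = 2 * heisOmega n (A v) p) : Module.finrank ℝ V ≤ n := by
  have hzero : ∀ v, (∀ j, A v (xIdx n j) = 0) → (∀ j, A v (yIdx n j) = 0) → v = 0 := by
    intro v hx hy
    refine hA ?_
    rw [map_zero]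
    ext i
    rcases Nat.lt_or_ge i.1 (2 * n) with hi | hi
    · rcases Nat.even_or_odd' i.1 with ⟨j, hj | hj⟩
      · have : i = xIdx n ⟨j, by omega⟩ := Fin.ext hj
        rw [this, hx]; rfl
      · have : i = yIdx n ⟨j, by omega⟩ := Fin.ext hj
        rw [this, hy]; rfl
    · have : i = tIdx n := Fin.ext (by have := i.2; simp only [tIdx]; omega)
      rw [this, hhor, heisOmega_apply]
      simp [hx, hy]
  let X : Fin n → V →ₗ[ℝ] ℝ := fun j =>
    (EuclideanSpace.proj (𝕜 := ℝ) (xIdx n j)).toLinearMap.comp A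
  let Y : Fin n → V →ₗ[ℝ] ℝ := fun j =>
    (EuclideanSpace.proj (𝕜 := ℝ) (yIdx n j)).toLinearMap.comp A
  let Φ : V × V →ₗ[ℝ] (Fin n → ℝ) × (Fin n → ℝ) :=
    (LinearMap.pi fun j => (X j).comp (LinearMap.fst ℝ V V) - (Y j).comp (LinearMap.snd ℝ V V)).prod
      (LinearMap.pi fun j => (Y j).comp (LinearMap.fst ℝ V V) + (X j).comp (LinearMap.snd ℝ V V))
  have hΦ : Function.Injective Φ := by
    rw [injective_iff_map_eq_zero]
    rintro ⟨v, w⟩ h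
    have h1 : ∀ j, A v (xIdx n j) - A w (yIdx n j) = 0 := fun j =>
      congrFun (congrArg Prod.fst h) j
    have h2 : ∀ j, A v (yIdx n j) + A w (xIdx n j) = 0 := fun j =>
      congrFun (congrArg Prod.snd h) j
    have hsum : ∑ j : Fin n, (A v (xIdx n j) ^ 2 + A v (yIdx n j) ^ 2) = 0 := by
      rw [← hiso v w, heisOmega_apply]
      refine Finset.sum_congr rfl fun j _ => ?_
      rw [← sub_eq_zero.1 (h1 j), eq_neg_of_add_eq_zero_right (h2 j)]
      ring
    have hj := (Finset.sum_eq_zero_iff_of_nonneg fun j _ => by positivity).1 hsum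
    have hvx : ∀ j, A v (xIdx n j) = 0 := fun j => by
      have := hj j (Finset.mem_univ j); nlinarith [sq_nonneg (A v (yIdx n j))]
    have hvy : ∀ j, A v (yIdx n j) = 0 := fun j => by
      have := hj j (Finset.mem_univ j); nlinarith [sq_nonneg (A v (xIdx n j))]
    have hv := hzero v hvx hvy
    have hw := hzero w (fun j => by linarith [h2 j, hvy j]) (fun j => by linarith [h1 j, hvx j])
    rw [hv, hw]; rfl
  have := LinearMap.finrank_le_finrank_of_injective hΦ
  simp only [Module.finrank_prod, Module.finrank_fin_fun] at this
  omega

/-- For `k > n ≥ 1` and `Ω ⊆ ℝ^k` nonempty open, a map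
`f : Ω → ℝ^{2n+1}` which is locally Lipschitz for the Euclidean metrics and of class
`C^{0,(1/2)+}` into `(ℝ^{2n+1}, d_K)` cannot be injective. -/
theorem not_injective_of_locally_lipschitz_holder (n k : ℕ) (hn : 0 < n) (hk : n < k)
    (Ω : Set (EuclideanSpace ℝ (Fin k))) (hΩ : IsOpen Ω) (hne : Ω.Nonempty)
    (f : EuclideanSpace ℝ (Fin k) → Heis n)
    (hlip : ∀ x ∈ Ω, ∃ ε > (0:ℝ), ∃ L : ℝ≥0, LipschitzOnWith L f (Metric.ball x ε ∩ Ω))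
    (β : ℝ → ℝ)
    (hβc : ContinuousOn β (Set.Ici 0)) (hβm : MonotoneOn β (Set.Ici 0))
    (hβ0 : β 0 = 0) (hβnn : ∀ t, 0 ≤ t → 0 ≤ β t)
    (hHolder : ∀ x ∈ Ω, ∀ y ∈ Ω,
      dK n (f x) (f y) ≤ dist x y ^ ((1:ℝ)/2) * β (dist x y)) :
    ¬ Set.InjOn f Ω := by
  intro hinj
  obtain ⟨x₀, hx₀⟩ := hne
  obtain ⟨ε₁, hε₁, L, hL⟩ := hlip x₀ hx₀
  obtain ⟨ε₂, hε₂, hball⟩ := Metric.isOpen_iff.1 hΩ x₀ hx₀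
  set r : ℝ := min ε₁ ε₂ / 2 with hr
  have hr0 : 0 < r := by positivity
  have hrlt : r < min ε₁ ε₂ := half_lt_self (by positivity)
  have hKΩ : closedBall x₀ r ⊆ Metric.ball x₀ ε₁ ∩ Ω := subset_inter
    (closedBall_subset_ball (hrlt.trans_le (min_le_left _ _)))
    ((closedBall_subset_ball (hrlt.trans_le (min_le_right _ _))).trans hball)
  have hLr : LipschitzOnWith L f (closedBall x₀ r) := hL.mono hKΩ
  have hb : Filter.Tendsto (fun s => β s ^ 2) (nhdsWithin 0 (Ici 0)) (nhds 0) := by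
    have := ((hβc 0 self_mem_Ici).tendsto).pow 2
    simpa [hβ0] using this
  have hτ : ∀ x ∈ closedBall x₀ r, ∀ y ∈ closedBall x₀ r,
      |verticalDefect (EuclideanSpace.proj (tIdx n)) (heisOmega n) (f x) (f y)| ≤
        dist x y * β (dist x y) ^ 2 := by
    intro x hx y hy
    refine (abs_verticalDefect_le_dK_sq n _ _).trans ?_
    have h0 : 0 ≤ dK n (f x) (f y) := Real.rpow_nonneg (by positivity) _
    refine (pow_le_pow_left₀ h0 (hHolder x (hKΩ hx).2 y (hKΩ hy).2) 2).trans_eq ?_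
    rw [mul_pow, ← Real.sqrt_eq_rpow, Real.sq_sqrt dist_nonneg]
  have hnotinj : ∀ x ∈ Metric.ball x₀ r, ∀ A : EuclideanSpace ℝ (Fin k) →L[ℝ] Heis n,
      HasFDerivAt f A x → ¬ Function.Injective A := by
    intro x hx A hA hAinj
    obtain ⟨ε, hε, hsub⟩ := Metric.isOpen_iff.1 isOpen_ball x hx
    have hsub' := hsub.trans ball_subset_closedBall
    have hτ' := fun y hy z hz => hτ y (hsub' hy) z (hsub' hz)
    have hle := finrank_le_of_injective_isotropic n (A : EuclideanSpace ℝ (Fin k) →ₗ[ℝ] Heis n)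
      hAinj (f x)
      (isotropic_fderiv_of_verticalDefect _ _ (heisOmega_self n) hε (hLr.mono hsub') hb hτ' hA)
      (horizontal_fderiv_of_verticalDefect _ _ (heisOmega_self n) hε hb hτ' hA)
    rw [finrank_euclideanSpace_fin] at hle
    omega
  set φ : EuclideanSpace ℝ (Fin k) → EuclideanSpace ℝ (Fin k) := fun x => x₀ + r • x with hφ
  have hφdist : ∀ x y, dist (φ x) (φ y) = r * dist x y := fun x y => by
    simp only [hφ]
    rw [dist_add_left, dist_smul₀, Real.norm_eq_abs, abs_of_pos hr0]
  have hφ0 : φ 0 = x₀ := by simp [hφ]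
  have hφmaps : MapsTo φ (closedBall 0 1) (closedBall x₀ r) := fun x hx => by
    rw [mem_closedBall, ← hφ0, hφdist]
    exact mul_le_of_le_one_right hr0.le hx
  have hφL : LipschitzWith ⟨r, hr0.le⟩ φ :=
    LipschitzWith.of_dist_le_mul fun x y => (hφdist x y).le
  refine not_injOn_closedBall_of_fderiv_not_injective (f := f ∘ φ)
    (hLr.comp hφL.lipschitzOnWith hφmaps) ?_ ?_
  · intro x hx A hA hAinj
    have hφx : φ x ∈ Metric.ball x₀ r := by
      rw [mem_ball, ← hφ0, hφdist]
      exact mul_lt_of_lt_one_right hr0 hx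
    set ψ : EuclideanSpace ℝ (Fin k) → EuclideanSpace ℝ (Fin k) := fun y => r⁻¹ • (y - x₀) with hψ
    have hψφ : ψ (φ x) = x := by simp [hψ, hφ, smul_smul, hr0.ne']
    have hψd : HasFDerivAt ψ (r⁻¹ • ContinuousLinearMap.id ℝ (EuclideanSpace ℝ (Fin k))) (φ x) :=
      ((hasFDerivAt_id (φ x)).sub_const x₀).const_smul r⁻¹
    have hcomp : f = (f ∘ φ) ∘ ψ := by
      funext y; simp [hψ, hφ, smul_smul, hr0.ne']
    rw [← hψφ] at hA
    have hfd := hA.comp (φ x) hψd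
    rw [← hcomp] at hfd
    refine hnotinj _ hφx _ hfd (hAinj.comp fun v w hvw => ?_)
    exact smul_right_injective _ (inv_pos.2 hr0).ne' hvw
  · intro x hx y hy hxy
    have h := hinj (hKΩ (hφmaps hx)).2 (hKΩ (hφmaps hy)).2 hxy
    have hd := hφdist x y
    rw [h, dist_self] at hd
    exact dist_eq_zero.1 ((mul_eq_zero.1 hd.symm).resolve_left hr0.ne')
end

section
/- Let k and n be positive integers, let Ω ⊆ ℝ^k be open, and let f = (f^{x_1}, f^{y_1}, …, f^{x_n}, f^{y_n}, f^t) : Ω → ℝ^{2n+1}. Suppose there exists a continuous non-decreasing function β : [0,∞) → [0,∞) with β(0) = 0 such that d_K(f(x), f(y)) ≤ |x − y|^{1/2} β(|x − y|) for all x, y ∈ Ω. If all the component functions f^{x_i} and f^{y_i}, i = 1, …, n, are differentiable at a point x₀ ∈ Ω, then f^t is also differentiable at x₀ and its derivative is df^t_{x₀} = 2∑_{i=1}^n (f^{y_i}(x₀) df^{x_i}_{x₀} − f^{x_i}(x₀) df^{y_i}_{x₀}); equivalently, the image of the derivative df_{x₀} lies in ker α(f(x₀)). -/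
open MeasureTheory Metric Set
open scoped ENNReal NNReal

/-- The vertical part of the Korányi distance is controlled by the square of the distance. -/
lemma abs_vertical_le_dK_sq (n : ℕ) (p q : Heis n) :
    |p (tIdx n) - q (tIdx n)
      + 2 * ∑ j : Fin n, (q (xIdx n j) * p (yIdx n j) - p (xIdx n j) * q (yIdx n j))|
      ≤ dK n p q ^ 2 := by
  unfold dK
  rw [← Real.rpow_natCast, ← Real.rpow_mul (by positivity)]
  norm_num
  rw [← Real.sqrt_eq_rpow]
  exact Real.abs_le_sqrt (le_add_of_nonneg_left (by positivity))

/-- A function bounded by `‖x - x₀‖ * β ‖x - x₀‖ ^ 2` near `x₀`, with `β` continuous and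
vanishing at `0`, has zero derivative at `x₀`. -/
lemma hasFDerivAt_zero_of_abs_le {E : Type*} [NormedAddCommGroup E] [NormedSpace ℝ E]
    {g : E → ℝ} {β : ℝ → ℝ} {x₀ : E} (hβc : ContinuousOn β (Set.Ici 0)) (hβ0 : β 0 = 0)
    (hg0 : g x₀ = 0) (hg : ∀ᶠ x in nhds x₀, |g x| ≤ dist x x₀ * β (dist x x₀) ^ 2) :
    HasFDerivAt g (0 : E →L[ℝ] ℝ) x₀ := by
  have hβ : Filter.Tendsto (fun x => β (dist x x₀) ^ 2) (nhds x₀) (nhds 0) := by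
    have hd : Filter.Tendsto (fun x => dist x x₀) (nhds x₀) (nhdsWithin 0 (Set.Ici 0)) :=
      tendsto_nhdsWithin_iff.2 ⟨tendsto_iff_dist_tendsto_zero.1 Filter.tendsto_id,
        Filter.Eventually.of_forall fun x => dist_nonneg⟩
    have hβt := ((hβc 0 Set.self_mem_Ici).tendsto.comp hd).pow 2
    simpa [hβ0] using hβt
  rw [hasFDerivAt_iff_isLittleO, Asymptotics.isLittleO_iff]
  intro c hc
  filter_upwards [hg, hβ.eventually (gt_mem_nhds hc)] with x hx hxc
  simp only [hg0, sub_zero, zero_apply, Real.norm_eq_abs, ← dist_eq_norm]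
  nlinarith [dist_nonneg (x := x) (y := x₀)]

/-- If `f : Ω → ℍ^n` is of class `C^{0,(1/2)+}` into `(ℝ^{2n+1}, d_K)`
and all horizontal components `f^{x_i}, f^{y_i}` are differentiable at `x₀ ∈ Ω`, then
`f^t` is differentiable at `x₀` with derivative
`df^t = 2∑ (f^{y_i}(x₀) df^{x_i} − f^{x_i}(x₀) df^{y_i})`, i.e. the image of `df_{x₀}`
lies in `ker α(f(x₀))`. -/
theorem t_component_differentiable_of_holder (n k : ℕ) (hn : 0 < n) (hk : 0 < k)
    (Ω : Set (EuclideanSpace ℝ (Fin k))) (hΩ : IsOpen Ω)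
    (f : EuclideanSpace ℝ (Fin k) → Heis n)
    (β : ℝ → ℝ)
    (hβc : ContinuousOn β (Set.Ici 0)) (hβm : MonotoneOn β (Set.Ici 0))
    (hβ0 : β 0 = 0) (hβnn : ∀ t, 0 ≤ t → 0 ≤ β t)
    (hHolder : ∀ x ∈ Ω, ∀ y ∈ Ω,
      dK n (f x) (f y) ≤ dist x y ^ ((1:ℝ)/2) * β (dist x y))
    (x₀ : EuclideanSpace ℝ (Fin k)) (hx₀ : x₀ ∈ Ω)
    (hdiff : ∀ j : Fin n,
      DifferentiableAt ℝ (fun x => f x (xIdx n j)) x₀ ∧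
      DifferentiableAt ℝ (fun x => f x (yIdx n j)) x₀) :
    HasFDerivAt (fun x => f x (tIdx n))
      (∑ j : Fin n,
        ((2 * f x₀ (yIdx n j)) • fderiv ℝ (fun x => f x (xIdx n j)) x₀
          - (2 * f x₀ (xIdx n j)) • fderiv ℝ (fun x => f x (yIdx n j)) x₀))
      x₀ := by
  have hvert : HasFDerivAt (fun x => f x (tIdx n) - f x₀ (tIdx n)
      + 2 * ∑ j : Fin n, (f x₀ (xIdx n j) * f x (yIdx n j) - f x (xIdx n j) * f x₀ (yIdx n j)))
      (0 : EuclideanSpace ℝ (Fin k) →L[ℝ] ℝ) x₀ := by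
    refine hasFDerivAt_zero_of_abs_le hβc hβ0 (by simp) ?_
    filter_upwards [hΩ.mem_nhds hx₀] with x hx
    have hdK : 0 ≤ dK n (f x) (f x₀) := by unfold dK; positivity
    refine (abs_vertical_le_dK_sq n (f x) (f x₀)).trans
      ((pow_le_pow_left₀ hdK (hHolder x hx x₀ hx₀) 2).trans_eq ?_)
    rw [mul_pow, ← Real.sqrt_eq_rpow, Real.sq_sqrt dist_nonneg]
  have hhoriz : HasFDerivAt (fun x => ∑ j : Fin n,
      ((2 * f x₀ (yIdx n j)) * f x (xIdx n j) - (2 * f x₀ (xIdx n j)) * f x (yIdx n j)))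
      (∑ j : Fin n,
        ((2 * f x₀ (yIdx n j)) • fderiv ℝ (fun x => f x (xIdx n j)) x₀
          - (2 * f x₀ (xIdx n j)) • fderiv ℝ (fun x => f x (yIdx n j)) x₀)) x₀ :=
    HasFDerivAt.fun_sum fun j _ =>
      ((hdiff j).1.hasFDerivAt.const_mul _).sub ((hdiff j).2.hasFDerivAt.const_mul _)
  have hsum := (hvert.add hhoriz).add_const (f x₀ (tIdx n))
  rw [zero_add] at hsum
  refine hsum.congr_of_eventuallyEq (Filter.Eventually.of_forall fun x => ?_)
  have hcancel : 2 * ∑ j : Fin n,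
        (f x₀ (xIdx n j) * f x (yIdx n j) - f x (xIdx n j) * f x₀ (yIdx n j))
      + ∑ j : Fin n,
        ((2 * f x₀ (yIdx n j)) * f x (xIdx n j) - (2 * f x₀ (xIdx n j)) * f x (yIdx n j)) = 0 := by
    rw [Finset.mul_sum, ← Finset.sum_add_distrib]
    exact Finset.sum_eq_zero fun j _ => by ring
  simp only [Pi.add_apply]
  linarith
end
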